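/- Let α∈(1/2,1) and let F satisfy the regular right tail condition (with exponent α) and the converging tail ratio condition. Then the SRT holds for F. -/

import Mathlib

open MeasureTheory Filter Set Real Asymptotics

attribute [local instance] Classical.propDecidable

noncomputable section

namespace SRT

/-- Convolution of two measures on `ℝ`. -/
def mconv (μ ν : Measure ℝ) : Measure ℝ := μ.bind fun x => ν.map fun y => x + y

/-- `n`-fold self-convolution of `μ`, with the 0-th power the unit mass at `0`. -/
def convPow (μ : Measure ℝ) : ℕ → Measure ℝ
  | 0 => Measure.dirac 0
  | n + 1 => mconv (convPow μ n) μ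

/-- The renewal measure `U = ∑ₙ F^{*n}`. -/
def renewal (μ : Measure ℝ) : Measure ℝ := Measure.sum fun n => convPow μ n

/-- Right tail `F̄(x) = μ((x,∞))`. -/
def rtail (μ : Measure ℝ) (x : ℝ) : ℝ := (μ (Set.Ioi x)).toReal

/-- `f` is strictly positive on `(0,∞)` and regularly varying at `∞` with exponent `β`. -/
def RegVary (f : ℝ → ℝ) (β : ℝ) : Prop :=
  (∀ x > 0, 0 < f x) ∧
    ∀ c > 0, Tendsto (fun x => f (c * x) / f x) atTop (nhds (c ^ β))

/-- `f` is regularly varying at `∞` with some exponent. -/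
def RegVaryAny (f : ℝ → ℝ) : Prop := ∃ β : ℝ, RegVary f β

/-- Regular right tail condition: `F̄(x) ∼ 1/ℓ(x)` as `x → ∞`. -/
def RightTail (μ : Measure ℝ) (ℓ : ℝ → ℝ) : Prop :=
  Tendsto (fun x => rtail μ x * ℓ x) atTop (nhds 1)

/-- Converging tail ratio condition: `F(-x)/F̄(x)` converges to a finite limit. -/
def TailRatio (μ : Measure ℝ) : Prop :=
  ∃ p : ℝ, Tendsto (fun x => (μ (Set.Iic (-x))).toReal / rtail μ x) atTop (nhds p)

/-- `μ` is concentrated on `dℤ`. -/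
def ConcOn (μ : Measure ℝ) (d : ℝ) : Prop := μ {x : ℝ | ∃ k : ℤ, x = k * d} = 1

/-- `μ` is arithmetic. -/
def Arith (μ : Measure ℝ) : Prop := ∃ d > 0, ConcOn μ d

/-- `h` is admissible: any positive number if `μ` is non-arithmetic, and
the span of `μ` if `μ` is arithmetic. -/
def SpanOK (μ : Measure ℝ) (h : ℝ) : Prop :=
  0 < h ∧ (¬ Arith μ ∨ (ConcOn μ h ∧ ∀ d > 0, ConcOn μ d → d ≤ h))

/-- `μ` is concentrated on `a + dℤ`. -/
def ConcOnLat (μ : Measure ℝ) (a d : ℝ) : Prop :=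
  μ {x : ℝ | ∃ k : ℤ, x = a + k * d} = 1

/-- `μ` is lattice. -/
def IsLattice (μ : Measure ℝ) : Prop := ∃ a d : ℝ, 0 ≤ a ∧ a < d ∧ ConcOnLat μ a d

/-- `h` is admissible: any positive number if `μ` is non-lattice, and
the span of `μ` if `μ` is lattice. -/
def LatSpanOK (μ : Measure ℝ) (h : ℝ) : Prop :=
  0 < h ∧ (¬ IsLattice μ ∨
    ((∃ a, 0 ≤ a ∧ a < h ∧ ConcOnLat μ a h) ∧
      ∀ a d : ℝ, 0 ≤ a → a < d → ConcOnLat μ a d → d ≤ h))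

/-- Generalized inverse `ℓ⁻(x) = inf {t ≥ 1 : ℓ(t) > x}`. -/
def linv (ℓ : ℝ → ℝ) (x : ℝ) : ℝ := sInf {t : ℝ | 1 ≤ t ∧ x < ℓ t}

/-- `ω(x) = x F((x,x+h]) / F̄(x)`. -/
def omegaFn (μ : Measure ℝ) (h x : ℝ) : ℝ :=
  x * (μ (Set.Ioc x (x + h))).toReal / rtail μ x

/-- `I_η(x,T) = ∫_{(1-η)x}^x (ω(y)-T)⁺ dy`. -/
def Iof (μ : Measure ℝ) (h η x T : ℝ) : ℝ :=
  ∫ y in (1 - η) * x..x, max (omegaFn μ h y - T) 0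

/-- `Î_{η,n,r}(x,T) = ∫_{(1-η)x}^x e^{-(x-y)/(r aₙ)} (ω(y)-T)⁺ dy`. -/
def IofHat (μ : Measure ℝ) (ℓ : ℝ → ℝ) (h η : ℝ) (n : ℕ) (r x T : ℝ) : ℝ :=
  ∫ y in (1 - η) * x..x,
    Real.exp (-(x - y) / (r * linv ℓ (n : ℝ))) * max (omegaFn μ h y - T) 0

/-- `Sₙ/aₙ` converges in distribution to a law with density `g`. -/
def StableLimit (F : Measure ℝ) (ℓ : ℝ → ℝ) (g : ℝ → ℝ) : Prop :=
  ∀ f : BoundedContinuousFunction ℝ ℝ,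
    Tendsto (fun n : ℕ =>
        ∫ x, f x ∂((convPow F n).map fun y => y / linv ℓ (n : ℝ))) atTop
      (nhds (∫ x, f x * g x))

/-- `Sₙ/aₙ` converges in distribution to the law `μζ`. -/
def WeakLimit (F : Measure ℝ) (ℓ : ℝ → ℝ) (μζ : Measure ℝ) : Prop :=
  ∀ f : BoundedContinuousFunction ℝ ℝ,
    Tendsto (fun n : ℕ =>
        ∫ x, f x ∂((convPow F n).map fun y => y / linv ℓ (n : ℝ))) atTop
      (nhds (∫ x, f x ∂μζ))

/-- The law `μ` is stable: for each `n`, the `n`-fold convolution is the law of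
`cₙ X + dₙ` for some `cₙ > 0`, `dₙ`. -/
def IsStable (μ : Measure ℝ) : Prop :=
  ∀ n : ℕ, 0 < n → ∃ c : ℝ, 0 < c ∧ ∃ d : ℝ, convPow μ n = μ.map fun x => c * x + d

/-- The strong renewal theorem:
`x F̄(x) U((x,x+h]) → α h ∫₀^∞ t^{-α} g(t) dt`. -/
def SRTholds (F : Measure ℝ) (h α : ℝ) (g : ℝ → ℝ) : Prop :=
  Tendsto (fun x : ℝ => x * rtail F x * ((renewal F) (Set.Ioc x (x + h))).toReal)
    atTop (nhds (α * h * ∫ t in Set.Ioi (0:ℝ), t ^ (-α) * g t))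

variable {Ω : Type*} [MeasurableSpace Ω]

/-- Partial sums `Sₙ = X₁ + ⋯ + Xₙ`. -/
def pSum (X : ℕ → Ω → ℝ) (n : ℕ) (ω : Ω) : ℝ := ∑ i ∈ Finset.range n, X i ω

/-- `X` is an i.i.d. sequence with common law `F` under `P`. -/
def IIDseq (P : Measure Ω) (F : Measure ℝ) (X : ℕ → Ω → ℝ) : Prop :=
  (∀ i, Measurable (X i)) ∧ (∀ i, P.map (X i) = F) ∧
    ProbabilityTheory.iIndepFun X P

/-- `Nₙ = #{i ≤ n : Xᵢ > 0}`. -/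
def Ncount (X : ℕ → Ω → ℝ) (n : ℕ) (ω : Ω) : ℕ :=
  ((Finset.range n).filter fun i => 0 < X i ω).card

/-- `Sₙ⁻ = ∑_{i ≤ n} Xᵢ⁻`. -/
def sMinus (X : ℕ → Ω → ℝ) (n : ℕ) (ω : Ω) : ℝ :=
  ∑ i ∈ Finset.range n, max (-(X i ω)) 0

/-- The quantity `R_{T,η,r,c₁,c₂}(x,δ)` of Theorem `t:sum-small-n`, with
`xₙ = x + Sₙ⁻` and `κ = ⌊1/α⌋`. -/
def Rquant (F : Measure ℝ) (ℓ : ℝ → ℝ) (h α : ℝ) (P : Measure Ω) (X : ℕ → Ω → ℝ)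
    (L : ℝ → ℝ) (T η r c₁ c₂ x δ : ℝ) : ℝ :=
  (x / ℓ x) * ∑ n ∈ Finset.Ico ⌈L x⌉₊ ⌈ℓ (δ * x)⌉₊,
    ∫ ω, ((Ncount X n ω : ℝ) / linv ℓ ((Ncount X n ω : ℕ) : ℝ)) *
        (rtail F (x + sMinus X n ω) / (x + sMinus X n ω)) *
        sSup ((fun t => IofHat F ℓ h η (Ncount X n ω) r t T) ''
          Set.Icc (c₁ * (x + sMinus X n ω) / (⌊1/α⌋₊ : ℝ))
            (c₂ * (x + sMinus X n ω) + 2 * h)) ∂P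

/-- Strict ascending ladder epochs. -/
def ladderTime (X : ℕ → Ω → ℝ) : ℕ → Ω → ℕ
  | 0 => fun _ => 0
  | k + 1 => fun ω =>
      sInf {n : ℕ | ladderTime X k ω < n ∧ pSum X (ladderTime X k ω) ω < pSum X n ω}

/-- Strict ascending ladder heights `H_k`. -/
def ladderHeight (X : ℕ → Ω → ℝ) (k : ℕ) (ω : Ω) : ℝ := pSum X (ladderTime X k ω) ω

/-- Weak descending ladder epochs (weak ascending epochs of `-S`). -/
def wLadderTimeDesc (X : ℕ → Ω → ℝ) : ℕ → Ω → ℕ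
  | 0 => fun _ => 0
  | k + 1 => fun ω =>
      sInf {n : ℕ | wLadderTimeDesc X k ω < n ∧
        pSum X n ω ≤ pSum X (wLadderTimeDesc X k ω) ω}

/-- Weak descending ladder heights (ladder heights of the walk `-S`). -/
def wLadderHeightDesc (X : ℕ → Ω → ℝ) (k : ℕ) (ω : Ω) : ℝ :=
  - pSum X (wLadderTimeDesc X k ω) ω

/-- `X_{n:k}`, the `k`-th largest among `X₁,…,Xₙ`; by convention `0` if `k > n`. -/
def ordStat (X : ℕ → Ω → ℝ) (n k : ℕ) (ω : Ω) : ℝ :=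
  sSup {t : ℝ | k ≤ ((Finset.range n).filter fun i => t ≤ X i ω).card}

/-- `S_{n:k} = X_{n:1} + ⋯ + X_{n:k}`. -/
def topSum (X : ℕ → Ω → ℝ) (n k : ℕ) (ω : Ω) : ℝ :=
  ∑ j ∈ Finset.Icc 1 k, ordStat X n j ω

/-- `ζ_{n,x} = aₙ^{1-γ} x^γ`. -/
def zetaCut (ℓ : ℝ → ℝ) (γ : ℝ) (n : ℕ) (x : ℝ) : ℝ :=
  (linv ℓ (n : ℝ)) ^ (1 - γ) * x ^ γ

/-- The event `E_{n,k,x} = {Sₙ ∈ (x,x+h], X_{n:k} > ζ_{n,x} ≥ X_{n:k+1}}`,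
with the convention `X_{n:0} = ∞`. -/
def Eevent (X : ℕ → Ω → ℝ) (ℓ : ℝ → ℝ) (h γ : ℝ) (n k : ℕ) (x : ℝ) : Set Ω :=
  {ω | pSum X n ω ∈ Set.Ioc x (x + h) ∧
    (k = 0 ∨ zetaCut ℓ γ n x < ordStat X n k ω) ∧
    ordStat X n (k + 1) ω ≤ zetaCut ℓ γ n x}

end SRT

open SRT

/-!
Fourier inversion expresses the renewal measure, tested against the kernel of a compactly supported
symbol `q` and seen from `x`, as `∫ q(θ) e^{-iθx} / (1 - φ(θ)) dθ`, where `φ` is the characteristic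
function of `F`. Regular variation gives `1 - φ(1/x) ∼ C F̄(x)`, so after the substitution `θ = t/x`
the integrand, multiplied by `F̄(x)`, converges to a multiple of `t^{-α} e^{-it}`. This limit is not
absolutely integrable at `∞`. Averaging the integral with its translate by the half-period `π`
replaces `1 / (1 - φ)` by its increments over distance `π / x`. Since
`|φ(θ) - φ(θ + π/x)| = O(F̄(x))`, these are `O(t^{-2β})` for every `β < α`, hence integrable at `∞`
for some `β` exactly because `α > 1/2`, and dominated convergence yields the limit. It is identified
with `2πα ∫ t^{-α} g(t) dt` by computing, through Fubini and a Laplace integral, the same constant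
from the stable characteristic function. One passes from kernels to intervals by a lattice symbol
whose kernel vanishes on `hℤ ∖ {0}` in the arithmetic case, and by Lévy's continuity theorem for
measures weighted by a Fejér kernel in the non-arithmetic case.
-/

namespace SRT

open scoped Topology NNReal

/-! ### Regularly varying tails -/

/-- An antitone function that is regularly varying at `∞` with exponent `-α`. Such a function is
positive on the whole line, not only on `(0, ∞)`. -/
structure RegTail (G : ℝ → ℝ) (α : ℝ) : Prop where
  anti : Antitone G
  regVary : RegVary G (-α)

lemma antitone_rtail (F : Measure ℝ) [IsFiniteMeasure F] : Antitone (rtail F) := fun _ _ hxy =>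
  measureReal_mono (Ioi_subset_Ioi hxy)

lemma rtail_le_one (F : Measure ℝ) [IsProbabilityMeasure F] (x : ℝ) : rtail F x ≤ 1 :=
  measureReal_le_one

lemma RightTail.rtail_pos {F : Measure ℝ} [IsFiniteMeasure F] {ℓ : ℝ → ℝ}
    (hRT : RightTail F ℓ) (x : ℝ) : 0 < rtail F x := by
  obtain ⟨y, hy, hxy⟩ :=
    ((hRT.eventually (lt_mem_nhds one_pos)).and (eventually_ge_atTop x)).exists
  have hne : rtail F y ≠ 0 := fun h => by simp [h] at hy
  exact (ENNReal.toReal_nonneg.lt_of_ne hne.symm).trans_le (antitone_rtail F hxy)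

lemma RightTail.regTail {F : Measure ℝ} [IsFiniteMeasure F] {ℓ : ℝ → ℝ} {α : ℝ}
    (hRT : RightTail F ℓ) (hℓ : RegVary ℓ α) : RegTail (rtail F) α := by
  refine ⟨antitone_rtail F, fun x _ => hRT.rtail_pos x, fun c hc => ?_⟩
  have hcomp : Tendsto (fun x => rtail F (c * x) * ℓ (c * x)) atTop (𝓝 1) :=
    hRT.comp (tendsto_id.const_mul_atTop hc)
  have hlim := (hcomp.div hRT one_ne_zero).div (hℓ.2 c hc) (rpow_pos_of_pos hc α).ne'
  simp only [div_one, one_div, ← rpow_neg hc.le] at hlim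
  refine hlim.congr' ?_
  filter_upwards [eventually_gt_atTop 0] with x hx
  have := (hℓ.1 x hx).ne'
  have := (hℓ.1 (c * x) (mul_pos hc hx)).ne'
  have := (hRT.rtail_pos x).ne'
  simp only [Pi.div_apply]
  field_simp

lemma le_pow_mul_of_two_mul_le {f : ℝ → ℝ} {c x₀ : ℝ} (hx₀ : 0 ≤ x₀) (hc : 0 ≤ c)
    (hf : ∀ x ≥ x₀, f (2 * x) ≤ c * f x) {y : ℝ} (hy : x₀ ≤ y) (k : ℕ) :
    f (2 ^ k * y) ≤ c ^ k * f y := by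
  induction k with
  | zero => simp
  | succ k ih =>
    have hk : x₀ ≤ 2 ^ k * y :=
      hy.trans (le_mul_of_one_le_left (hx₀.trans hy) (one_le_pow₀ one_le_two))
    calc f (2 ^ (k + 1) * y) = f (2 * (2 ^ k * y)) := by ring_nf
      _ ≤ c * f (2 ^ k * y) := hf _ hk
      _ ≤ c * (c ^ k * f y) := by gcongr
      _ = c ^ (k + 1) * f y := by ring

lemma two_rpow_pow (β : ℝ) (k : ℕ) : ((2 : ℝ) ^ β) ^ k = ((2 : ℝ) ^ k) ^ β := by
  rw [← rpow_natCast, ← rpow_mul two_pos.le, mul_comm, rpow_mul two_pos.le, rpow_natCast]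

namespace RegTail

variable {G : ℝ → ℝ} {α β : ℝ}

lemma pos (hG : RegTail G α) (x : ℝ) : 0 < G x :=
  (hG.regVary.1 _ (lt_max_of_lt_right one_pos)).trans_le (hG.anti (le_max_left x 1))

lemma ratio (hG : RegTail G α) {c : ℝ} (hc : 0 < c) :
    Tendsto (fun x => G (c * x) / G x) atTop (𝓝 (c ^ (-α))) :=
  hG.regVary.2 c hc

lemma eventually_two_mul_le (hG : RegTail G α) (hβ : β < α) :
    ∀ᶠ x in atTop, G (2 * x) ≤ 2 ^ (-β) * G x := by
  have h : (2 : ℝ) ^ (-α) < 2 ^ (-β) := rpow_lt_rpow_of_exponent_lt one_lt_two (by linarith)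
  filter_upwards [(hG.ratio two_pos).eventually (gt_mem_nhds h)] with x hx
  exact ((div_lt_iff₀ (hG.pos x)).1 hx).le

lemma eventually_inv_two_mul_le (hG : RegTail G α) (hβ : α < β) :
    ∀ᶠ x in atTop, (G (2 * x))⁻¹ ≤ 2 ^ β * (G x)⁻¹ := by
  have h : (2 : ℝ) ^ (-β) < 2 ^ (-α) := rpow_lt_rpow_of_exponent_lt one_lt_two (by linarith)
  filter_upwards [(hG.ratio two_pos).eventually (lt_mem_nhds h)] with x hx
  have hx' := (lt_div_iff₀ (hG.pos x)).1 hx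
  rw [← inv_inv ((2 : ℝ) ^ β), ← rpow_neg two_pos.le, ← mul_inv]
  exact inv_anti₀ (mul_pos (by positivity) (hG.pos x)) hx'.le

lemma exists_le_mul_rpow_neg_mul (hG : RegTail G α) (hβ₀ : 0 ≤ β) (hβ : β < α) :
    ∃ x₀ > 0, ∀ y ≥ x₀, ∀ x ≥ y, G x ≤ 2 ^ β * (x / y) ^ (-β) * G y := by
  obtain ⟨x₀, hx₀, h0⟩ := (eventually_forall_ge_atTop.2 (hG.eventually_two_mul_le hβ)
    |>.and (eventually_gt_atTop 0)).exists
  refine ⟨x₀, h0, fun y hy x hx => ?_⟩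
  have hy0 : 0 < y := h0.trans_le hy
  obtain ⟨k, hk, hk'⟩ := exists_nat_pow_near ((one_le_div hy0).2 hx) one_lt_two
  have hxk : x / y / 2 ≤ 2 ^ k := by
    rw [div_le_iff₀ two_pos, ← pow_succ]; exact hk'.le
  have hxy : 0 < x / y / 2 := by have := hy0.trans_le hx; positivity
  have hGy := (hG.pos y).le
  calc G x ≤ G (2 ^ k * y) := hG.anti ((le_div_iff₀ hy0).1 hk)
    _ ≤ ((2 : ℝ) ^ (-β)) ^ k * G y :=
        le_pow_mul_of_two_mul_le h0.le (by positivity) hx₀ hy k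
    _ = ((2 : ℝ) ^ k) ^ (-β) * G y := by rw [two_rpow_pow]
    _ ≤ (x / y / 2) ^ (-β) * G y := by
        gcongr ?_ * _
        exact rpow_le_rpow_of_nonpos hxy hxk (by linarith)
    _ = 2 ^ β * (x / y) ^ (-β) * G y := by
        rw [div_rpow (by linarith) two_pos.le, rpow_neg two_pos.le, div_inv_eq_mul,
          mul_comm (2 ^ β)]

lemma exists_le_mul_rpow_mul (hG : RegTail G α) (hβ₀ : 0 ≤ β) (hβ : α < β) :
    ∃ x₀ > 0, ∀ y ≥ x₀, ∀ x ≥ y, G y ≤ 2 ^ β * (x / y) ^ β * G x := by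
  obtain ⟨x₀, hx₀, h0⟩ := (eventually_forall_ge_atTop.2 (hG.eventually_inv_two_mul_le hβ)
    |>.and (eventually_gt_atTop 0)).exists
  refine ⟨x₀, h0, fun y hy x hx => ?_⟩
  have hy0 : 0 < y := h0.trans_le hy
  have : 0 < x := hy0.trans_le hx
  obtain ⟨k, hk, hk'⟩ := exists_nat_pow_near ((one_le_div hy0).2 hx) one_lt_two
  have hGx : (G x)⁻¹ ≤ 2 ^ β * (x / y) ^ β * (G y)⁻¹ := by
    have hGy := (inv_pos.2 (hG.pos y)).le
    calc (G x)⁻¹ ≤ (G (2 ^ (k + 1) * y))⁻¹ :=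
          inv_anti₀ (hG.pos _) (hG.anti ((div_le_iff₀ hy0).1 hk'.le))
      _ ≤ ((2 : ℝ) ^ β) ^ (k + 1) * (G y)⁻¹ :=
          le_pow_mul_of_two_mul_le (f := fun x => (G x)⁻¹) h0.le (by positivity) hx₀ hy _
      _ = 2 ^ β * ((2 : ℝ) ^ k) ^ β * (G y)⁻¹ := by rw [pow_succ', two_rpow_pow]
      _ ≤ 2 ^ β * (x / y) ^ β * (G y)⁻¹ := by gcongr
  have hGx' := hG.pos x
  have hGy' := hG.pos y
  rw [← div_eq_mul_inv, le_div_iff₀ hGy', inv_mul_le_iff₀ hGx'] at hGx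
  linarith

lemma potter_upper (hG : RegTail G α) (hβ₀ : 0 ≤ β) (hβ : β < α) {b : ℝ} (hb : 0 < b) :
    ∃ K > 0, ∀ y ≥ b, ∀ x ≥ y, G x ≤ K * (x / y) ^ (-β) * G y := by
  obtain ⟨x₀, h0, hx₀⟩ := hG.exists_le_mul_rpow_neg_mul hβ₀ hβ
  set c := max 1 (x₀ / b)
  have hc1 : 1 ≤ c := le_max_left _ _
  have hc0 : 0 < c := one_pos.trans_le hc1
  refine ⟨2 ^ β * c ^ β, by positivity, fun y hy x hx => ?_⟩
  have hy0 : 0 < y := hb.trans_le hy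
  have hx0 : 0 < x := hy0.trans_le hx
  have hGy := hG.pos y
  have hcy : x₀ ≤ c * y :=
    calc x₀ = x₀ / b * b := by field_simp
      _ ≤ c * y := by gcongr; exact le_max_right _ _
  rcases le_total (c * y) x with h | h
  · calc G x ≤ 2 ^ β * (x / (c * y)) ^ (-β) * G (c * y) := hx₀ _ hcy x h
      _ ≤ 2 ^ β * (x / (c * y)) ^ (-β) * G y := by
          gcongr; exact hG.anti (le_mul_of_one_le_left hy0.le hc1)
      _ = 2 ^ β * c ^ β * (x / y) ^ (-β) * G y := by
          rw [show x / (c * y) = x / y / c by field_simp, div_rpow (by positivity) hc0.le,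
            rpow_neg hc0.le, div_inv_eq_mul]
          ring
  · have hxy : c ^ (-β) ≤ (x / y) ^ (-β) :=
      rpow_le_rpow_of_nonpos (by positivity) ((div_le_iff₀ hy0).2 h) (by linarith)
    calc G x ≤ G y := hG.anti hx
      _ = 1 * (c ^ β * c ^ (-β)) * G y := by rw [← rpow_add hc0]; simp
      _ ≤ 2 ^ β * (c ^ β * (x / y) ^ (-β)) * G y := by
          gcongr; exact one_le_rpow one_le_two hβ₀
      _ = 2 ^ β * c ^ β * (x / y) ^ (-β) * G y := by ring

lemma potter_lower (hG : RegTail G α) (hβ₀ : 0 ≤ β) (hβ : α < β) :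
    ∃ K > 0, ∀ y > 0, ∀ x ≥ y, G y ≤ K * (x / y) ^ β * G x := by
  obtain ⟨x₀, h0, hx₀⟩ := hG.exists_le_mul_rpow_mul hβ₀ hβ
  have hG₀ := hG.pos 0
  have hGx₀ := hG.pos x₀
  have hM : 1 ≤ G 0 / G x₀ := (one_le_div hGx₀).2 (hG.anti h0.le)
  refine ⟨G 0 / G x₀ * 2 ^ β, by positivity, fun y hy x hx => ?_⟩
  have hmax : G y ≤ G 0 / G x₀ * G (max y x₀) := by
    rcases le_total x₀ y with h | h
    · rw [max_eq_left h]; exact le_mul_of_one_le_left (hG.pos y).le hM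
    · rw [max_eq_right h, div_mul_cancel₀ _ hGx₀.ne']; exact hG.anti hy.le
  have hratio : max x x₀ / max y x₀ ≤ x / y := by
    rw [div_le_div_iff₀ (lt_max_of_lt_left hy) hy, max_mul_of_nonneg _ _ hy.le]
    refine max_le ?_ ?_
    · exact mul_le_mul_of_nonneg_left (le_max_left _ _) (hy.le.trans hx)
    · exact mul_comm x₀ y ▸ mul_le_mul hx (le_max_right _ _) h0.le (hy.le.trans hx)
  calc G y ≤ G 0 / G x₀ * G (max y x₀) := hmax
    _ ≤ G 0 / G x₀ * (2 ^ β * (max x x₀ / max y x₀) ^ β * G (max x x₀)) := by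
        gcongr; exact hx₀ _ (le_max_right _ _) _ (max_le_max hx le_rfl)
    _ ≤ G 0 / G x₀ * (2 ^ β * (x / y) ^ β * G x) := by
        have := (hG.pos (max x x₀)).le
        have := hy.trans_le hx
        gcongr
        exact hG.anti (le_max_left _ _)
    _ = G 0 / G x₀ * 2 ^ β * (x / y) ^ β * G x := by ring

lemma exists_scaled_le (hG : RegTail G α) (hβ₀ : 0 ≤ β) (hβ : α < β) :
    ∃ M > 0, ∀ s > 0, ∀ x > 0, G (s * x) ≤ (M * s ^ (-β) + 1) * G x := by
  obtain ⟨M, hM₀, hM⟩ := hG.potter_lower hβ₀ hβ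
  refine ⟨M, hM₀, fun s hs x hx => ?_⟩
  have hGx := hG.pos x
  rcases le_total s 1 with h | h
  · have hMs := hM (s * x) (mul_pos hs hx) x (mul_le_of_le_one_left hx.le h)
    rw [show x / (s * x) = s⁻¹ by field_simp, inv_rpow hs.le, ← rpow_neg hs.le] at hMs
    linarith
  · have : 0 ≤ M * s ^ (-β) * G x := by positivity
    linarith [hG.anti (le_mul_of_one_le_left hx.le h)]

lemma tendsto_add_ratio (hG : RegTail G α) {h : ℝ} (hh : 0 ≤ h) :
    Tendsto (fun x => G (x + h) / G x) atTop (𝓝 1) := by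
  have hc : Tendsto (fun c : ℝ => c ^ (-α)) (𝓝[>] 1) (𝓝 1) := by
    simpa using (continuousAt_rpow_const 1 (-α) (Or.inl one_ne_zero)).tendsto.mono_left
      nhdsWithin_le_nhds
  refine tendsto_order.2 ⟨fun a ha => ?_, fun a ha => .of_forall fun x =>
    ((div_le_one (hG.pos x)).2 (hG.anti (by linarith))).trans_lt ha⟩
  obtain ⟨c, hca, (hc1 : 1 < c)⟩ :=
    ((hc.eventually (lt_mem_nhds ha)).and self_mem_nhdsWithin).exists
  filter_upwards [(hG.ratio (one_pos.trans hc1)).eventually (lt_mem_nhds hca),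
    eventually_ge_atTop (h / (c - 1))] with x hx hhx
  refine hx.trans_le (div_le_div_of_nonneg_right (hG.anti ?_) (hG.pos x).le)
  have := (div_le_iff₀ (by linarith)).1 hhx
  linarith

end RegTail

lemma TailRatio.exists_measureReal_lt_abs_le {F : Measure ℝ} [IsFiniteMeasure F]
    (hTR : TailRatio F) (hpos : ∀ x, 0 < rtail F x) :
    ∃ K > 0, ∀ u, F.real {y | u < |y|} ≤ K * rtail F u := by
  obtain ⟨p, hp⟩ := hTR
  obtain ⟨u₀, hu₀⟩ := eventually_atTop.1 (hp.eventually (gt_mem_nhds (lt_add_one p)))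
  have hu₀' := hpos u₀
  refine ⟨1 + |p + 1| + F.real univ / rtail F u₀, by positivity, fun u => ?_⟩
  have hu := hpos u
  have hcap : 0 ≤ F.real univ / rtail F u₀ * rtail F u := by positivity
  rcases le_total u₀ u with h | h
  · have hleft : F.real (Iic (-u)) ≤ |p + 1| * rtail F u :=
      ((div_lt_iff₀ hu).1 (hu₀ u h)).le.trans (by gcongr; exact le_abs_self _)
    calc F.real {y | u < |y|} ≤ F.real (Ioi u ∪ Iic (-u)) :=
          measureReal_mono fun y (hy : u < |y|) =>
            (lt_abs.1 hy).imp id fun h => (lt_neg.1 h).le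
      _ ≤ F.real (Ioi u) + F.real (Iic (-u)) := measureReal_union_le _ _
      _ ≤ rtail F u + |p + 1| * rtail F u := add_le_add le_rfl hleft
      _ ≤ (1 + |p + 1| + F.real univ / rtail F u₀) * rtail F u := by linarith
  · calc F.real {y | u < |y|} ≤ F.real univ := measureReal_mono (subset_univ _)
      _ = F.real univ / rtail F u₀ * rtail F u₀ := (div_mul_cancel₀ _ hu₀'.ne').symm
      _ ≤ F.real univ / rtail F u₀ * rtail F u := by gcongr; exact antitone_rtail F h
      _ ≤ (1 + |p + 1| + F.real univ / rtail F u₀) * rtail F u := by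
          have : 0 ≤ (1 + |p + 1|) * rtail F u := by positivity
          linarith

lemma TailRatio.exists_tendsto_left_tail {F : Measure ℝ} [IsFiniteMeasure F] {α : ℝ}
    (hTR : TailRatio F) (hG : RegTail (rtail F) α) :
    ∃ p : ℝ, ∀ s > 0,
      Tendsto (fun x => F.real (Iio (-(s * x))) / rtail F x) atTop (𝓝 (p * s ^ (-α))) := by
  obtain ⟨p, hp⟩ := hTR
  have hopen : Tendsto (fun x => F.real (Iio (-x)) / rtail F x) atTop (𝓝 p) := by
    have hshift : Tendsto (fun x => F.real (Iic (-(x + 1))) / rtail F x) atTop (𝓝 p) := by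
      rw [← mul_one p]
      refine ((hp.comp (tendsto_atTop_add_const_right _ 1 tendsto_id)).mul
        (hG.tendsto_add_ratio zero_le_one)).congr fun x => ?_
      exact div_mul_div_cancel₀ (hG.pos _).ne'
    refine tendsto_of_tendsto_of_tendsto_of_le_of_le hshift hp (fun x => ?_) fun x => ?_
    · exact div_le_div_of_nonneg_right (measureReal_mono (Iic_subset_Iio.2 (by linarith)))
        (hG.pos x).le
    · exact div_le_div_of_nonneg_right (measureReal_mono Iio_subset_Iic_self) (hG.pos x).le
  refine ⟨p, fun s hs => ((hopen.comp (tendsto_id.const_mul_atTop hs)).mul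
    (hG.ratio hs)).congr fun x => ?_⟩
  exact div_mul_div_cancel₀ (hG.pos _).ne'

/-! ### The characteristic function of a regularly varying law -/

/-- The positive part of `v` capped at level `A`: the truncated jumps out of which the main part of
`1 - charFun F` is built. -/
def cappedPos (A v : ℝ) : ℝ := max 0 (min v A)

lemma cappedPos_nonneg (A v : ℝ) : 0 ≤ cappedPos A v := le_max_left _ _

lemma cappedPos_of_nonpos (A : ℝ) {v : ℝ} (hv : v ≤ 0) : cappedPos A v = 0 :=
  max_eq_left ((min_le_left _ _).trans hv)

lemma cappedPos_of_le {A v : ℝ} (hv : 0 ≤ v) (hvA : v ≤ A) : cappedPos A v = v := by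
  rw [cappedPos, min_eq_left hvA, max_eq_right hv]

lemma cappedPos_of_ge {A v : ℝ} (hA : 0 ≤ A) (hvA : A ≤ v) : cappedPos A v = A := by
  rw [cappedPos, min_eq_right hvA, max_eq_right hA]

@[fun_prop]
lemma continuous_cappedPos (A : ℝ) : Continuous (cappedPos A) := by unfold cappedPos; fun_prop

section LayerCake

variable {Ω E : Type*} [MeasurableSpace Ω] [NormedAddCommGroup E] [NormedSpace ℝ E]

lemma intervalIntegral_indicator_Iio {A : ℝ} (hA : 0 ≤ A) (g : ℝ → E) (v : ℝ) :
    ∫ s in (0:ℝ)..A, (Iio v).indicator g s = ∫ s in (0:ℝ)..cappedPos A v, g s := by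
  have hset : Ioc 0 A ∩ Iic v = Ioc 0 (cappedPos A v) := by
    ext s
    simp only [cappedPos, mem_inter_iff, mem_Ioc, mem_Iic, le_max_iff, le_min_iff]
    constructor
    · rintro ⟨⟨h0, hA⟩, hv⟩
      exact ⟨h0, .inr ⟨hv, hA⟩⟩
    · rintro ⟨h0, h | h⟩
      · exact absurd h0 h.not_gt
      · exact ⟨⟨h0, h.2⟩, h.1⟩
  rw [intervalIntegral.integral_of_le hA, intervalIntegral.integral_of_le (cappedPos_nonneg _ _),
    setIntegral_indicator measurableSet_Iio, ← hset]
  exact setIntegral_congr_set ((ae_eq_refl _).inter Iio_ae_eq_Iic)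

lemma integral_integral_cappedPos [CompleteSpace E] (μ : Measure Ω) [IsFiniteMeasure μ] {v : Ω → ℝ}
    (hv : Measurable v) {g : ℝ → E} (hg : Continuous g) {A : ℝ} (hA : 0 ≤ A) :
    ∫ y, (∫ s in (0:ℝ)..cappedPos A (v y), g s) ∂μ
      = ∫ s in (0:ℝ)..A, μ.real {y | s < v y} • g s := by
  simp_rw [← intervalIntegral_indicator_Iio hA, intervalIntegral.integral_of_le hA]
  have h_int : Integrable (Function.uncurry fun y s => (Iio (v y)).indicator g s)
      (μ.prod (volume.restrict (Ioc 0 A))) := by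
    have huncurry : (Function.uncurry fun y s => (Iio (v y)).indicator g s)
        = {z : Ω × ℝ | z.2 < v z.1}.indicator fun z => g z.2 := by
      ext ⟨y, s⟩; simp [Function.uncurry, indicator]
    rw [huncurry]
    have hgA : Integrable g (volume.restrict (Ioc 0 A)) :=
      hg.integrableOn_Icc.mono_set Ioc_subset_Icc_self
    exact (hgA.comp_snd μ).indicator
      (measurableSet_lt measurable_snd (hv.comp measurable_fst))
  rw [integral_integral_swap h_int]
  congr 1 with s
  have hswap : (fun y => (Iio (v y)).indicator g s) = {y | s < v y}.indicator fun _ => g s := by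
    ext y; simp [indicator]
  rw [hswap, integral_indicator (measurableSet_lt measurable_const hv), setIntegral_const]

lemma integral_one_sub_exp_cappedPos (μ : Measure Ω) [IsFiniteMeasure μ] {v : Ω → ℝ}
    (hv : Measurable v) (c : ℂ) {A : ℝ} (hA : 0 ≤ A) :
    ∫ y, (1 - Complex.exp (c * cappedPos A (v y))) ∂μ
      = ∫ s in (0:ℝ)..A, μ.real {y | s < v y} • (-c * Complex.exp (c * s)) := by
  rw [← integral_integral_cappedPos μ hv (by fun_prop) hA]
  congr 1 with y
  rw [intervalIntegral.integral_const_mul]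
  rcases eq_or_ne c 0 with rfl | hc
  · simp
  · rw [integral_exp_mul_complex hc]
    simp
    field_simp
    ring

lemma RegTail.tendsto_integral_scaled {G H : ℝ → ℝ} {α q K A : ℝ} {g : ℝ → E}
    (hG : RegTail G α) (hα₀ : 0 < α) (hα₁ : α < 1) (hH : Antitone H)
    (hHG : ∀ u, |H u| ≤ K * G u)
    (hlim : ∀ s > 0, Tendsto (fun x => H (s * x) / G x) atTop (𝓝 (q * s ^ (-α))))
    (hg : Continuous g) (hA : 0 ≤ A) :
    Tendsto (fun x => ∫ s in (0:ℝ)..A, (H (s * x) / G x) • g s) atTop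
      (𝓝 (∫ s in (0:ℝ)..A, (q * s ^ (-α)) • g s)) := by
  obtain ⟨β, hβ, hβ₁⟩ := exists_between hα₁
  obtain ⟨M, _, hM⟩ := hG.exists_scaled_le (hα₀.trans hβ).le hβ
  obtain ⟨D, hD⟩ := isCompact_Icc.exists_bound_of_continuousOn (s := Icc 0 A) hg.continuousOn
  have hK : 0 ≤ K := nonneg_of_mul_nonneg_left ((abs_nonneg _).trans (hHG 0)) (hG.pos 0)
  refine intervalIntegral.tendsto_integral_filter_of_dominated_convergence
    (fun s => K * (M * s ^ (-β) + 1) * D) ?_ ?_ ?_ ?_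
  · filter_upwards [eventually_gt_atTop 0] with x hx
    have hmeas : Measurable fun s => H (s * x) :=
      Antitone.measurable fun a b hab => hH (by gcongr)
    exact (hmeas.div_const _).aestronglyMeasurable.smul hg.aestronglyMeasurable
  · filter_upwards [eventually_gt_atTop 0] with x hx
    refine ae_of_all _ fun s hs => ?_
    rw [uIoc_of_le hA] at hs
    have hratio : |H (s * x) / G x| ≤ K * (M * s ^ (-β) + 1) := by
      rw [abs_div, abs_of_pos (hG.pos x), div_le_iff₀ (hG.pos x), mul_assoc]
      exact (hHG _).trans (by gcongr; exact hM s hs.1 x hx)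
    rw [norm_smul]
    exact mul_le_mul hratio (hD s (Ioc_subset_Icc_self hs)) (norm_nonneg _)
      ((abs_nonneg _).trans hratio)
  · exact ((((intervalIntegral.intervalIntegrable_rpow' (by linarith)).const_mul M).add
      intervalIntegrable_const).const_mul K).mul_const D
  · refine ae_of_all _ fun s hs => ?_
    rw [uIoc_of_le hA] at hs
    exact (hlim s hs.1).smul_const (g s)

end LayerCake

lemma norm_exp_mul_I_sub_exp_mul_I_le_two (a b : ℝ) :
    ‖Complex.exp (a * Complex.I) - Complex.exp (b * Complex.I)‖ ≤ 2 := by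
  refine (norm_sub_le _ _).trans ?_
  rw [Complex.norm_exp_ofReal_mul_I, Complex.norm_exp_ofReal_mul_I, one_add_one_eq_two]

lemma integrable_exp_mul_mul_I (μ : Measure ℝ) [IsFiniteMeasure μ] (t : ℝ) :
    Integrable (fun y : ℝ => Complex.exp (t * y * Complex.I)) μ := by
  refine (integrable_const (1 : ℝ)).mono' (by fun_prop) (ae_of_all _ fun y => ?_)
  rw [← Complex.ofReal_mul, Complex.norm_exp_ofReal_mul_I]

lemma integrable_one_sub_exp_mul_mul_I (μ : Measure ℝ) [IsFiniteMeasure μ] (t : ℝ) :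
    Integrable (fun y : ℝ => 1 - Complex.exp (t * y * Complex.I)) μ :=
  (integrable_const _).sub (integrable_exp_mul_mul_I μ t)

lemma one_sub_charFun_eq_integral (F : Measure ℝ) [IsProbabilityMeasure F] (t : ℝ) :
    1 - charFun F t = ∫ y, (1 - Complex.exp (t * y * Complex.I)) ∂F := by
  rw [charFun_apply_real, integral_sub (integrable_const _) (integrable_exp_mul_mul_I F t)]
  simp

/-- The contribution `1 - e^{iv}` of a jump `v`, with the jump capped to `[-A, A]`. At most one of
the two terms is non-zero. -/
def truncJump (A v : ℝ) : ℂ :=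
  (1 - Complex.exp (Complex.I * cappedPos A v)) +
    (1 - Complex.exp (-Complex.I * cappedPos A (-v)))

lemma norm_one_sub_exp_sub_truncJump_le {A : ℝ} (hA : 0 ≤ A) (v : ℝ) :
    ‖1 - Complex.exp (v * Complex.I) - truncJump A v‖
      ≤ {v | A < |v|}.indicator (fun _ => 2) v := by
  by_cases h : A < |v|
  · rw [indicator_of_mem (by exact h)]
    rcases lt_abs.1 h with h | h
    · rw [truncJump, cappedPos_of_ge hA h.le, cappedPos_of_nonpos A (by linarith)]
      convert norm_exp_mul_I_sub_exp_mul_I_le_two A v using 2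
      simp [mul_comm]
    · rw [truncJump, cappedPos_of_ge hA h.le, cappedPos_of_nonpos A (by linarith)]
      convert norm_exp_mul_I_sub_exp_mul_I_le_two (-A) v using 2
      simp [mul_comm]
  · rw [indicator_of_notMem (by exact h)]
    obtain ⟨hl, hr⟩ := abs_le.1 (not_lt.1 h)
    rcases le_total 0 v with h0 | h0
    · rw [truncJump, cappedPos_of_le h0 hr, cappedPos_of_nonpos A (by linarith), mul_comm]
      simp
    · rw [truncJump, cappedPos_of_nonpos A h0, cappedPos_of_le (by linarith) (by linarith),
        mul_comm]
      simp

lemma integrable_one_sub_exp_cappedPos {Ω : Type*} [MeasurableSpace Ω] (μ : Measure Ω)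
    [IsFiniteMeasure μ] {v : Ω → ℝ} (hv : Measurable v) {c : ℂ} (hc : c.re = 0) (A : ℝ) :
    Integrable (fun y => 1 - Complex.exp (c * cappedPos A (v y))) μ := by
  refine (integrable_const (2 : ℝ)).mono' ?_ (ae_of_all _ fun y => ?_)
  · exact Continuous.comp_aestronglyMeasurable
      (g := fun v => 1 - Complex.exp (c * cappedPos A v)) (by fun_prop) hv.aestronglyMeasurable
  · refine (norm_sub_le _ _).trans ?_
    rw [Complex.norm_exp, Complex.re_mul_ofReal, hc, zero_mul, Real.exp_zero, norm_one,
      one_add_one_eq_two]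

lemma norm_one_sub_charFun_sub_truncJump_le {F : Measure ℝ} [IsProbabilityMeasure F] {A x : ℝ}
    (hA : 0 ≤ A) (hx : 0 < x) :
    ‖1 - charFun F (1 / x) - ∫ y, truncJump A (y / x) ∂F‖ ≤ 2 * F.real {y | A * x < |y|} := by
  have hset : MeasurableSet {y : ℝ | A * x < |y|} := measurableSet_lt (by fun_prop) (by fun_prop)
  have htrunc : Integrable (fun y => truncJump A (y / x)) F :=
    (integrable_one_sub_exp_cappedPos F (by fun_prop) (by simp) A).add
      (integrable_one_sub_exp_cappedPos F (by fun_prop) (by simp) A)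
  have hpt : ∀ y : ℝ, ‖1 - Complex.exp ((1 / x : ℝ) * y * Complex.I) - truncJump A (y / x)‖
      ≤ {y : ℝ | A * x < |y|}.indicator (fun _ => (2 : ℝ)) y := fun y => by
    rw [show ((1 / x : ℝ) * y * Complex.I : ℂ) = (y / x : ℝ) * Complex.I by push_cast; ring]
    refine (norm_one_sub_exp_sub_truncJump_le hA (y / x)).trans_eq ?_
    simp only [indicator, mem_ofPred_eq, abs_div, abs_of_pos hx, lt_div_iff₀ hx]
  rw [one_sub_charFun_eq_integral,
    ← integral_sub (integrable_one_sub_exp_mul_mul_I F _) htrunc]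
  refine (norm_integral_le_of_norm_le ((integrable_const _).indicator hset)
    (ae_of_all _ hpt)).trans_eq ?_
  rw [integral_indicator hset, setIntegral_const, smul_eq_mul, mul_comm, measureReal_def]

lemma tendsto_integral_one_sub_exp_cappedPos {F : Measure ℝ} [IsFiniteMeasure F]
    {α q K σ A : ℝ} (hα₀ : 0 < α) (hα₁ : α < 1) (hG : RegTail (rtail F) α)
    (hK : ∀ u, F.real {y | u < σ * y} ≤ K * rtail F u)
    (hlim : ∀ s > 0, Tendsto (fun x => F.real {y | s * x < σ * y} / rtail F x) atTop
      (𝓝 (q * s ^ (-α))))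
    (c : ℂ) (hA : 0 ≤ A) :
    Tendsto (fun x => (∫ y, (1 - Complex.exp (c * cappedPos A (σ * (y / x)))) ∂F) / rtail F x)
      atTop (𝓝 (∫ s in (0:ℝ)..A, (q * s ^ (-α)) • (-c * Complex.exp (c * s)))) := by
  have hanti : Antitone fun u => F.real {y | u < σ * y} := fun a b hab =>
    measureReal_mono fun y hy => hab.trans_lt hy
  have hscaled := hG.tendsto_integral_scaled (g := fun s => -c * Complex.exp (c * s)) hα₀ hα₁ hanti
    (fun u => by rw [abs_of_nonneg measureReal_nonneg]; exact hK u) hlim (by fun_prop) hA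
  refine hscaled.congr' ?_
  filter_upwards [eventually_gt_atTop 0] with x hx
  rw [integral_one_sub_exp_cappedPos F (by fun_prop) c hA, ← intervalIntegral.integral_div]
  congr 1 with s
  have hset : {y : ℝ | s < σ * (y / x)} = {y | s * x < σ * y} := by
    ext y
    rw [mem_ofPred_eq, mem_ofPred_eq, mul_div_assoc', lt_div_iff₀ hx]
  rw [hset, Complex.real_smul, Complex.real_smul]
  push_cast
  ring

lemma exists_tendsto_truncJump {F : Measure ℝ} [IsFiniteMeasure F] {α A : ℝ}
    (hα₀ : 0 < α) (hα₁ : α < 1) (hG : RegTail (rtail F) α) (hTR : TailRatio F) (hA : 0 ≤ A) :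
    ∃ d : ℂ, Tendsto (fun x => (∫ y, truncJump A (y / x) ∂F) / rtail F x) atTop (𝓝 d) := by
  obtain ⟨p, hp⟩ := hTR.exists_tendsto_left_tail hG
  obtain ⟨K, -, hK⟩ := hTR.exists_measureReal_lt_abs_le hG.pos
  have hright := tendsto_integral_one_sub_exp_cappedPos (σ := 1) (q := 1) (K := 1) hα₀ hα₁ hG
    (fun u => by simp [rtail, Ioi, measureReal_def])
    (fun s hs => by simpa [rtail, Ioi, measureReal_def] using hG.ratio hs) Complex.I hA
  have hset : ∀ u : ℝ, {y : ℝ | u < -1 * y} = Iio (-u) := fun u => by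
    ext y
    rw [mem_ofPred_eq, mem_Iio, neg_one_mul, lt_neg]
  have hleft := tendsto_integral_one_sub_exp_cappedPos (σ := -1) (q := p) (K := K) hα₀ hα₁ hG
    (fun u => hset u ▸ (measureReal_mono fun y (hy : y < -u) =>
      show u < |y| from lt_abs.2 (.inr (lt_neg.2 hy))).trans (hK u))
    (fun s hs => by simpa only [hset] using hp s hs) (-Complex.I) hA
  refine ⟨_, (hright.add hleft).congr fun x => ?_⟩
  rw [← add_div, ← integral_add
    (integrable_one_sub_exp_cappedPos F (by fun_prop) (by simp) A)
    (integrable_one_sub_exp_cappedPos F (by fun_prop) (by simp) A)]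
  simp only [truncJump, one_mul, neg_one_mul]

lemma exists_tendsto_of_forall_exists_dist_lt {ι X : Type*} [PseudoMetricSpace X] [CompleteSpace X]
    {l : Filter ι} [l.NeBot] {f : ι → X}
    (h : ∀ ε > 0, ∃ (g : ι → X) (d : X), Tendsto g l (𝓝 d) ∧ ∀ᶠ x in l, dist (f x) (g x) < ε) :
    ∃ d, Tendsto f l (𝓝 d) := by
  refine cauchy_map_iff_exists_tendsto.1 (Metric.cauchy_iff.2 ⟨inferInstance, fun ε hε => ?_⟩)
  obtain ⟨g, d, hg, hfg⟩ := h (ε / 4) (by linarith)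
  have hfd : ∀ᶠ x in l, dist (f x) d < ε / 2 := by
    filter_upwards [hfg, Metric.tendsto_nhds.1 hg (ε / 4) (by linarith)] with x h₁ h₂
    linarith [dist_triangle (f x) (g x) d]
  refine ⟨Metric.ball d (ε / 2), hfd, fun a ha b hb => ?_⟩
  linarith [dist_triangle_right a b d, Metric.mem_ball.1 ha, Metric.mem_ball.1 hb]

-- Capping the jumps of `F(x ·)` at `A` changes `1 - φ(1/x)` by `O(F̄(Ax))`, a small multiple of
-- `F̄(x)` for large `A`, while the capped part converges after division by `F̄(x)`.
lemma exists_tendsto_one_sub_charFun {F : Measure ℝ} [IsProbabilityMeasure F] {α : ℝ}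
    (hα₀ : 0 < α) (hα₁ : α < 1) (hG : RegTail (rtail F) α) (hTR : TailRatio F) :
    ∃ C : ℂ, Tendsto (fun x : ℝ => (1 - charFun F (1 / x)) / rtail F x) atTop (𝓝 C) := by
  obtain ⟨K, -, hK⟩ := hTR.exists_measureReal_lt_abs_le hG.pos
  refine exists_tendsto_of_forall_exists_dist_lt fun ε hε => ?_
  have hzero : Tendsto (fun A : ℝ => 2 * (K * A ^ (-α))) atTop (𝓝 0) := by
    simpa using ((tendsto_rpow_neg_atTop hα₀).const_mul K).const_mul 2
  obtain ⟨A, hAε, hA⟩ := ((hzero.eventually (gt_mem_nhds hε)).and (eventually_gt_atTop 0)).exists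
  obtain ⟨d, hd⟩ := exists_tendsto_truncJump hα₀ hα₁ hG hTR hA.le
  refine ⟨_, d, hd, ?_⟩
  filter_upwards [(((hG.ratio hA).const_mul K).const_mul 2).eventually (gt_mem_nhds hAε),
    eventually_gt_atTop 0] with x hx hx₀
  have hGx := hG.pos x
  rw [dist_eq_norm, ← sub_div, norm_div, Complex.norm_real, Real.norm_eq_abs, abs_of_pos hGx]
  refine lt_of_le_of_lt ?_ hx
  rw [div_le_iff₀ hGx]
  calc ‖1 - charFun F (1 / x) - ∫ y, truncJump A (y / x) ∂F‖
      ≤ 2 * F.real {y | A * x < |y|} := norm_one_sub_charFun_sub_truncJump_le hA.le hx₀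
    _ ≤ 2 * (K * rtail F (A * x)) := by gcongr; exact hK _
    _ = 2 * (K * (rtail F (A * x) / rtail F x)) * rtail F x := by field_simp

lemma re_one_sub_charFun (F : Measure ℝ) [IsProbabilityMeasure F] (t : ℝ) :
    (1 - charFun F t).re = ∫ y, (1 - cos (t * y)) ∂F := by
  rw [one_sub_charFun_eq_integral, ← RCLike.re_eq_complex_re,
    ← integral_re (integrable_one_sub_exp_mul_mul_I F t)]
  congr 1 with y
  rw [RCLike.re_eq_complex_re, Complex.sub_re, Complex.one_re, ← Complex.ofReal_mul,
    Complex.exp_ofReal_mul_I_re]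

lemma rtail_sub_rtail {F : Measure ℝ} [IsFiniteMeasure F] {a b : ℝ} (hab : a ≤ b) :
    rtail F a - rtail F b = F.real (Ioc a b) := by
  rw [← Ioi_sdiff_Ioi, measureReal_sdiff (Ioi_subset_Ioi hab) measurableSet_Ioi]
  rfl

lemma mul_rtail_sub_rtail_le_re_one_sub_charFun (F : Measure ℝ) [IsProbabilityMeasure F] {x : ℝ}
    (hx : 0 < x) :
    (1 - cos 1) * (rtail F x - rtail F (2 * x)) ≤ (1 - charFun F (1 / x)).re := by
  have hbound : ∀ y : ℝ, (Ioc x (2 * x)).indicator (fun _ => 1 - cos 1) y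
      ≤ 1 - cos (1 / x * y) := fun y => by
    by_cases hy : y ∈ Ioc x (2 * x)
    · rw [indicator_of_mem hy, one_div_mul_eq_div]
      have h₁ : 1 ≤ y / x := (one_le_div hx).2 hy.1.le
      have h₂ : y / x ≤ 2 := (div_le_iff₀ hx).2 hy.2
      linarith [cos_le_cos_of_nonneg_of_le_pi zero_le_one (by linarith [pi_gt_three]) h₁]
    · rw [indicator_of_notMem hy]
      linarith [cos_le_one (1 / x * y)]
  have hcos : Integrable (fun y => 1 - cos (1 / x * y)) F :=
    (integrable_const 1).sub ((integrable_const (1 : ℝ)).mono' (by fun_prop)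
      (ae_of_all _ fun y => abs_cos_le_one _))
  calc (1 - cos 1) * (rtail F x - rtail F (2 * x))
      = ∫ y, (Ioc x (2 * x)).indicator (fun _ => 1 - cos 1) y ∂F := by
        rw [rtail_sub_rtail (by linarith), integral_indicator measurableSet_Ioc,
          setIntegral_const, smul_eq_mul, mul_comm, measureReal_def]
    _ ≤ ∫ y, (1 - cos (1 / x * y)) ∂F :=
        integral_mono ((integrable_const _).indicator measurableSet_Ioc) hcos hbound
    _ = (1 - charFun F (1 / x)).re := (re_one_sub_charFun F _).symm

lemma re_pos_of_tendsto_one_sub_charFun {F : Measure ℝ} [IsProbabilityMeasure F] {α : ℝ}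
    (hα : 0 < α) (hG : RegTail (rtail F) α) {C : ℂ}
    (hC : Tendsto (fun x : ℝ => (1 - charFun F (1 / x)) / rtail F x) atTop (𝓝 C)) :
    0 < C.re := by
  have hlow : Tendsto (fun x => (1 - cos 1) * (1 - rtail F (2 * x) / rtail F x)) atTop
      (𝓝 ((1 - cos 1) * (1 - 2 ^ (-α)))) :=
    (tendsto_const_nhds.sub (hG.ratio two_pos)).const_mul _
  have hcos : 0 < 1 - cos 1 := by linarith [cos_one_le]
  have hpow : (0 : ℝ) < 1 - 2 ^ (-α) :=
    sub_pos.2 (rpow_lt_one_of_one_lt_of_neg one_lt_two (neg_lt_zero.2 hα))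
  refine (mul_pos hcos hpow).trans_le
    (le_of_tendsto_of_tendsto hlow ((Complex.continuous_re.tendsto C).comp hC) ?_)
  filter_upwards [eventually_gt_atTop 0] with x hx
  have hGx := hG.pos x
  have hdiff : (1 - rtail F (2 * x) / rtail F x) * rtail F x = rtail F x - rtail F (2 * x) := by
    field_simp
  rw [Function.comp_apply, Complex.div_ofReal_re, le_div_iff₀ hGx, mul_assoc, hdiff]
  exact mul_rtail_sub_rtail_le_re_one_sub_charFun F hx

lemma norm_charFun_sub_charFun_le (F : Measure ℝ) [IsFiniteMeasure F] (s t : ℝ) :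
    ‖charFun F s - charFun F t‖ ≤ ∫ y, min (|s - t| * |y|) 2 ∂F := by
  have hpt : ∀ y : ℝ, ‖Complex.exp (s * y * Complex.I) - Complex.exp (t * y * Complex.I)‖
      ≤ min (|s - t| * |y|) 2 := fun y => by
    refine le_min ?_ (by exact_mod_cast norm_exp_mul_I_sub_exp_mul_I_le_two (s * y) (t * y))
    have hfactor : Complex.exp (s * y * Complex.I) - Complex.exp (t * y * Complex.I)
        = Complex.exp ((t * y : ℝ) * Complex.I)
          * (Complex.exp (Complex.I * ((s - t) * y : ℝ)) - 1) := by
      rw [mul_sub, ← Complex.exp_add]; push_cast; ring_nf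
    rw [hfactor, norm_mul, Complex.norm_exp_ofReal_mul_I, one_mul, ← abs_mul]
    exact Real.norm_exp_I_mul_ofReal_sub_one_le
  have h_int : Integrable (fun y : ℝ => min (|s - t| * |y|) 2) F := by
    refine (integrable_const (2 : ℝ)).mono' (by fun_prop) (ae_of_all _ fun y => ?_)
    rw [Real.norm_eq_abs, abs_of_nonneg (by positivity)]
    exact min_le_right _ _
  rw [charFun_apply_real, charFun_apply_real,
    ← integral_sub (integrable_exp_mul_mul_I F s) (integrable_exp_mul_mul_I F t)]
  exact norm_integral_le_of_norm_le h_int (ae_of_all _ hpt)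

lemma exists_integral_min_div_one_le {F : Measure ℝ} [IsFiniteMeasure F] {α : ℝ} (hα₀ : 0 < α)
    (hα₁ : α < 1) (hG : RegTail (rtail F) α) (hTR : TailRatio F) :
    ∃ K > 0, ∀ x > 0, ∫ y, min (|y| / x) 1 ∂F ≤ K * rtail F x := by
  obtain ⟨K, hK₀, hK⟩ := hTR.exists_measureReal_lt_abs_le hG.pos
  obtain ⟨β, hβ, hβ₁⟩ := exists_between hα₁
  obtain ⟨M, hM₀, hM⟩ := hG.exists_scaled_le (hα₀.trans hβ).le hβ
  have hpow : IntervalIntegrable (fun s : ℝ => K * (M * s ^ (-β) + 1)) volume 0 1 :=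
    (((intervalIntegral.intervalIntegrable_rpow' (by linarith)).const_mul M).add
      intervalIntegrable_const).const_mul K
  have hJ : 0 ≤ ∫ s in (0:ℝ)..1, K * (M * s ^ (-β) + 1) :=
    intervalIntegral.integral_nonneg zero_le_one fun s hs => by have := hs.1; positivity
  refine ⟨(∫ s in (0:ℝ)..1, K * (M * s ^ (-β) + 1)) + 1, by positivity, fun x hx => ?_⟩
  have hanti : Antitone fun s : ℝ => F.real {y | s < |y| / x} := fun a b hab =>
    measureReal_mono fun y hy => hab.trans_lt hy
  have hcap : ∀ y : ℝ, ∫ _ in (0:ℝ)..cappedPos 1 (|y| / x), (1 : ℝ) = min (|y| / x) 1 := fun y => by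
    rw [integral_one, sub_zero, cappedPos, max_eq_right (by positivity)]
  calc ∫ y, min (|y| / x) 1 ∂F = ∫ s in (0:ℝ)..1, F.real {y | s < |y| / x} := by
        simp_rw [← hcap]
        rw [integral_integral_cappedPos F (by fun_prop) continuous_const zero_le_one]
        simp
    _ ≤ ∫ s in (0:ℝ)..1, K * (M * s ^ (-β) + 1) * rtail F x := by
        refine intervalIntegral.integral_mono_on_of_le_Ioo zero_le_one hanti.intervalIntegrable
          (hpow.mul_const _) fun s hs => ?_
        simp_rw [lt_div_iff₀ hx]
        rw [mul_assoc]
        exact (hK _).trans (by gcongr; exact hM s hs.1 x hx)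
    _ ≤ ((∫ s in (0:ℝ)..1, K * (M * s ^ (-β) + 1)) + 1) * rtail F x := by
        rw [intervalIntegral.integral_mul_const]
        linarith [hG.pos x]

lemma exists_norm_charFun_sub_charFun_add_le {F : Measure ℝ} [IsFiniteMeasure F] {α : ℝ}
    (hα₀ : 0 < α) (hα₁ : α < 1) (hG : RegTail (rtail F) α) (hTR : TailRatio F) :
    ∃ K > 0, ∀ x > 0, ∀ θ : ℝ, ‖charFun F θ - charFun F (θ + π / x)‖ ≤ K * rtail F x := by
  obtain ⟨K, hK₀, hK⟩ := exists_integral_min_div_one_le hα₀ hα₁ hG hTR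
  refine ⟨π * K, by positivity, fun x hx θ => ?_⟩
  have hmin : ∀ y : ℝ, min (|θ - (θ + π / x)| * |y|) 2 ≤ π * min (|y| / x) 1 := fun y => by
    rw [sub_add_cancel_left, abs_neg, abs_of_pos (by positivity), mul_min_of_nonneg _ _ pi_pos.le,
      mul_one, div_mul_eq_mul_div, mul_div_assoc]
    exact min_le_min_left _ two_le_pi
  have h_int : Integrable (fun y : ℝ => min (|y| / x) 1) F := by
    refine (integrable_const (1 : ℝ)).mono' (by fun_prop) (ae_of_all _ fun y => ?_)
    rw [Real.norm_eq_abs, abs_of_nonneg (by positivity)]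
    exact min_le_right _ _
  calc ‖charFun F θ - charFun F (θ + π / x)‖
      ≤ ∫ y, min (|θ - (θ + π / x)| * |y|) 2 ∂F := norm_charFun_sub_charFun_le F _ _
    _ ≤ ∫ y, π * min (|y| / x) 1 ∂F :=
        integral_mono_of_nonneg (ae_of_all _ fun y => by positivity) (h_int.const_mul π)
          (ae_of_all _ hmin)
    _ ≤ π * (K * rtail F x) := by
        rw [integral_const_mul]
        gcongr
        exact hK x hx
    _ = π * K * rtail F x := (mul_assoc _ _ _).symm

/-! ### The half-period shift -/

lemma norm_exp_neg_mul_I (t : ℝ) : ‖Complex.exp (-(t * Complex.I))‖ = 1 := by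
  rw [← neg_mul, ← Complex.ofReal_neg, Complex.norm_exp_ofReal_mul_I]

lemma integrable_exp_neg_mul_I_mul {W : ℝ → ℂ} (hW : Integrable W) :
    Integrable fun t : ℝ => Complex.exp (-(t * Complex.I)) * W t :=
  hW.bdd_mul (c := 1) (Continuous.aestronglyMeasurable (by fun_prop))
    (ae_of_all _ fun t => (norm_exp_neg_mul_I t).le)

lemma exp_neg_add_pi_mul_I (t : ℝ) :
    Complex.exp (-(((t + π : ℝ) : ℂ) * Complex.I)) = -Complex.exp (-(t * Complex.I)) := by
  rw [Complex.ofReal_add, add_mul, neg_add, Complex.exp_add, Complex.exp_neg (π * Complex.I),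
    Complex.exp_pi_mul_I, inv_neg_one, mul_neg_one]

lemma integral_exp_neg_mul_I_mul_eq_half {W : ℝ → ℂ} (hW : Integrable W) :
    ∫ t : ℝ, Complex.exp (-(t * Complex.I)) * W t
      = 1 / 2 * ∫ t : ℝ, Complex.exp (-(t * Complex.I)) * (W t - W (t + π)) := by
  have hshift : ∫ t : ℝ, Complex.exp (-(t * Complex.I)) * W (t + π)
      = -∫ t : ℝ, Complex.exp (-(t * Complex.I)) * W t := by
    rw [← integral_add_right_eq_self (fun t : ℝ => Complex.exp (-(t * Complex.I)) * W t) π,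
      ← integral_neg]
    simp_rw [exp_neg_add_pi_mul_I, neg_mul, neg_neg]
  simp_rw [mul_sub]
  rw [integral_sub (integrable_exp_neg_mul_I_mul hW)
    (integrable_exp_neg_mul_I_mul (hW.comp_add_right π)), hshift]
  ring

lemma ae_ne_zero_and_add_pi_ne_zero : ∀ᵐ t : ℝ, t ≠ 0 ∧ t + π ≠ 0 := by
  filter_upwards [Measure.ae_ne volume (0 : ℝ), Measure.ae_ne volume (-π)] with t ht ht'
  exact ⟨ht, fun h => ht' (eq_neg_of_add_eq_zero_left h)⟩

lemma half_abs_le_abs_add_pi {t : ℝ} (ht : 2 * π < |t|) : |t| / 2 ≤ |t + π| := by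
  have := abs_sub_abs_le_abs_sub t (-π)
  rw [sub_neg_eq_add, abs_neg, abs_of_pos pi_pos] at this
  linarith

lemma abs_add_pi_rpow_neg_le {a t : ℝ} (ha : 0 ≤ a) (ht : 2 * π < |t|) :
    |t + π| ^ (-a) ≤ 2 ^ a * |t| ^ (-a) := by
  have ht₀ : 0 < |t| := two_pi_pos.trans ht
  calc |t + π| ^ (-a) ≤ (|t| / 2) ^ (-a) :=
        rpow_le_rpow_of_nonpos (by positivity) (half_abs_le_abs_add_pi ht) (by linarith)
    _ = 2 ^ a * |t| ^ (-a) := by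
        rw [div_rpow ht₀.le zero_le_two, rpow_neg zero_le_two, div_inv_eq_mul, mul_comm]

lemma abs_le_and_abs_add_pi_le {b B x t : ℝ} (hx : 0 < x) (hπ : π / x ≤ B - b)
    (h : |t| ≤ b * x ∨ |t + π| ≤ b * x) : |t| ≤ B * x ∧ |t + π| ≤ B * x := by
  rw [div_le_iff₀ hx, sub_mul] at hπ
  have := abs_add_le t π
  have := abs_sub (t + π) π
  rw [add_sub_cancel_right] at this
  rw [abs_of_pos pi_pos] at *
  have := pi_pos
  rcases h with h | h <;> constructor <;> linarith

lemma locallyIntegrable_abs_rpow_neg {a : ℝ} (ha : a < 1) :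
    LocallyIntegrable fun t : ℝ => |t| ^ (-a) := by
  refine locallyIntegrable_of_norm_le_rpow (C := 1) (α := a) (by simp) (by simpa using ha)
    (ae_of_all _ fun t => ?_) (Measurable.aestronglyMeasurable (by fun_prop))
  rw [one_mul, Real.norm_of_nonneg (by positivity), Real.norm_eq_abs]

lemma locallyIntegrable_const_mul_abs_rpow_neg_add_one {a : ℝ} (ha : a < 1) (K : ℝ) :
    LocallyIntegrable fun t : ℝ => K * (|t| ^ (-a) + 1) :=
  ((locallyIntegrable_abs_rpow_neg ha).add (locallyIntegrable_const 1)).smul K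

lemma integrableOn_abs_rpow_neg {a r : ℝ} (hr : 0 < r) (ha : 1 < a) :
    IntegrableOn (fun t : ℝ => |t| ^ (-a)) {t | |t| ≤ r}ᶜ := by
  rw [← integrable_indicator_iff (measurableSet_le measurable_abs measurable_const).compl]
  have h := integrable_fun_norm_addHaar (volume : Measure ℝ)
    (f := (Ioi r).indicator fun y : ℝ => y ^ (-a))
  simp only [Module.finrank_self, tsub_self, pow_zero, one_smul, Real.norm_eq_abs] at h
  refine (h.2 ?_).congr (ae_of_all _ fun t => ?_)
  · exact ((integrable_indicator_iff measurableSet_Ioi).2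
      (integrableOn_Ioi_rpow_of_lt (by linarith) hr)).integrableOn
  · simp only [indicator, mem_Ioi, mem_compl_iff, mem_ofPred_eq, not_le]

/-- The common dominating function for differences `W t - W (t + π)`: here `u` bounds `|W|` and is
only locally integrable, while far from the origin the difference decays like `K |t|⁻ᵇ`. -/
def halfPeriodMajorant (u : ℝ → ℝ) (K b : ℝ) : ℝ → ℝ :=
  {t | |t| ≤ 2 * π}.piecewise (fun t => u t + u (t + π)) fun t => K * |t| ^ (-b)

lemma integrable_halfPeriodMajorant {u : ℝ → ℝ} (hu : LocallyIntegrable u) (K : ℝ) {b : ℝ}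
    (hb : 1 < b) : Integrable (halfPeriodMajorant u K b) := by
  have hball : {t : ℝ | |t| ≤ 2 * π} = Icc (-(2 * π)) (2 * π) := by
    ext t
    exact abs_le (a := t)
  refine Integrable.piecewise (measurableSet_le measurable_abs measurable_const) ?_
    ((integrableOn_abs_rpow_neg two_pi_pos hb).const_mul K)
  rw [hball]
  refine (hu.integrableOn_isCompact isCompact_Icc).add ?_
  have hshift := (measurePreserving_add_right volume π).integrableOn_comp_preimage
    (measurableEmbedding_addRight π) (f := u) (s := Icc (-(2 * π) + π) (2 * π + π))
  rw [preimage_add_const_Icc, add_sub_cancel_right, add_sub_cancel_right] at hshift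
  exact hshift.2 (hu.integrableOn_isCompact isCompact_Icc)

lemma le_halfPeriodMajorant {u : ℝ → ℝ} {K b t d : ℝ} (hnear : d ≤ u t + u (t + π))
    (hfar : 2 * π < |t| → d ≤ K * |t| ^ (-b)) : d ≤ halfPeriodMajorant u K b t := by
  unfold halfPeriodMajorant piecewise
  split_ifs with h
  exacts [hnear, hfar (not_le.1 h)]

/-! ### Scaling limit of the resolvent -/

/-- `C` is the constant in `1 - charFun F θ ∼ C F̄(1/θ)` as `θ ↓ 0`, and the increments of the
characteristic function satisfy the matching uniform bound. -/
structure CharAsymp (F : Measure ℝ) (α : ℝ) (C : ℂ) : Prop where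
  half_lt : 1 / 2 < α
  lt_one : α < 1
  tail : RegTail (rtail F) α
  re_pos : 0 < C.re
  tendsto : Tendsto (fun x : ℝ => (1 - charFun F (1 / x)) / (rtail F x : ℂ)) atTop (𝓝 C)
  modulus : ∃ K > 0, ∀ x > 0, ∀ θ : ℝ, ‖charFun F θ - charFun F (θ + π / x)‖ ≤ K * rtail F x

/-- The exponent of the limiting stable law, whose characteristic function is
`exp (-stableExp α C t)`. -/
def stableExp (α : ℝ) (C : ℂ) (t : ℝ) : ℂ :=
  ((|t| ^ α : ℝ) : ℂ) * if 0 ≤ t then C else (starRingEnd ℂ) C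

/-- The limit of `x F̄(x) ∫ exp (-iθx) (1 - charFun F θ)⁻¹ q(θ) dθ` for `q(0) = 1`. Formally it is
`∫ exp (-it) (stableExp α C t)⁻¹ dt`, an integral which the half-period shift makes absolutely
convergent. -/
def limConst (α : ℝ) (C : ℂ) : ℂ :=
  1 / 2 * ∫ t : ℝ, Complex.exp (-(t * Complex.I))
    * ((stableExp α C t)⁻¹ - (stableExp α C (t + π))⁻¹)

lemma stableExp_of_pos (α : ℝ) (C : ℂ) {t : ℝ} (ht : 0 < t) :
    stableExp α C t = ((t ^ α : ℝ) : ℂ) * C := by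
  rw [stableExp, abs_of_pos ht, if_pos ht.le]

lemma stableExp_neg_of_pos (α : ℝ) (C : ℂ) {t : ℝ} (ht : 0 < t) :
    stableExp α C (-t) = (starRingEnd ℂ) (stableExp α C t) := by
  rw [stableExp_of_pos α C ht, stableExp, abs_neg, abs_of_pos ht, if_neg (by linarith), map_mul,
    Complex.conj_ofReal]

lemma stableExp_re (α : ℝ) (C : ℂ) (t : ℝ) : (stableExp α C t).re = |t| ^ α * C.re := by
  unfold stableExp
  rw [Complex.re_ofReal_mul]
  split_ifs <;> simp

lemma stableExp_re_pos (α : ℝ) {C : ℂ} (hC : 0 < C.re) {t : ℝ} (ht : t ≠ 0) :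
    0 < (stableExp α C t).re := by
  rw [stableExp_re]
  exact mul_pos (rpow_pos_of_pos (abs_pos.2 ht) _) hC

lemma stableExp_ne_zero (α : ℝ) {C : ℂ} (hC : 0 < C.re) {t : ℝ} (ht : t ≠ 0) :
    stableExp α C t ≠ 0 := fun h => by
  have := stableExp_re_pos α hC ht
  rw [h, Complex.zero_re] at this
  exact this.false

lemma stableExp_mul (α : ℝ) (C : ℂ) {s : ℝ} (hs : 0 < s) (t : ℝ) :
    stableExp α C (s * t) = ((s ^ α : ℝ) : ℂ) * stableExp α C t := by
  unfold stableExp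
  simp only [mul_nonneg_iff_of_pos_left hs]
  rw [abs_mul, abs_of_pos hs, mul_rpow hs.le (abs_nonneg _), Complex.ofReal_mul, mul_assoc]

lemma continuous_stableExp {α : ℝ} (hα : 0 < α) (C : ℂ) : Continuous (stableExp α C) := by
  have hsplit : stableExp α C = fun t : ℝ => (((max t 0) ^ α : ℝ) : ℂ) * C
      + (((max (-t) 0) ^ α : ℝ) : ℂ) * (starRingEnd ℂ) C := by
    ext t
    unfold stableExp
    split_ifs with h
    · rw [abs_of_nonneg h, max_eq_left h, max_eq_right (by linarith), zero_rpow hα.ne']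
      simp
    · rw [not_le] at h
      rw [abs_of_neg h, max_eq_right h.le, max_eq_left (by linarith), zero_rpow hα.ne']
      simp
  have hpos : Continuous fun t : ℝ => (max t 0) ^ α :=
    (continuous_id.max continuous_const).rpow_const fun _ => Or.inr hα.le
  have hneg : Continuous fun t : ℝ => (max (-t) 0) ^ α := by
    simpa only [Function.comp_def] using hpos.comp continuous_neg
  rw [hsplit]
  fun_prop

lemma norm_one_sub_charFun_abs (F : Measure ℝ) (θ : ℝ) :
    ‖1 - charFun F |θ|‖ = ‖1 - charFun F θ‖ := by
  rcases abs_choice θ with h | h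
  · rw [h]
  · rw [h, charFun_neg, ← Complex.norm_conj]
    simp

/-- A continuous function supported in `[-b, b]`, the only zero of `1 - charFun F` in a slightly
larger interval `[-B, B]` being the origin. -/
structure IsSymbol (F : Measure ℝ) (q : ℝ → ℂ) : Prop where
  cont : Continuous q
  exists_supp : ∃ b B : ℝ, b < B ∧ 0 < B ∧ (∀ θ, b < |θ| → q θ = 0) ∧
    ∀ θ : ℝ, 0 < |θ| → |θ| ≤ B → charFun F θ ≠ 1

namespace IsSymbol

variable {F : Measure ℝ} {q : ℝ → ℂ}

lemma hasCompactSupport (hq : IsSymbol F q) : HasCompactSupport q := by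
  obtain ⟨b, B, -, -, hsupp, -⟩ := hq.exists_supp
  refine HasCompactSupport.intro (isCompact_Icc (a := -b) (b := b)) fun θ hθ => hsupp θ ?_
  exact not_le.1 fun h => hθ (abs_le.1 h)

lemma integrable (hq : IsSymbol F q) : Integrable q :=
  hq.cont.integrable_of_hasCompactSupport hq.hasCompactSupport

lemma exists_bound (hq : IsSymbol F q) : ∃ M, ∀ θ, ‖q θ‖ ≤ M :=
  hq.hasCompactSupport.exists_bound_of_continuous hq.cont

end IsSymbol

lemma norm_sub_le_of_lipschitzWith {q : ℝ → ℂ} {L : ℝ≥0} (hL : LipschitzWith L q) {B x t : ℝ}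
    (hx : 0 < x) (ht₀ : 0 < |t|) (ht : |t| ≤ B * x) :
    ‖q (t / x) - q ((t + π) / x)‖ ≤ L * π * B * |t|⁻¹ := by
  have hdist : ‖t / x - (t + π) / x‖ = π / x := by
    rw [← sub_div, Real.norm_eq_abs, abs_div, abs_of_pos hx, sub_add_cancel_left, abs_neg,
      abs_of_pos pi_pos]
  have hinv : x⁻¹ ≤ B * |t|⁻¹ := by
    rwa [← div_eq_mul_inv, inv_eq_one_div, div_le_div_iff₀ hx ht₀, one_mul]
  calc ‖q (t / x) - q ((t + π) / x)‖ ≤ L * (π * x⁻¹) := by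
        rw [← div_eq_mul_inv, ← hdist]
        exact hL.norm_sub_le _ _
    _ ≤ L * (π * (B * |t|⁻¹)) := by gcongr
    _ = _ := by ring

/-- The resolvent `(1 - charFun F θ)⁻¹` at frequency `θ = t / x`, normalized to have a limit as
`x → ∞`. -/
def scaledResolvent (F : Measure ℝ) (x t : ℝ) : ℂ := (rtail F x : ℂ) * (1 - charFun F (t / x))⁻¹

/-- The normalized resolvent localized by the symbol `q`. -/
def localResolvent (F : Measure ℝ) (q : ℝ → ℂ) (x t : ℝ) : ℂ := q (t / x) * scaledResolvent F x t

lemma measurable_localResolvent (F : Measure ℝ) [IsFiniteMeasure F] {q : ℝ → ℂ}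
    (hq : Measurable q) (x : ℝ) : Measurable (localResolvent F q x) := by
  have hdiv : Measurable fun t : ℝ => t / x := by fun_prop
  exact (hq.comp hdiv).mul (((measurable_const.sub
    (continuous_charFun.measurable.comp hdiv)).inv).const_mul _)

lemma norm_scaledResolvent (F : Measure ℝ) (x t : ℝ) :
    ‖scaledResolvent F x t‖ = rtail F x * ‖1 - charFun F (t / x)‖⁻¹ := by
  have hG : 0 ≤ rtail F x := ENNReal.toReal_nonneg
  rw [scaledResolvent, norm_mul, norm_inv, Complex.norm_real, Real.norm_of_nonneg hG]

-- The increment of the resolvent is a product of two resolvents. This doubles the decay exponent,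
-- and `1 < 2 * α` makes the half-period difference integrable.
lemma scaledResolvent_sub {F : Measure ℝ} {x t s : ℝ} (hG : rtail F x ≠ 0)
    (ht : charFun F (t / x) ≠ 1)
    (hs : charFun F (s / x) ≠ 1) :
    scaledResolvent F x t - scaledResolvent F x s
      = (charFun F (t / x) - charFun F (s / x)) / rtail F x
        * (scaledResolvent F x t * scaledResolvent F x s) := by
  have hG' := Complex.ofReal_ne_zero.2 hG
  have ht' := sub_ne_zero.2 ht.symm
  have hs' := sub_ne_zero.2 hs.symm
  unfold scaledResolvent
  field_simp
  ring

namespace CharAsymp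

variable {F : Measure ℝ} {α : ℝ} {C : ℂ} {q : ℝ → ℂ}

lemma pos (hF : CharAsymp F α C) : 0 < α := by linarith [hF.half_lt]

lemma tendsto_ratio_of_pos (hF : CharAsymp F α C) {t : ℝ} (ht : 0 < t) :
    Tendsto (fun x : ℝ => (1 - charFun F (t / x)) / (rtail F x : ℂ)) atTop
      (𝓝 (stableExp α C t)) := by
  have hcharFun := hF.tendsto.comp (tendsto_id.const_mul_atTop (inv_pos.2 ht))
  have htail := (Complex.continuous_ofReal.tendsto _).comp (hF.tail.ratio (inv_pos.2 ht))
  have hlim := htail.mul hcharFun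
  rw [inv_rpow ht.le, rpow_neg ht.le, inv_inv, ← stableExp_of_pos α C ht] at hlim
  refine hlim.congr fun x => ?_
  have := Complex.ofReal_ne_zero.2 (hF.tail.pos (t⁻¹ * x)).ne'
  simp only [Function.comp, id, Complex.ofReal_div]
  rw [one_div, mul_inv, inv_inv, ← div_eq_mul_inv, div_mul_div_cancel₀' this]

lemma tendsto_ratio (hF : CharAsymp F α C) {t : ℝ} (ht : t ≠ 0) :
    Tendsto (fun x : ℝ => (1 - charFun F (t / x)) / (rtail F x : ℂ)) atTop
      (𝓝 (stableExp α C t)) := by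
  rcases ht.lt_or_gt with h | h
  · have ht' : 0 < -t := neg_pos.2 h
    have hconj := (Complex.continuous_conj.tendsto _).comp (hF.tendsto_ratio_of_pos ht')
    rw [← stableExp_neg_of_pos α C ht', neg_neg] at hconj
    refine hconj.congr fun x => ?_
    simp only [Function.comp, map_div₀, map_sub, map_one, Complex.conj_ofReal]
    rw [← charFun_neg, neg_div, neg_neg]
  · exact hF.tendsto_ratio_of_pos h

lemma tendsto_localResolvent (hF : CharAsymp F α C) (hq : Continuous q) {t : ℝ} (ht : t ≠ 0) :
    Tendsto (fun x => localResolvent F q x t) atTop (𝓝 (q 0 * (stableExp α C t)⁻¹)) := by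
  have hdiv : Tendsto (fun x : ℝ => t / x) atTop (𝓝 0) :=
    tendsto_const_nhds.div_atTop tendsto_id
  refine ((hq.tendsto 0).comp hdiv).mul ?_
  refine ((hF.tendsto_ratio ht).inv₀ (stableExp_ne_zero α hF.re_pos ht)).congr fun x => ?_
  rw [inv_div, div_eq_mul_inv, scaledResolvent]

lemma exists_norm_scaledResolvent_sub_le (hF : CharAsymp F α C) :
    ∃ K > 0, ∀ x > 0, ∀ t, charFun F (t / x) ≠ 1 → charFun F ((t + π) / x) ≠ 1 →
      ‖scaledResolvent F x t - scaledResolvent F x (t + π)‖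
        ≤ K * (‖scaledResolvent F x t‖ * ‖scaledResolvent F x (t + π)‖) := by
  obtain ⟨K, hK, hmod⟩ := hF.modulus
  refine ⟨K, hK, fun x hx t ht htπ => ?_⟩
  have hG := hF.tail.pos x
  rw [scaledResolvent_sub hG.ne' ht htπ, norm_mul, norm_mul, norm_div, Complex.norm_real,
    Real.norm_of_nonneg hG.le]
  refine mul_le_mul_of_nonneg_right ((div_le_iff₀ hG).2 ?_) (by positivity)
  rw [add_div]
  exact hmod x hx _

variable [IsProbabilityMeasure F]

lemma exists_mul_rtail_le_norm_one_sub_charFun (hF : CharAsymp F α C) {B : ℝ}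
    (hB : ∀ θ : ℝ, 0 < |θ| → |θ| ≤ B → charFun F θ ≠ 1) :
    ∃ c > 0, ∀ θ : ℝ, 0 < |θ| → |θ| ≤ B → c * rtail F (1 / |θ|) ≤ ‖1 - charFun F θ‖ := by
  have hC : C.re / 2 < ‖C‖ := by linarith [hF.re_pos, Complex.re_le_norm C]
  obtain ⟨N, hN⟩ := eventually_atTop.1
    ((hF.tendsto.norm.eventually (lt_mem_nhds hC)).and (eventually_gt_atTop 0))
  have hN₀ : 0 < N := (hN N le_rfl).2
  obtain ⟨m, hm₀, hm⟩ : ∃ m > 0, ∀ θ ∈ Icc (1 / N) B, m ≤ ‖1 - charFun F θ‖ := by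
    refine isCompact_Icc.exists_forall_le' (f := fun θ => ‖1 - charFun F θ‖)
      (continuous_const.sub continuous_charFun).norm.continuousOn fun θ hθ => ?_
    have hθ₀ : 0 < θ := (one_div_pos.2 hN₀).trans_le hθ.1
    rw [← abs_of_pos hθ₀] at hθ
    exact norm_pos_iff.2 (sub_ne_zero.2 (hB θ (abs_pos.2 hθ₀.ne') hθ.2).symm)
  refine ⟨min (C.re / 2) m, lt_min (half_pos hF.re_pos) hm₀, fun θ hθ₀ hθB => ?_⟩
  rw [← norm_one_sub_charFun_abs]
  have hG := hF.tail.pos (1 / |θ|)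
  rcases le_total N (1 / |θ|) with h | h
  · have hratio := (hN _ h).1
    rw [one_div_one_div, norm_div, Complex.norm_real, Real.norm_of_nonneg hG.le,
      lt_div_iff₀ hG] at hratio
    exact (mul_le_mul_of_nonneg_right (min_le_left _ _) hG.le).trans hratio.le
  · calc _ ≤ m * 1 := mul_le_mul (min_le_right _ _) (rtail_le_one F _) hG.le hm₀.le
      _ ≤ _ := by
        rw [mul_one]
        exact hm _ ⟨(one_div_le hN₀ hθ₀).2 h, hθB⟩

lemma exists_norm_scaledResolvent_le_div (hF : CharAsymp F α C) {B : ℝ}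
    (hB : ∀ θ : ℝ, 0 < |θ| → |θ| ≤ B → charFun F θ ≠ 1) :
    ∃ K > 0, ∀ x > 0, ∀ t ≠ 0, |t| ≤ B * x →
      ‖scaledResolvent F x t‖ ≤ K * (rtail F x / rtail F (x / |t|)) := by
  obtain ⟨c, hc, hlow⟩ := hF.exists_mul_rtail_le_norm_one_sub_charFun hB
  refine ⟨c⁻¹, inv_pos.2 hc, fun x hx t ht htB => ?_⟩
  have habs : |t / x| = |t| / x := by rw [abs_div, abs_of_pos hx]
  have hle := hlow (t / x) (by positivity) (by rwa [habs, div_le_iff₀ hx])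
  rw [habs, one_div_div] at hle
  have hGx := hF.tail.pos x
  have hGt := hF.tail.pos (x / |t|)
  calc ‖scaledResolvent F x t‖ ≤ rtail F x * (c * rtail F (x / |t|))⁻¹ := by
        rw [norm_scaledResolvent]
        gcongr
    _ = c⁻¹ * (rtail F x / rtail F (x / |t|)) := by rw [mul_inv]; ring

lemma exists_norm_scaledResolvent_le_add_one (hF : CharAsymp F α C) {B β : ℝ} (hβ : α < β)
    (hB : ∀ θ : ℝ, 0 < |θ| → |θ| ≤ B → charFun F θ ≠ 1) :
    ∃ K > 0, ∀ x > 0, ∀ t, |t| ≤ B * x → ‖scaledResolvent F x t‖ ≤ K * (|t| ^ (-β) + 1) := by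
  obtain ⟨K, hK, hle⟩ := hF.exists_norm_scaledResolvent_le_div hB
  obtain ⟨M, hM, hscale⟩ := hF.tail.exists_scaled_le (hF.pos.trans hβ).le hβ
  refine ⟨K * (M + 1), by positivity, fun x hx t htB => ?_⟩
  rcases eq_or_ne t 0 with rfl | ht
  · simp only [scaledResolvent, zero_div, charFun_zero, probReal_univ, Complex.ofReal_one,
      sub_self, inv_zero, mul_zero, norm_zero]
    positivity
  have ht₀ : 0 < |t| := abs_pos.2 ht
  have hratio := hscale |t| ht₀ (x / |t|) (div_pos hx ht₀)
  rw [mul_div_cancel₀ _ ht₀.ne', ← div_le_iff₀ (hF.tail.pos _)] at hratio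
  calc _ ≤ K * (rtail F x / rtail F (x / |t|)) := hle x hx t ht htB
    _ ≤ K * (M * |t| ^ (-β) + 1) := by gcongr
    _ ≤ K * ((M + 1) * (|t| ^ (-β) + 1)) := by
        have : 0 ≤ |t| ^ (-β) := by positivity
        gcongr
        linarith
    _ = _ := by ring

lemma exists_norm_scaledResolvent_le_rpow (hF : CharAsymp F α C) {B β : ℝ} (hB₀ : 0 < B)
    (hβ₀ : 0 ≤ β) (hβ : β < α) (hB : ∀ θ : ℝ, 0 < |θ| → |θ| ≤ B → charFun F θ ≠ 1) :
    ∃ K > 0, ∀ x > 0, ∀ t, 1 ≤ |t| → |t| ≤ B * x →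
      ‖scaledResolvent F x t‖ ≤ K * |t| ^ (-β) := by
  obtain ⟨K, hK, hle⟩ := hF.exists_norm_scaledResolvent_le_div hB
  obtain ⟨M, hM, hpotter⟩ := hF.tail.potter_upper hβ₀ hβ (one_div_pos.2 hB₀)
  refine ⟨K * M, by positivity, fun x hx t ht htB => ?_⟩
  have ht₀ : 0 < |t| := one_pos.trans_le ht
  have hratio := hpotter (x / |t|)
    (by rw [ge_iff_le, div_le_div_iff₀ hB₀ ht₀, one_mul, mul_comm]; exact htB)
    x (div_le_self hx.le ht)
  rw [div_div_cancel₀ hx.ne', ← div_le_iff₀ (hF.tail.pos _)] at hratio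
  calc _ ≤ K * (rtail F x / rtail F (x / |t|)) := hle x hx t (abs_pos.1 ht₀) htB
    _ ≤ K * (M * |t| ^ (-β)) := by gcongr
    _ = _ := by ring

lemma exists_norm_localResolvent_le (hF : CharAsymp F α C) (hq : IsSymbol F q) {β : ℝ}
    (hβ : α < β) : ∃ K, ∀ x > 0, ∀ t, ‖localResolvent F q x t‖ ≤ K * (|t| ^ (-β) + 1) := by
  obtain ⟨b, B, hbB, -, hsupp, hB⟩ := hq.exists_supp
  obtain ⟨M, hM⟩ := hq.exists_bound
  have hM₀ : 0 ≤ M := (norm_nonneg _).trans (hM 0)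
  obtain ⟨K, hK, hle⟩ := hF.exists_norm_scaledResolvent_le_add_one hβ hB
  refine ⟨M * K, fun x hx t => ?_⟩
  rw [localResolvent, norm_mul, mul_assoc]
  rcases le_or_gt |t| (B * x) with h | h
  · exact mul_le_mul (hM _) (hle x hx t h) (norm_nonneg _) hM₀
  · rw [hsupp (t / x) (hbB.trans (by rwa [abs_div, abs_of_pos hx, lt_div_iff₀ hx])), norm_zero,
      zero_mul]
    positivity

lemma integrable_localResolvent (hF : CharAsymp F α C) (hq : IsSymbol F q) {x : ℝ} (hx : 0 < x) :
    Integrable (localResolvent F q x) := by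
  obtain ⟨β, hβ, hβ₁⟩ := exists_between hF.lt_one
  obtain ⟨K, hK⟩ := hF.exists_norm_localResolvent_le hq hβ
  obtain ⟨b, B, -, -, hsupp, -⟩ := hq.exists_supp
  have hsubset : Function.support (localResolvent F q x) ⊆ Icc (-(b * x)) (b * x) := by
    intro t ht
    rw [mem_Icc, ← abs_le]
    by_contra! h
    refine ht ?_
    rw [localResolvent, hsupp _ (by rwa [abs_div, abs_of_pos hx, lt_div_iff₀ hx]), zero_mul]
  rw [← integrableOn_iff_integrable_of_support_subset hsubset]
  refine ((locallyIntegrable_const_mul_abs_rpow_neg_add_one hβ₁ K).integrableOn_isCompact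
    isCompact_Icc).mono'
    (measurable_localResolvent F hq.cont.measurable x).aestronglyMeasurable
    (ae_of_all _ (hK x hx))

lemma exists_norm_scaledResolvent_sub_le_rpow (hF : CharAsymp F α C) {B β : ℝ} (hB₀ : 0 < B)
    (hβ₀ : 0 ≤ β) (hβ : β < α) (hB : ∀ θ : ℝ, 0 < |θ| → |θ| ≤ B → charFun F θ ≠ 1) :
    ∃ K > 0, ∀ x > 0, ∀ t, 2 * π < |t| → |t| ≤ B * x → |t + π| ≤ B * x →
      ‖scaledResolvent F x t - scaledResolvent F x (t + π)‖ ≤ K * |t| ^ (-(2 * β)) := by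
  obtain ⟨K, hK, hres⟩ := hF.exists_norm_scaledResolvent_le_rpow hB₀ hβ₀ hβ hB
  obtain ⟨K', hK', hsub⟩ := hF.exists_norm_scaledResolvent_sub_le
  refine ⟨K' * (K * (K * 2 ^ β)), by positivity, fun x hx t ht htB htπB => ?_⟩
  have ht₁ : 2 ≤ |t| := by linarith [pi_gt_three]
  have ht₀ : 0 < |t| := by linarith
  have htπ₁ : 1 ≤ |t + π| := by linarith [half_abs_le_abs_add_pi ht]
  have hne : ∀ s : ℝ, 0 < |s| → |s| ≤ B * x → charFun F (s / x) ≠ 1 := fun s hs hsB =>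
    hB _ (by rw [abs_div, abs_of_pos hx]; positivity)
      (by rwa [abs_div, abs_of_pos hx, div_le_iff₀ hx])
  calc _ ≤ K' * (‖scaledResolvent F x t‖ * ‖scaledResolvent F x (t + π)‖) :=
        hsub x hx t (hne t ht₀ htB) (hne _ (by linarith) htπB)
    _ ≤ K' * ((K * |t| ^ (-β)) * (K * (2 ^ β * |t| ^ (-β)))) := by
        gcongr
        · exact hres x hx t (by linarith) htB
        · exact (hres x hx _ htπ₁ htπB).trans (by gcongr; exact abs_add_pi_rpow_neg_le hβ₀ ht)
    _ = _ := by
        rw [show -(2 * β) = -β + -β by ring, rpow_add ht₀]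
        ring

lemma exists_norm_localResolvent_sub_le (hF : CharAsymp F α C) (hq : IsSymbol F q) {L : ℝ≥0}
    (hL : LipschitzWith L q) {β : ℝ} (hβ₀ : 0 ≤ β) (hβ : β < α) :
    ∃ K, ∀ᶠ x in atTop, ∀ t, 2 * π < |t| →
      ‖localResolvent F q x t - localResolvent F q x (t + π)‖ ≤ K * |t| ^ (-(2 * β)) := by
  obtain ⟨b, B, hbB, hB₀, hsupp, hB⟩ := hq.exists_supp
  obtain ⟨M, hM⟩ := hq.exists_bound
  have hM₀ : 0 ≤ M := (norm_nonneg _).trans (hM 0)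
  obtain ⟨K, hK, hres⟩ := hF.exists_norm_scaledResolvent_le_rpow hB₀ hβ₀ hβ hB
  obtain ⟨K', hK', hsub⟩ := hF.exists_norm_scaledResolvent_sub_le_rpow hB₀ hβ₀ hβ hB
  have hlarge : ∀ᶠ x : ℝ in atTop, π / x < B - b :=
    (tendsto_const_nhds.div_atTop tendsto_id).eventually (gt_mem_nhds (sub_pos.2 hbB))
  refine ⟨L * π * B * K + M * K', ?_⟩
  filter_upwards [hlarge, eventually_gt_atTop 0] with x hxB hx t ht
  have ht₁ : 1 ≤ |t| := by linarith [pi_gt_three]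
  have ht₀ : 0 < |t| := by linarith
  by_cases hnear : |t| ≤ b * x ∨ |t + π| ≤ b * x
  swap
  · have hvanish : ∀ s, b * x < |s| → q (s / x) = 0 := fun s hs =>
      hsupp _ (by rwa [abs_div, abs_of_pos hx, lt_div_iff₀ hx])
    rw [not_or, not_le, not_le] at hnear
    rw [localResolvent, localResolvent, hvanish t hnear.1, hvanish _ hnear.2, zero_mul, zero_mul,
      sub_zero, norm_zero]
    positivity
  obtain ⟨htB, htπB⟩ := abs_le_and_abs_add_pi_le hx hxB.le hnear
  calc ‖localResolvent F q x t - localResolvent F q x (t + π)‖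
      = ‖(q (t / x) - q ((t + π) / x)) * scaledResolvent F x t
          + q ((t + π) / x) * (scaledResolvent F x t - scaledResolvent F x (t + π))‖ := by
        unfold localResolvent
        ring_nf
    _ ≤ L * π * B * |t|⁻¹ * (K * |t| ^ (-β)) + M * (K' * |t| ^ (-(2 * β))) := by
        refine (norm_add_le _ _).trans ?_
        rw [norm_mul, norm_mul]
        gcongr
        exacts [norm_sub_le_of_lipschitzWith hL hx ht₀ htB, hres x hx t ht₁ htB, hM _,
          hsub x hx t ht htB htπB]
    _ = L * π * B * K * |t| ^ (-1 + -β) + M * (K' * |t| ^ (-(2 * β))) := by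
        rw [rpow_add ht₀, rpow_neg_one]
        ring
    _ ≤ L * π * B * K * |t| ^ (-(2 * β)) + M * (K' * |t| ^ (-(2 * β))) := by
        gcongr 2
        exact rpow_le_rpow_of_exponent_le ht₁ (by linarith [hF.lt_one])
    _ = _ := by ring

lemma tendsto_integral_localResolvent_sub (hF : CharAsymp F α C) (hq : IsSymbol F q) {L : ℝ≥0}
    (hL : LipschitzWith L q) :
    Tendsto (fun x : ℝ => ∫ t : ℝ, Complex.exp (-(t * Complex.I))
        * (localResolvent F q x t - localResolvent F q x (t + π)))
      atTop (𝓝 (∫ t : ℝ, Complex.exp (-(t * Complex.I))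
        * (q 0 * (stableExp α C t)⁻¹ - q 0 * (stableExp α C (t + π))⁻¹))) := by
  obtain ⟨β, hβ, hβα⟩ := exists_between hF.half_lt
  obtain ⟨γ, hαγ, hγ⟩ := exists_between hF.lt_one
  obtain ⟨K, hK⟩ := hF.exists_norm_localResolvent_le hq hαγ
  obtain ⟨K', hK'⟩ := hF.exists_norm_localResolvent_sub_le hq hL (by linarith) hβα
  refine tendsto_integral_filter_of_dominated_convergence
    (halfPeriodMajorant (fun t => K * (|t| ^ (-γ) + 1)) K' (2 * β))
    (Eventually.of_forall fun x => Measurable.aestronglyMeasurable ?_) ?_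
    (integrable_halfPeriodMajorant (locallyIntegrable_const_mul_abs_rpow_neg_add_one hγ K) K'
      (by linarith)) ?_
  · have hmeas := measurable_localResolvent F hq.cont.measurable x
    exact (Continuous.measurable (by fun_prop)).mul
      (hmeas.sub (hmeas.comp (measurable_add_const π)))
  · filter_upwards [hK', eventually_gt_atTop 0] with x hfar hx
    refine ae_of_all _ fun t => le_halfPeriodMajorant ?_ fun ht => ?_
    all_goals rw [norm_mul, norm_exp_neg_mul_I, one_mul]
    exacts [(norm_sub_le _ _).trans (add_le_add (hK x hx t) (hK x hx (t + π))), hfar t ht]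
  · filter_upwards [ae_ne_zero_and_add_pi_ne_zero] with t ht
    exact ((hF.tendsto_localResolvent hq.cont ht.1).sub
      (hF.tendsto_localResolvent hq.cont ht.2)).const_mul _

lemma tendsto_integral_localResolvent (hF : CharAsymp F α C) (hq : IsSymbol F q) {L : ℝ≥0}
    (hL : LipschitzWith L q) :
    Tendsto (fun x : ℝ => ∫ t : ℝ, Complex.exp (-(t * Complex.I)) * localResolvent F q x t)
      atTop (𝓝 (q 0 * limConst α C)) := by
  have hlim := (hF.tendsto_integral_localResolvent_sub hq hL).const_mul (1 / 2 : ℂ)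
  simp_rw [← mul_sub, mul_left_comm _ (q 0)] at hlim
  rw [integral_const_mul, mul_left_comm, ← limConst] at hlim
  refine hlim.congr' ?_
  filter_upwards [eventually_gt_atTop 0] with x hx
  exact (integral_exp_neg_mul_I_mul_eq_half (hF.integrable_localResolvent hq hx)).symm

lemma tendsto_integral_symbol_mul_resolvent (hF : CharAsymp F α C) (hq : IsSymbol F q) {L : ℝ≥0}
    (hL : LipschitzWith L q) :
    Tendsto (fun x : ℝ => ((x * rtail F x : ℝ) : ℂ)
        * ∫ θ : ℝ, q θ * Complex.exp (-(θ * x * Complex.I)) * (1 - charFun F θ)⁻¹)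
      atTop (𝓝 (q 0 * limConst α C)) := by
  refine (hF.tendsto_integral_localResolvent hq hL).congr' ?_
  filter_upwards [eventually_gt_atTop 0] with x hx
  have hscale := Measure.integral_comp_div
    (fun θ : ℝ => q θ * Complex.exp (-(θ * x * Complex.I)) * (1 - charFun F θ)⁻¹) x
  rw [abs_of_pos hx, Complex.real_smul] at hscale
  rw [Complex.ofReal_mul, mul_right_comm, ← hscale, mul_comm, ← integral_const_mul]
  congr 1 with t
  rw [localResolvent, scaledResolvent, Complex.ofReal_div,
    div_mul_cancel₀ _ (Complex.ofReal_ne_zero.2 hx.ne')]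
  ring

end CharAsymp

/-! ### Convolution powers -/

lemma mconv_eq_conv (μ ν : Measure ℝ) [SFinite ν] : mconv μ ν = μ.conv ν := by
  have hprod : Measurable fun x : ℝ => ν.map (Prod.mk x : ℝ → ℝ × ℝ) :=
    Measurable.map_prodMk_left
  have hmap : (fun x : ℝ => ν.map fun y => x + y)
      = fun x => (ν.map (Prod.mk x)).map fun p : ℝ × ℝ => p.1 + p.2 :=
    funext fun x => (Measure.map_map measurable_add measurable_prodMk_left).symm
  have hsum : Measurable fun x : ℝ => (ν.map (Prod.mk x)).map fun p : ℝ × ℝ => p.1 + p.2 :=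
    (Measure.measurable_map _ measurable_add).comp hprod
  ext s hs
  rw [mconv, hmap, Measure.conv, Measure.map_apply measurable_add hs, Measure.prod,
    Measure.bind_apply hs hsum.aemeasurable,
    Measure.bind_apply (measurable_add hs) hprod.aemeasurable]
  exact lintegral_congr fun x => Measure.map_apply measurable_add hs

instance isProbabilityMeasure_convPow (F : Measure ℝ) [IsProbabilityMeasure F] (n : ℕ) :
    IsProbabilityMeasure (convPow F n) := by
  induction n with
  | zero => rw [convPow]; infer_instance
  | succ n ih => rw [convPow, mconv_eq_conv]; infer_instance

lemma charFun_convPow (F : Measure ℝ) [IsProbabilityMeasure F] (n : ℕ) (t : ℝ) :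
    charFun (convPow F n) t = charFun F t ^ n := by
  induction n with
  | zero => simp [convPow, charFun_dirac]
  | succ n ih => rw [convPow, mconv_eq_conv, charFun_conv, ih, pow_succ]

lemma charFun_map_div (μ : Measure ℝ) (a t : ℝ) :
    charFun (μ.map fun y => y / a) t = charFun μ (t / a) := by
  simpa only [inv_mul_eq_div] using charFun_map_mul (μ := μ) a⁻¹ t

/-! ### Norming constants -/

lemma RegTail.tendsto_zero {G : ℝ → ℝ} {α : ℝ} (hG : RegTail G α) (hα : 0 < α) :
    Tendsto G atTop (𝓝 0) := by
  obtain ⟨β, hβ₀, hβ⟩ := exists_between hα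
  obtain ⟨K, -, hK⟩ := hG.potter_upper hβ₀.le hβ one_pos
  have hbound : Tendsto (fun x : ℝ => K * x ^ (-β) * G 1) atTop (𝓝 0) := by
    simpa using ((tendsto_rpow_neg_atTop hβ₀).const_mul K).mul_const (G 1)
  refine squeeze_zero' (Eventually.of_forall fun x => (hG.pos x).le) ?_ hbound
  filter_upwards [eventually_ge_atTop 1] with x hx
  simpa using hK 1 le_rfl x hx

section Norming

variable {F : Measure ℝ} {ℓ : ℝ → ℝ} {α : ℝ}

lemma RightTail.tendsto_atTop (hRT : RightTail F ℓ) (hG : RegTail (rtail F) α) (hα : 0 < α) :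
    Tendsto ℓ atTop atTop := by
  have hinv : Tendsto (fun x => (rtail F x)⁻¹) atTop atTop :=
    (tendsto_nhdsWithin_iff.2 ⟨hG.tendsto_zero hα,
      Eventually.of_forall hG.pos⟩).inv_tendsto_nhdsGT_zero
  refine (Tendsto.pos_mul_atTop one_pos hRT hinv).congr fun x => ?_
  field_simp [(hG.pos x).ne']

lemma linv_set_nonempty (hℓ : Tendsto ℓ atTop atTop) (x : ℝ) :
    {t : ℝ | 1 ≤ t ∧ x < ℓ t}.Nonempty :=
  ((eventually_ge_atTop 1).and (hℓ.eventually_gt_atTop x)).exists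

lemma linv_set_bddBelow (ℓ : ℝ → ℝ) (x : ℝ) : BddBelow {t : ℝ | 1 ≤ t ∧ x < ℓ t} :=
  ⟨1, fun _ ht => ht.1⟩

lemma one_le_linv (hℓ : Tendsto ℓ atTop atTop) (x : ℝ) : 1 ≤ linv ℓ x :=
  le_csInf (linv_set_nonempty hℓ x) fun _ ht => ht.1

lemma monotone_linv (hℓ : Tendsto ℓ atTop atTop) : Monotone (linv ℓ) := fun x y hxy =>
  csInf_le_csInf (linv_set_bddBelow ℓ x) (linv_set_nonempty hℓ y) fun _ ht =>
    ⟨ht.1, hxy.trans_lt ht.2⟩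

lemma le_of_lt_linv {x t : ℝ} (ht : 1 ≤ t) (htx : t < linv ℓ x) : ℓ t ≤ x := by
  by_contra! hlt
  exact htx.not_ge (csInf_le (linv_set_bddBelow ℓ x) ⟨ht, hlt⟩)

lemma exists_mem_Ico_lt_of_linv_lt (hℓ : Tendsto ℓ atTop atTop) {x y : ℝ}
    (hy : linv ℓ x < y) : ∃ t ∈ Ico (linv ℓ x) y, x < ℓ t := by
  obtain ⟨t, ht, hty⟩ := exists_lt_of_csInf_lt (linv_set_nonempty hℓ x) hy
  exact ⟨t, ⟨csInf_le (linv_set_bddBelow ℓ x) ht, hty⟩, ht.2⟩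

lemma RegTail.tendsto_div_mul_left {G : ℝ → ℝ} (hG : RegTail G α) {c : ℝ} (hc : 0 < c) :
    Tendsto (fun x => G x / G (c * x)) atTop (𝓝 (c ^ α)) := by
  have := (hG.ratio hc).inv₀ (rpow_pos_of_pos hc _).ne'
  simpa only [inv_div, rpow_neg hc.le, inv_inv] using this

/- Strictly below `linv ℓ x` the function `ℓ` is at most `x`, and just above it `ℓ` exceeds `x`
somewhere. Comparing at `c * linv ℓ x` costs a factor `c ^ α` by regular variation. -/
lemma eventually_lt_mul_rtail_linv (hG : RegTail (rtail F) α) (hα : 0 < α)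
    (hRT : RightTail F ℓ) {u : ℕ → ℝ} (ha : Tendsto (fun n => linv ℓ (u n)) atTop atTop)
    {c : ℝ} (hc₀ : 0 < c) (hc : c < 1) :
    ∀ᶠ n in atTop, c * c ^ (2 * α) < u n * rtail F (linv ℓ (u n)) := by
  have hℓ := hRT.tendsto_atTop hG hα
  have hca : Tendsto (fun n => c * linv ℓ (u n)) atTop atTop := ha.const_mul_atTop hc₀
  have hpow : c ^ (2 * α) < c ^ α := rpow_lt_rpow_of_exponent_gt hc₀ hc (by linarith)
  filter_upwards [hca.eventually (hRT.eventually (lt_mem_nhds hc)),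
    ((hG.tendsto_div_mul_left hc₀).comp ha).eventually (lt_mem_nhds hpow),
    hca.eventually_ge_atTop 1] with n hℓc hratio hge
  have hGc := hG.pos (c * linv ℓ (u n))
  have hle : ℓ (c * linv ℓ (u n)) ≤ u n :=
    le_of_lt_linv hge (mul_lt_of_lt_one_left (one_pos.trans_le (one_le_linv hℓ _)) hc)
  calc c * c ^ (2 * α)
      < (rtail F (c * linv ℓ (u n)) * ℓ (c * linv ℓ (u n)))
          * (rtail F (linv ℓ (u n)) / rtail F (c * linv ℓ (u n))) :=
        mul_lt_mul'' hℓc hratio hc₀.le (by positivity)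
    _ = ℓ (c * linv ℓ (u n)) * rtail F (linv ℓ (u n)) := by field_simp
    _ ≤ u n * rtail F (linv ℓ (u n)) := mul_le_mul_of_nonneg_right hle (hG.pos _).le

lemma eventually_mul_rtail_linv_lt (hG : RegTail (rtail F) α) (hα : 0 < α)
    (hRT : RightTail F ℓ) {u : ℕ → ℝ} (hu : ∀ n, 0 ≤ u n)
    (ha : Tendsto (fun n => linv ℓ (u n)) atTop atTop) {c : ℝ} (hc : 1 < c) :
    ∀ᶠ n in atTop, u n * rtail F (linv ℓ (u n)) < c * c ^ (2 * α) := by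
  have hℓ := hRT.tendsto_atTop hG hα
  have hc₀ : 0 < c := one_pos.trans hc
  have hpow : c ^ α < c ^ (2 * α) := rpow_lt_rpow_of_exponent_lt hc (by linarith)
  have hlt : ∀ᶠ x in atTop, ∀ y ≥ x, rtail F y * ℓ y < c :=
    eventually_forall_ge_atTop.2 (hRT.eventually (gt_mem_nhds hc))
  filter_upwards [ha.eventually hlt,
    ((hG.tendsto_div_mul_left hc₀).comp ha).eventually (gt_mem_nhds hpow)] with n hℓc hratio
  have hGa := hG.pos (linv ℓ (u n))
  have hGc := hG.pos (c * linv ℓ (u n))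
  obtain ⟨t, ⟨hat, htc⟩, hut⟩ := exists_mem_Ico_lt_of_linv_lt hℓ
    (lt_mul_of_one_lt_left (one_pos.trans_le (one_le_linv hℓ (u n))) hc)
  have hle : u n * rtail F (c * linv ℓ (u n)) ≤ c :=
    calc u n * rtail F (c * linv ℓ (u n)) ≤ ℓ t * rtail F t :=
          mul_le_mul hut.le (hG.anti htc.le) hGc.le ((hu n).trans hut.le)
      _ ≤ c := by rw [mul_comm]; exact (hℓc t hat).le
  calc u n * rtail F (linv ℓ (u n))
      = (u n * rtail F (c * linv ℓ (u n)))
          * (rtail F (linv ℓ (u n)) / rtail F (c * linv ℓ (u n))) := by field_simp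
    _ ≤ c * (rtail F (linv ℓ (u n)) / rtail F (c * linv ℓ (u n))) := by gcongr
    _ < c * c ^ (2 * α) := mul_lt_mul_of_pos_left hratio hc₀

lemma tendsto_mul_rtail_linv (hG : RegTail (rtail F) α) (hα : 0 < α) (hRT : RightTail F ℓ)
    {u : ℕ → ℝ} (hu : ∀ n, 0 ≤ u n) (ha : Tendsto (fun n => linv ℓ (u n)) atTop atTop) :
    Tendsto (fun n => u n * rtail F (linv ℓ (u n))) atTop (𝓝 1) := by
  have hcont : Tendsto (fun c : ℝ => c * c ^ (2 * α)) (𝓝 1) (𝓝 1) := by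
    have : ContinuousAt (fun c : ℝ => c * c ^ (2 * α)) 1 :=
      continuousAt_id.mul (continuousAt_rpow_const _ _ (Or.inl one_ne_zero))
    simpa [ContinuousAt] using this
  refine tendsto_order.2 ⟨fun b hb => ?_, fun b hb => ?_⟩
  · obtain ⟨c, hbc, hc⟩ := ((hcont.mono_left nhdsWithin_le_nhds).eventually
      (lt_mem_nhds hb) |>.and (Ioo_mem_nhdsLT (zero_lt_one' ℝ))).exists
    filter_upwards [eventually_lt_mul_rtail_linv hG hα hRT ha hc.1 hc.2] with n hn
    exact hbc.trans hn
  · obtain ⟨c, hcb, hc⟩ := ((hcont.mono_left nhdsWithin_le_nhds).eventually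
      (gt_mem_nhds hb) |>.and (self_mem_nhdsWithin (s := Ioi (1 : ℝ)))).exists
    filter_upwards [eventually_mul_rtail_linv_lt hG hα hRT hu ha hc] with n hn
    exact hn.trans hcb

end Norming

/-! ### The limiting characteristic function -/

/-- The characteristic function of the law with density `g`, that is, the Fourier transform of `g`
in the probabilistic normalization. -/
def densChar (g : ℝ → ℝ) (t : ℝ) : ℂ := ∫ u : ℝ, Complex.exp (t * u * Complex.I) * (g u : ℂ)

section Limit

variable {F : Measure ℝ} {ℓ : ℝ → ℝ} {α : ℝ} {C : ℂ} {g : ℝ → ℝ}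

lemma integrable_exp_mul_density (hg : Integrable g) (t : ℝ) :
    Integrable fun u : ℝ => Complex.exp (t * u * Complex.I) * (g u : ℂ) := by
  refine hg.ofReal.bdd_mul (c := 1) (Continuous.aestronglyMeasurable (by fun_prop))
    (ae_of_all _ fun u => ?_)
  rw [← Complex.ofReal_mul, Complex.norm_exp_ofReal_mul_I]

lemma continuous_densChar (hg : Integrable g) : Continuous (densChar g) := by
  refine continuous_of_dominated (bound := fun u => ‖g u‖)
    (fun t => (integrable_exp_mul_density hg t).aestronglyMeasurable)
    (fun t => ae_of_all _ fun u => ?_) hg.norm (ae_of_all _ fun u => by fun_prop)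
  rw [norm_mul, ← Complex.ofReal_mul, Complex.norm_exp_ofReal_mul_I, one_mul, Complex.norm_real]

lemma densChar_zero (hg : ∫ u, g u = 1) : densChar g 0 = 1 := by
  simp [densChar, integral_complex_ofReal, hg]

lemma tendsto_charFun_densChar {μ : ℕ → Measure ℝ} [∀ n, IsFiniteMeasure (μ n)]
    (hg : Integrable g) (hμ : ∀ f : BoundedContinuousFunction ℝ ℝ,
      Tendsto (fun n => ∫ x, f x ∂μ n) atTop (𝓝 (∫ x, f x * g x))) (t : ℝ) :
    Tendsto (fun n => charFun (μ n) t) atTop (𝓝 (densChar g t)) := by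
  let fcos : BoundedContinuousFunction ℝ ℝ := .ofNormedAddCommGroup
    (fun u => cos (t * u)) (by fun_prop) 1 fun u => Real.abs_cos_le_one _
  let fsin : BoundedContinuousFunction ℝ ℝ := .ofNormedAddCommGroup
    (fun u => sin (t * u)) (by fun_prop) 1 fun u => Real.abs_sin_le_one _
  have hre (u : ℝ) : (Complex.exp (t * u * Complex.I)).re = fcos u := by
    rw [← Complex.ofReal_mul, Complex.exp_ofReal_mul_I_re]; rfl
  have him (u : ℝ) : (Complex.exp (t * u * Complex.I)).im = fsin u := by
    rw [← Complex.ofReal_mul, Complex.exp_ofReal_mul_I_im]; rfl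
  have hsum := ((Complex.continuous_ofReal.tendsto _).comp (hμ fcos)).add
    (((Complex.continuous_ofReal.tendsto _).comp (hμ fsin)).mul_const Complex.I)
  convert hsum using 1
  · ext n
    rw [charFun_apply_real, ← integral_re_add_im (integrable_exp_mul_mul_I (μ n) t)]
    simp [hre, him]
  · rw [densChar, ← integral_re_add_im (integrable_exp_mul_density hg t)]
    simp [hre, him]

instance isProbabilityMeasure_map_div (μ : Measure ℝ) [IsProbabilityMeasure μ] (a : ℝ) :
    IsProbabilityMeasure (μ.map fun y => y / a) :=
  Measure.isProbabilityMeasure_map (by fun_prop)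

lemma StableLimit.integral_eq_one [IsProbabilityMeasure F] (hg : StableLimit F ℓ g) :
    ∫ u, g u = 1 := by
  have hlim := hg (.const ℝ 1)
  simp only [BoundedContinuousFunction.const_apply, integral_const, probReal_univ, smul_eq_mul,
    mul_one, one_mul] at hlim
  exact tendsto_nhds_unique hlim tendsto_const_nhds

lemma StableLimit.integrable [IsProbabilityMeasure F] (hg : StableLimit F ℓ g) :
    Integrable g :=
  Integrable.of_integral_ne_zero (hg.integral_eq_one ▸ one_ne_zero)

lemma StableLimit.tendsto_charFun [IsProbabilityMeasure F] (hg : StableLimit F ℓ g) (t : ℝ) :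
    Tendsto (fun n : ℕ => charFun F (t / linv ℓ n) ^ n) atTop (𝓝 (densChar g t)) := by
  simpa only [charFun_map_div, charFun_convPow] using
    tendsto_charFun_densChar hg.integrable hg t

lemma CharAsymp.eventually_norm_charFun_lt_one (hF : CharAsymp F α C) :
    ∀ᶠ x : ℝ in atTop, ‖charFun F (1 / x)‖ < 1 := by
  have hlim : Tendsto (fun x : ℝ => 2 * ((1 - charFun F (1 / x)) / (rtail F x : ℂ)).re
      - rtail F x * ‖(1 - charFun F (1 / x)) / (rtail F x : ℂ)‖ ^ 2) atTop
      (𝓝 (2 * C.re - 0 * ‖C‖ ^ 2)) :=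
    (((Complex.continuous_re.tendsto C).comp hF.tendsto).const_mul 2).sub
      ((hF.tail.tendsto_zero hF.pos).mul (hF.tendsto.norm.pow 2))
  have hpos : (0 : ℝ) < 2 * C.re - 0 * ‖C‖ ^ 2 := by linarith [hF.re_pos]
  filter_upwards [hlim.eventually (lt_mem_nhds hpos)] with x hx
  have hG := hF.tail.pos x
  have hsq : ‖charFun F (1 / x)‖ ^ 2
      = 1 - (2 * (1 - charFun F (1 / x)).re - ‖1 - charFun F (1 / x)‖ ^ 2) := by
    simp only [Complex.sq_norm, Complex.normSq_apply, Complex.sub_re, Complex.one_re,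
      Complex.sub_im, Complex.one_im]
    ring
  have hgap : 0 < 2 * (1 - charFun F (1 / x)).re - ‖1 - charFun F (1 / x)‖ ^ 2 := by
    rw [Complex.div_ofReal_re, norm_div, Complex.norm_real, Real.norm_of_nonneg hG.le,
      div_pow] at hx
    have hmul := mul_pos hx hG
    field_simp at hmul
    linarith
  exact (sq_lt_one_iff₀ (norm_nonneg _)).1 (by linarith)

lemma StableLimit.densChar_eq_zero [IsProbabilityMeasure F] (hg : StableLimit F ℓ g) {a t : ℝ}
    (ha : Tendsto (fun n : ℕ => linv ℓ n) atTop (𝓝 a)) (ha₀ : a ≠ 0)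
    (ht : ‖charFun F (t / a)‖ < 1) : densChar g t = 0 := by
  obtain ⟨r, hr, hr1⟩ := exists_between ht
  have hlim : Tendsto (fun n : ℕ => ‖charFun F (t / linv ℓ n)‖) atTop (𝓝 ‖charFun F (t / a)‖) :=
    ((continuous_charFun.tendsto _).comp (tendsto_const_nhds.div ha ha₀)).norm
  refine tendsto_nhds_unique (hg.tendsto_charFun t) (squeeze_zero_norm' ?_
    (tendsto_pow_atTop_nhds_zero_of_lt_one ((norm_nonneg _).trans hr.le) hr1))
  filter_upwards [hlim.eventually (gt_mem_nhds hr)] with n hn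
  rw [norm_pow]
  gcongr

/- If the norming constants stayed bounded, the limiting characteristic function would vanish at
arbitrarily small arguments. -/
lemma CharAsymp.tendsto_linv (hF : CharAsymp F α C) [IsProbabilityMeasure F]
    (hRT : RightTail F ℓ) (hg : StableLimit F ℓ g) :
    Tendsto (fun n : ℕ => linv ℓ n) atTop atTop := by
  have hℓ := hRT.tendsto_atTop hF.tail hF.pos
  refine (tendsto_atTop_of_monotone ((monotone_linv hℓ).comp Nat.mono_cast)).resolve_right ?_
  rintro ⟨a, ha : Tendsto (fun n : ℕ => linv ℓ n) atTop (𝓝 a)⟩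
  have ha₀ : a ≠ 0 := (one_pos.trans_le (ge_of_tendsto' ha fun n => one_le_linv hℓ n)).ne'
  have hone : Tendsto (fun x : ℝ => densChar g (a / x)) atTop (𝓝 1) := by
    rw [← densChar_zero hg.integral_eq_one]
    exact ((continuous_densChar hg.integrable).tendsto 0).comp
      (tendsto_const_nhds.div_atTop tendsto_id)
  have hzero : (fun x : ℝ => densChar g (a / x)) =ᶠ[atTop] fun _ => 0 := by
    filter_upwards [hF.eventually_norm_charFun_lt_one] with x hx
    exact hg.densChar_eq_zero ha ha₀ (by rwa [div_right_comm, div_self ha₀])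
  exact zero_ne_one (tendsto_nhds_unique (tendsto_const_nhds.congr' hzero.symm) hone)

lemma CharAsymp.densChar_eq (hF : CharAsymp F α C) [IsProbabilityMeasure F]
    (hRT : RightTail F ℓ) (hg : StableLimit F ℓ g) (t : ℝ) :
    densChar g t = Complex.exp (-stableExp α C t) := by
  rcases eq_or_ne t 0 with rfl | ht
  · simp [densChar_zero hg.integral_eq_one, stableExp, zero_rpow hF.pos.ne']
  have ha := hF.tendsto_linv hRT hg
  have htail := (Complex.continuous_ofReal.tendsto _).comp
    (tendsto_mul_rtail_linv hF.tail hF.pos hRT (fun n => n.cast_nonneg) ha)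
  have hlim : Tendsto (fun n : ℕ => (n : ℂ) * (charFun F (t / linv ℓ n) - 1)) atTop
      (𝓝 (-stableExp α C t)) := by
    have := (htail.mul ((hF.tendsto_ratio ht).comp ha)).neg
    rw [Complex.ofReal_one, one_mul] at this
    refine this.congr fun n => ?_
    have hne := Complex.ofReal_ne_zero.2 (hF.tail.pos (linv ℓ n)).ne'
    simp only [Function.comp_apply, Complex.ofReal_mul, Complex.ofReal_natCast]
    field_simp
    ring
  refine tendsto_nhds_unique (hg.tendsto_charFun t) ?_
  simpa using Complex.tendsto_one_add_pow_exp_of_tendsto hlim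

end Limit

/-! ### Fourier inversion almost everywhere -/

section Inversion

open scoped FourierTransform SchwartzMap

variable {V E : Type*} [NormedAddCommGroup V] [InnerProductSpace ℝ V] [MeasurableSpace V]
  [BorelSpace V] [FiniteDimensional ℝ V] [NormedAddCommGroup E] [NormedSpace ℂ E]

lemma integral_fourier_smul_eq_integral_smul_fourier [CompleteSpace E] {f : V → ℂ} {g : V → E}
    (hf : Integrable f) (hg : Integrable g) : ∫ ξ, 𝓕 f ξ • g ξ = ∫ x, f x • 𝓕 g x := by
  simpa using! VectorFourier.integral_fourierIntegral_smul_eq_flip (L := innerₗ V)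
    continuous_fourierChar continuous_inner hf hg

lemma continuous_fourierInv {f : V → E} (hf : Integrable f) : Continuous (𝓕⁻ f) := by
  rw [fourierInv_eq_fourier_comp_neg]
  exact VectorFourier.fourierIntegral_continuous continuous_fourierChar
    (by exact continuous_inner) hf.comp_neg

lemma integral_schwartz_smul_fourierInv_fourier [CompleteSpace E] {f : V → E} (hf : Integrable f)
    (hf' : Integrable (𝓕 f)) (φ : 𝓢(V, ℂ)) : ∫ u, φ u • 𝓕⁻ (𝓕 f) u = ∫ u, φ u • f u := by
  have hφ : 𝓕 (𝓕⁻ (φ : V → ℂ)) = φ := by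
    rw [← SchwartzMap.fourierInv_coe, ← SchwartzMap.fourier_coe]
    exact congrArg _ (FourierTransform.fourier_fourierInv_eq φ)
  have hφ' : Integrable (𝓕⁻ (φ : V → ℂ)) := by
    rw [← SchwartzMap.fourierInv_coe]; exact (𝓕⁻ φ).integrable
  calc ∫ u, φ u • 𝓕⁻ (𝓕 f) u = ∫ u, φ (-u) • 𝓕 (𝓕 f) u := by
        rw [← integral_neg_eq_self]
        simp only [fourierInv_eq_fourier_neg, neg_neg]
    _ = ∫ u, 𝓕⁻ (φ : V → ℂ) u • 𝓕 f u := by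
        rw [fourierInv_eq_fourier_comp_neg]
        exact (integral_fourier_smul_eq_integral_smul_fourier φ.integrable.comp_neg hf').symm
    _ = ∫ u, φ u • f u := by
        rw [← integral_fourier_smul_eq_integral_smul_fourier hφ' hf, hφ]

lemma ae_fourierInv_fourier_eq [CompleteSpace E] {f : V → E} (hf : Integrable f)
    (hf' : Integrable (𝓕 f)) : ∀ᵐ u : V, 𝓕⁻ (𝓕 f) u = f u := by
  refine ae_eq_of_integral_contDiff_smul_eq (continuous_fourierInv hf').locallyIntegrable
    hf.locallyIntegrable fun φ hφ hφs => ?_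
  have hφs' : HasCompactSupport fun u => (φ u : ℂ) := hφs.comp_left Complex.ofReal_zero
  simp only [← Complex.coe_smul]
  exact integral_schwartz_smul_fourierInv_fourier hf hf'
    (hφs'.toSchwartzMap (Complex.ofRealCLM.contDiff.comp hφ))

end Inversion

lemma fourier_ofReal_eq_densChar (g : ℝ → ℝ) (ξ : ℝ) :
    FourierTransform.fourier (fun u => (g u : ℂ)) ξ = densChar g (-(2 * π) * ξ) := by
  rw [fourier_real_eq_integral_exp_smul]
  refine integral_congr_ae (ae_of_all _ fun u => ?_)
  simp only [smul_eq_mul]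
  congr 2
  push_cast
  ring

lemma ae_integral_exp_mul_densChar {g : ℝ → ℝ} (hg : Integrable g)
    (hg' : Integrable (densChar g)) :
    ∀ᵐ u : ℝ, ∫ v : ℝ, Complex.exp (-(v * u * Complex.I)) * densChar g v
      = ((2 * π * g u : ℝ) : ℂ) := by
  have hfourier := funext (fourier_ofReal_eq_densChar g)
  have h_int : Integrable fun ξ => densChar g (-(2 * π) * ξ) :=
    hg'.comp_mul_left' (neg_ne_zero.2 two_pi_pos.ne')
  filter_upwards [ae_fourierInv_fourier_eq (f := fun u => (g u : ℂ)) hg.ofReal (hfourier ▸ h_int)]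
    with u hu
  have hscale := Measure.integral_comp_mul_left
    (fun v : ℝ => Complex.exp (-(v * u * Complex.I)) * densChar g v) (-(2 * π))
  have hinv : ∫ ξ : ℝ, Complex.exp (-(((-(2 * π) * ξ : ℝ) : ℂ) * u * Complex.I))
      * densChar g (-(2 * π) * ξ) = g u := by
    rw [← hu, fourierInv_eq', hfourier]
    refine integral_congr_ae (ae_of_all _ fun ξ => ?_)
    simp only [smul_eq_mul, RCLike.inner_apply, conj_trivial]
    congr 2
    push_cast
    ring
  rw [hinv, inv_neg, abs_neg, abs_of_pos (inv_pos.2 two_pi_pos), eq_inv_smul_iff₀ two_pi_pos.ne',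
    Complex.real_smul] at hscale
  rw [← hscale, ← Complex.ofReal_mul]

/-! ### Laplace integrals of complex exponentials -/

lemma norm_exp_sub_exp_le_mul {a b : ℂ} {r : ℝ} (ha : a.re ≤ r) (hb : b.re ≤ r) :
    ‖Complex.exp a - Complex.exp b‖ ≤ Real.exp r * ‖a - b‖ := by
  refine Convex.norm_image_sub_le_of_norm_hasDerivWithin_le (f' := Complex.exp)
    (s := {z : ℂ | z.re ≤ r}) (fun z _ => (Complex.hasDerivAt_exp z).hasDerivWithinAt)
    (fun z hz => ?_) (convex_halfSpace_re_le r) hb ha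
  rw [Complex.norm_exp]
  exact Real.exp_le_exp.2 hz

lemma integrableOn_exp_neg_mul {a : ℂ} (ha : 0 < a.re) :
    IntegrableOn (fun s : ℝ => Complex.exp (-(s * a))) (Ioi 0) := by
  simpa only [neg_mul, mul_comm a] using
    integrableOn_exp_mul_complex_Ioi (a := -a) (by simpa using ha) 0

lemma integral_Ioi_exp_neg_mul {a : ℂ} (ha : 0 < a.re) :
    ∫ s in Ioi (0 : ℝ), Complex.exp (-(s * a)) = a⁻¹ := by
  simpa [mul_comm a, neg_div_neg_eq] using
    integral_exp_mul_complex_Ioi (a := -a) (by simpa using ha) 0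

lemma integral_norm_exp_neg_mul {a : ℂ} (ha : 0 < a.re) :
    ∫ s in Ioi (0 : ℝ), ‖Complex.exp (-(s * a))‖ = (a.re)⁻¹ := by
  simpa [Complex.norm_exp, mul_comm a.re, neg_div_neg_eq] using
    integral_exp_mul_Ioi (a := -a.re) (by simpa using ha) 0

lemma integral_norm_exp_sub_exp_le_inv_add_inv {a b : ℂ} (ha : 0 < a.re) (hb : 0 < b.re) :
    ∫ s in Ioi (0 : ℝ), ‖Complex.exp (-(s * a)) - Complex.exp (-(s * b))‖
      ≤ (a.re)⁻¹ + (b.re)⁻¹ := by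
  have hia := integrableOn_exp_neg_mul ha
  have hib := integrableOn_exp_neg_mul hb
  rw [← integral_norm_exp_neg_mul ha, ← integral_norm_exp_neg_mul hb,
    ← integral_add hia.norm hib.norm]
  exact integral_mono (hia.sub hib).norm (hia.norm.add hib.norm) fun s => norm_sub_le _ _

lemma integral_norm_exp_sub_exp_le {a b : ℂ} {m : ℝ} (hm : 0 < m) (ha : m ≤ a.re)
    (hb : m ≤ b.re) :
    ∫ s in Ioi (0 : ℝ), ‖Complex.exp (-(s * a)) - Complex.exp (-(s * b))‖
      ≤ ‖a - b‖ * m⁻¹ ^ 2 := by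
  have hGamma : ∫ s in Ioi (0 : ℝ), s ^ ((2 : ℝ) - 1) * Real.exp (-(m * s)) = m⁻¹ ^ 2 := by
    rw [Real.integral_rpow_mul_exp_neg_mul_Ioi two_pos hm, Real.Gamma_two, mul_one, one_div]
    norm_cast
  have h_int : IntegrableOn (fun s : ℝ => s ^ ((2 : ℝ) - 1) * Real.exp (-(m * s))) (Ioi 0) :=
    Integrable.of_integral_ne_zero (hGamma ▸ by positivity)
  rw [← hGamma, ← integral_const_mul]
  refine setIntegral_mono_on ((integrableOn_exp_neg_mul (hm.trans_le ha)).sub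
    (integrableOn_exp_neg_mul (hm.trans_le hb))).norm (h_int.const_mul _) measurableSet_Ioi
    fun s (hs : 0 < s) => ?_
  have hre {c : ℂ} (hc : m ≤ c.re) : (-(s * c)).re ≤ -(m * s) := by
    rw [Complex.neg_re, Complex.re_ofReal_mul]; nlinarith
  calc ‖Complex.exp (-(s * a)) - Complex.exp (-(s * b))‖
      ≤ Real.exp (-(m * s)) * ‖-(s * a) - -(s * b)‖ := norm_exp_sub_exp_le_mul (hre ha) (hre hb)
    _ = ‖a - b‖ * (s ^ ((2 : ℝ) - 1) * Real.exp (-(m * s))) := by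
        rw [show -((s : ℂ) * a) - -(s * b) = -(s * (a - b)) by ring, norm_neg, norm_mul,
          Complex.norm_real, Real.norm_of_nonneg hs.le, show (2 : ℝ) - 1 = 1 by norm_num, rpow_one]
        ring

/-! ### The limiting constant -/

lemma integrable_exp_neg_stableExp {α : ℝ} (hα : 0 < α) {C : ℂ} (hC : 0 < C.re) {s : ℝ}
    (hs : 0 < s) : Integrable fun t : ℝ => Complex.exp (-(s * stableExp α C t)) := by
  have hIoi := integrableOn_rpow_mul_exp_neg_mul_rpow (p := α) (s := 0) (b := s * C.re)
    (by norm_num) hα (by positivity)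
  have habs : Integrable fun t : ℝ => Real.exp (-(s * C.re) * |t| ^ α) :=
    (integrable_fun_norm_addHaar (E := ℝ) volume
      (f := fun r : ℝ => Real.exp (-(s * C.re) * r ^ α))).2 (by simpa using hIoi)
  have hcont := continuous_stableExp hα C
  refine habs.mono' (Continuous.aestronglyMeasurable (by fun_prop)) (ae_of_all _ fun t => ?_)
  rw [Complex.norm_exp, Complex.neg_re, Complex.re_ofReal_mul, stableExp_re, neg_mul, mul_assoc,
    mul_comm C.re]

lemma abs_rpow_sub_rpow_le {α a b : ℝ} (hα₀ : 0 ≤ α) (hα₁ : α ≤ 1) (ha : 0 ≤ a) (hb : 0 ≤ b) :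
    |a ^ α - b ^ α| ≤ |a - b| ^ α := by
  wlog h : b ≤ a generalizing a b
  · rw [abs_sub_comm, abs_sub_comm a b]
    exact this hb ha (le_of_not_ge h)
  rw [abs_of_nonneg (sub_nonneg.2 (rpow_le_rpow hb h hα₀)), abs_of_nonneg (sub_nonneg.2 h),
    sub_le_iff_le_add]
  simpa using Real.rpow_add_le_add_rpow (sub_nonneg.2 h) hb hα₀ hα₁

lemma norm_stableExp_sub_le {α : ℝ} (hα₀ : 0 ≤ α) (hα₁ : α ≤ 1) (C : ℂ) {t : ℝ}
    (ht : π < |t|) : ‖stableExp α C t - stableExp α C (t + π)‖ ≤ π ^ α * ‖C‖ := by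
  have hsign : 0 ≤ t ↔ 0 ≤ t + π := by
    rcases lt_abs.1 ht with h | h <;> constructor <;> intro <;> linarith [pi_pos]
  have habs : |(|t| - |t + π|)| ≤ π := by
    simpa [abs_of_pos pi_pos] using abs_abs_sub_abs_le_abs_sub t (t + π)
  have hpow : |(|t| ^ α - |t + π| ^ α)| ≤ π ^ α :=
    (abs_rpow_sub_rpow_le hα₀ hα₁ (abs_nonneg _) (abs_nonneg _)).trans
      (rpow_le_rpow (abs_nonneg _) habs hα₀)
  unfold stableExp
  simp only [← hsign]
  rw [← sub_mul, norm_mul, ← Complex.ofReal_sub, Complex.norm_real, Real.norm_eq_abs]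
  split_ifs
  · gcongr
  · rw [RCLike.norm_conj]; gcongr

lemma integral_norm_exp_stableExp_sub_le {α : ℝ} (hα₀ : 0 ≤ α) (hα₁ : α ≤ 1) {C : ℂ}
    (hC : 0 < C.re) {t : ℝ} (ht : 2 * π < |t|) :
    ∫ s in Ioi (0 : ℝ), ‖Complex.exp (-(s * stableExp α C t))
        - Complex.exp (-(s * stableExp α C (t + π)))‖
      ≤ π ^ α * ‖C‖ * (C.re⁻¹ * 2 ^ α) ^ 2 * |t| ^ (-(2 * α)) := by
  have ht₀ : 0 < |t| := two_pi_pos.trans ht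
  have hre {u : ℝ} (hu : |t| / 2 ≤ |u|) : (|t| / 2) ^ α * C.re ≤ (stableExp α C u).re := by
    rw [stableExp_re]
    gcongr
  have hinv : ((|t| / 2) ^ α * C.re)⁻¹ ^ 2 = (C.re⁻¹ * 2 ^ α) ^ 2 * |t| ^ (-(2 * α)) := by
    rw [div_rpow ht₀.le two_pos.le, rpow_neg ht₀.le, mul_comm 2 α, rpow_mul ht₀.le, rpow_two]
    field_simp
  refine (integral_norm_exp_sub_exp_le (by positivity) (hre (half_le_self ht₀.le))
    (hre (half_abs_le_abs_add_pi ht))).trans ?_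
  rw [hinv, ← mul_assoc]
  gcongr
  exact norm_stableExp_sub_le hα₀ hα₁ C (by linarith [pi_pos])

namespace CharAsymp

variable {F : Measure ℝ} {α : ℝ} {C : ℂ}

lemma integrable_prod_exp_stableExp_sub (hF : CharAsymp F α C) :
    Integrable (fun p : ℝ × ℝ => Complex.exp (-(p.2 * Complex.I))
      * (Complex.exp (-(p.1 * stableExp α C p.2))
        - Complex.exp (-(p.1 * stableExp α C (p.2 + π)))))
      ((volume.restrict (Ioi 0)).prod volume) := by
  have hcont := continuous_stableExp hF.pos C
  have hre {t : ℝ} (ht : t ≠ 0) := stableExp_re_pos α hF.re_pos ht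
  refine (integrable_prod_iff' (Continuous.aestronglyMeasurable (by fun_prop))).2 ⟨?_, ?_⟩
  · filter_upwards [ae_ne_zero_and_add_pi_ne_zero] with t ht
    exact ((integrableOn_exp_neg_mul (hre ht.1)).sub
      (integrableOn_exp_neg_mul (hre ht.2))).const_mul _
  simp only [norm_mul, norm_exp_neg_mul_I, one_mul]
  have hu : LocallyIntegrable fun t : ℝ => C.re⁻¹ * |t| ^ (-α) :=
    (locallyIntegrable_abs_rpow_neg hF.lt_one).smul C.re⁻¹
  refine (integrable_halfPeriodMajorant hu (π ^ α * ‖C‖ * (C.re⁻¹ * 2 ^ α) ^ 2)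
    (by linarith [hF.half_lt] : 1 < 2 * α)).mono' ?_ ?_
  · exact AEStronglyMeasurable.integral_prod_right' (E := ℝ) (μ := volume)
      (f := fun p : ℝ × ℝ => ‖Complex.exp (-(p.2 * stableExp α C p.1))
        - Complex.exp (-(p.2 * stableExp α C (p.1 + π)))‖)
      (Continuous.aestronglyMeasurable (by fun_prop))
  filter_upwards [ae_ne_zero_and_add_pi_ne_zero] with t ht
  rw [Real.norm_of_nonneg (integral_nonneg fun _ => norm_nonneg _)]
  refine le_halfPeriodMajorant ?_
    (integral_norm_exp_stableExp_sub_le hF.pos.le hF.lt_one.le hF.re_pos)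
  simpa only [stableExp_re, mul_inv, ← rpow_neg (abs_nonneg _), mul_comm (C.re⁻¹)] using
    integral_norm_exp_sub_exp_le_inv_add_inv (hre ht.1) (hre ht.2)

/- The Laplace representation `z⁻¹ = ∫₀^∞ exp (-s z) ds`, and Fubini. -/
lemma limConst_eq_integral (hF : CharAsymp F α C) :
    limConst α C = ∫ s in Ioi (0 : ℝ), ∫ t : ℝ,
      Complex.exp (-(t * Complex.I)) * Complex.exp (-(s * stableExp α C t)) := by
  have hre {t : ℝ} (ht : t ≠ 0) := stableExp_re_pos α hF.re_pos ht
  rw [setIntegral_congr_fun measurableSet_Ioi fun s hs => integral_exp_neg_mul_I_mul_eq_half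
      (integrable_exp_neg_stableExp hF.pos hF.re_pos hs), integral_const_mul,
    integral_integral_swap hF.integrable_prod_exp_stableExp_sub, limConst]
  congr 1
  refine integral_congr_ae ?_
  filter_upwards [ae_ne_zero_and_add_pi_ne_zero] with t ht
  rw [integral_const_mul, integral_sub (integrableOn_exp_neg_mul (hre ht.1))
    (integrableOn_exp_neg_mul (hre ht.2)), integral_Ioi_exp_neg_mul (hre ht.1),
    integral_Ioi_exp_neg_mul (hre ht.2)]

end CharAsymp

/- Substitute `t = s ^ (-α⁻¹) v` and use homogeneity of the exponent. -/
lemma integral_exp_mul_exp_neg_stableExp {α : ℝ} (hα : α ≠ 0) (C : ℂ) {s : ℝ} (hs : 0 < s) :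
    ∫ t : ℝ, Complex.exp (-(t * Complex.I)) * Complex.exp (-(s * stableExp α C t))
      = ((s ^ (-α⁻¹) : ℝ) : ℂ) * ∫ v : ℝ, Complex.exp (-(v * (s ^ (-α⁻¹) : ℝ) * Complex.I))
          * Complex.exp (-stableExp α C v) := by
  have hinv : s ^ α⁻¹ * s ^ (-α⁻¹) = 1 := by rw [← rpow_add hs, add_neg_cancel, rpow_zero]
  have hpow : (s ^ α⁻¹) ^ α = s := rpow_inv_rpow hs.le hα
  have hscale := Measure.integral_comp_mul_left
    (fun v : ℝ => Complex.exp (-(v * (s ^ (-α⁻¹) : ℝ) * Complex.I))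
      * Complex.exp (-stableExp α C v)) (s ^ α⁻¹)
  rw [← rpow_neg hs.le, abs_of_pos (rpow_pos_of_pos hs _), Complex.real_smul] at hscale
  rw [← hscale]
  refine integral_congr_ae (ae_of_all _ fun t => ?_)
  simp only [stableExp_mul α C (rpow_pos_of_pos hs _), hpow, ← Complex.ofReal_mul]
  rw [mul_right_comm, hinv, one_mul]

lemma CharAsymp.limConst_eq {F : Measure ℝ} [IsProbabilityMeasure F] {α : ℝ} {C : ℂ}
    (hF : CharAsymp F α C) {ℓ g : ℝ → ℝ} (hRT : RightTail F ℓ) (hg : StableLimit F ℓ g) :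
    limConst α C = ((2 * π * (α * ∫ t in Ioi (0 : ℝ), t ^ (-α) * g t) : ℝ) : ℂ) := by
  have hα := hF.pos
  have hdens : densChar g = fun t => Complex.exp (-stableExp α C t) :=
    funext (hF.densChar_eq hRT hg)
  have h_int : Integrable (densChar g) := by
    simpa [hdens] using integrable_exp_neg_stableExp hα hF.re_pos one_pos
  have hinv := ae_integral_exp_mul_densChar hg.integrable h_int
  simp only [hdens] at hinv
  rw [hF.limConst_eq_integral, setIntegral_congr_fun measurableSet_Ioi
      fun s hs => integral_exp_mul_exp_neg_stableExp hα.ne' C hs,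
    ← integral_comp_rpow_Ioi _ (neg_ne_zero.2 hα.ne'), ← integral_const_mul, ← integral_const_mul,
    ← integral_complex_ofReal]
  refine integral_congr_ae ?_
  filter_upwards [ae_restrict_of_ae hinv, ae_restrict_mem measurableSet_Ioi] with x hx hx₀
  have hpow : (x ^ (-α)) ^ (-α⁻¹) = x := by
    rw [← rpow_mul (le_of_lt hx₀), neg_mul_neg, mul_inv_cancel₀ hα.ne', rpow_one]
  have hmul : x ^ (-α - 1) * x = x ^ (-α) := by
    rw [← rpow_add_one (ne_of_gt hx₀), sub_add_cancel]
  rw [hpow, hx, abs_neg, abs_of_pos hα, Complex.real_smul, ← hmul]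
  push_cast
  ring

/-! ### Abel summation of the renewal series -/

/-- The kernel with symbol `q`, i.e. the inverse Fourier transform of `q` without its
normalizing constant. -/
def symbolKernel (q : ℝ → ℂ) (y : ℝ) : ℂ := ∫ θ : ℝ, q θ * Complex.exp (θ * y * Complex.I)

/-- The integral of the kernel with symbol `q`, centered at `x`, against `F^{*n}`, written on the
Fourier side. -/
def renewalTerm (F : Measure ℝ) (q : ℝ → ℂ) (x : ℝ) (n : ℕ) : ℂ :=
  ∫ θ : ℝ, q θ * Complex.exp (-(θ * x * Complex.I)) * charFun F θ ^ n

lemma norm_mul_exp_mul_I (z : ℂ) (θ y : ℝ) : ‖z * Complex.exp (θ * y * Complex.I)‖ = ‖z‖ := by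
  rw [norm_mul, ← Complex.ofReal_mul, Complex.norm_exp_ofReal_mul_I, mul_one]

lemma norm_mul_exp_neg_mul_I (z : ℂ) (θ x : ℝ) :
    ‖z * Complex.exp (-(θ * x * Complex.I))‖ = ‖z‖ := by
  rw [norm_mul, ← Complex.ofReal_mul, norm_exp_neg_mul_I, mul_one]

lemma continuous_symbolKernel {q : ℝ → ℂ} (hq : Integrable q) : Continuous (symbolKernel q) := by
  refine continuous_of_dominated (bound := fun θ => ‖q θ‖)
    (fun y => hq.aestronglyMeasurable.mul (Continuous.aestronglyMeasurable (by fun_prop)))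
    (fun y => ae_of_all _ fun θ => (norm_mul_exp_mul_I _ _ _).le) hq.norm
    (ae_of_all _ fun θ => by fun_prop)

lemma norm_symbolKernel_le (q : ℝ → ℂ) (y : ℝ) : ‖symbolKernel q y‖ ≤ ∫ θ, ‖q θ‖ := by
  simpa only [symbolKernel, norm_mul_exp_mul_I] using
    norm_integral_le_integral_norm fun θ : ℝ => q θ * Complex.exp (θ * y * Complex.I)

lemma eventually_nonneg_and_lt_one : ∀ᶠ r : ℝ in 𝓝[<] 1, 0 ≤ r ∧ r < 1 := by
  filter_upwards [Ioo_mem_nhdsLT (zero_lt_one (α := ℝ))] with r hr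
  exact ⟨hr.1.le, hr.2⟩

lemma norm_ofReal_mul_le {r : ℝ} (hr : 0 ≤ r) {z : ℂ} (hz : ‖z‖ ≤ 1) : ‖(r : ℂ) * z‖ ≤ r := by
  rw [norm_mul, Complex.norm_real, Real.norm_of_nonneg hr]
  exact mul_le_of_le_one_right hr hz

lemma norm_one_sub_mul_inv_le {r : ℝ} (hr₀ : 0 ≤ r) (hr₁ : r < 1) {z : ℂ} (hz : ‖z‖ ≤ 1)
    (hz₁ : z ≠ 1) : ‖(1 - r * z)⁻¹‖ ≤ 2 * ‖(1 - z)⁻¹‖ := by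
  have hlower : 1 - r ≤ ‖1 - r * z‖ := by
    linarith [norm_sub_norm_le (1 : ℂ) (r * z), norm_ofReal_mul_le hr₀ hz, norm_one (α := ℂ)]
  have hcompare : ‖1 - z‖ ≤ 2 * ‖1 - r * z‖ := by
    calc ‖1 - z‖ = ‖(1 - r * z) - ((1 - r : ℝ) : ℂ) * z‖ := by push_cast; ring_nf
      _ ≤ ‖1 - r * z‖ + ‖((1 - r : ℝ) : ℂ) * z‖ := norm_sub_le _ _
      _ ≤ ‖1 - r * z‖ + (1 - r) := by
          gcongr
          exact norm_ofReal_mul_le (by linarith) hz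
      _ ≤ 2 * ‖1 - r * z‖ := by linarith
  have hpos : 0 < ‖1 - z‖ := norm_pos_iff.2 (sub_ne_zero.2 hz₁.symm)
  rw [norm_inv, norm_inv, ← div_eq_mul_inv, inv_le_comm₀ (by linarith) (by positivity), inv_div]
  linarith

namespace IsSymbol

variable {F : Measure ℝ} {q : ℝ → ℂ}

lemma ae_eq_zero_or_charFun_ne_one (hq : IsSymbol F q) : ∀ᵐ θ : ℝ, q θ = 0 ∨ charFun F θ ≠ 1 := by
  obtain ⟨b, B, hbB, -, hsupp, hne⟩ := hq.exists_supp
  filter_upwards [Measure.ae_ne volume (0 : ℝ)] with θ hθ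
  rcases lt_or_ge b |θ| with hb | hb
  · exact Or.inl (hsupp θ hb)
  · exact Or.inr (hne θ (abs_pos.2 hθ) (hb.trans hbB.le))

variable [IsProbabilityMeasure F]

lemma integrable_renewalTerm (hq : IsSymbol F q) (x : ℝ) (n : ℕ) :
    Integrable fun θ : ℝ => q θ * Complex.exp (-(θ * x * Complex.I)) * charFun F θ ^ n := by
  have hqc := hq.cont
  have : Continuous (charFun F) := continuous_charFun
  refine hq.integrable.norm.mono' (Continuous.aestronglyMeasurable (by fun_prop))
    (ae_of_all _ fun θ => ?_)
  rw [norm_mul, norm_mul_exp_neg_mul_I, norm_pow]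
  exact mul_le_of_le_one_right (norm_nonneg _)
    (pow_le_one₀ (norm_nonneg _) (norm_charFun_le_one _))

lemma summable_integral_norm_renewalTerm (hq : IsSymbol F q) (x : ℝ) {r : ℝ} (hr₀ : 0 ≤ r)
    (hr₁ : r < 1) :
    Summable fun n : ℕ => ∫ θ : ℝ,
      ‖q θ * Complex.exp (-(θ * x * Complex.I)) * charFun F θ ^ n * (r : ℂ) ^ n‖ := by
  refine Summable.of_nonneg_of_le (fun n => integral_nonneg fun _ => norm_nonneg _)
    (fun n => ?_) ((summable_geometric_of_lt_one hr₀ hr₁).mul_left (∫ θ, ‖q θ‖))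
  rw [← integral_mul_const]
  refine integral_mono ((hq.integrable_renewalTerm x n).mul_const _).norm
    (hq.integrable.norm.mul_const _) fun θ => ?_
  dsimp only
  rw [mul_assoc, norm_mul, norm_mul_exp_neg_mul_I, ← mul_pow, norm_pow, mul_comm (charFun F θ)]
  gcongr
  exact norm_ofReal_mul_le hr₀ (norm_charFun_le_one _)

lemma hasSum_renewalTerm_mul_pow (hq : IsSymbol F q) (x : ℝ) {r : ℝ} (hr₀ : 0 ≤ r)
    (hr₁ : r < 1) :
    HasSum (fun n => renewalTerm F q x n * (r : ℂ) ^ n)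
      (∫ θ : ℝ, q θ * Complex.exp (-(θ * x * Complex.I)) * (1 - r * charFun F θ)⁻¹) := by
  have hgeom : ∀ θ : ℝ, ∑' n : ℕ,
      q θ * Complex.exp (-(θ * x * Complex.I)) * charFun F θ ^ n * (r : ℂ) ^ n
        = q θ * Complex.exp (-(θ * x * Complex.I)) * (1 - r * charFun F θ)⁻¹ := fun θ => by
    simp_rw [mul_assoc (q θ * _), ← mul_pow, mul_comm _ (r : ℂ)]
    rw [tsum_mul_left, tsum_geometric_of_norm_lt_one]
    exact (norm_ofReal_mul_le hr₀ (norm_charFun_le_one _)).trans_lt hr₁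
  simpa only [renewalTerm, integral_mul_const, hgeom] using
    hasSum_integral_of_summable_integral_norm
      (fun n => (hq.integrable_renewalTerm x n).mul_const ((r : ℂ) ^ n))
      (hq.summable_integral_norm_renewalTerm x hr₀ hr₁)

lemma ae_norm_mul_resolvent_le (hq : IsSymbol F q) (x : ℝ) {r : ℝ} (hr₀ : 0 ≤ r)
    (hr₁ : r < 1) : ∀ᵐ θ : ℝ,
      ‖q θ * Complex.exp (-(θ * x * Complex.I)) * (1 - r * charFun F θ)⁻¹‖
        ≤ 2 * ‖q θ * (1 - charFun F θ)⁻¹‖ := by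
  filter_upwards [hq.ae_eq_zero_or_charFun_ne_one] with θ hθ
  rcases hθ with hθ | hθ
  · simp [hθ]
  rw [norm_mul, norm_mul_exp_neg_mul_I, norm_mul, mul_left_comm]
  exact mul_le_mul_of_nonneg_left (norm_one_sub_mul_inv_le hr₀ hr₁ (norm_charFun_le_one _) hθ)
    (norm_nonneg _)

variable {α : ℝ} {C : ℂ}

lemma integrable_resolvent (hF : CharAsymp F α C) (hq : IsSymbol F q) :
    Integrable fun θ : ℝ => q θ * (1 - charFun F θ)⁻¹ := by
  have hpos : (rtail F 1 : ℂ) ≠ 0 := by exact_mod_cast (hF.tail.pos 1).ne'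
  refine ((hF.integrable_localResolvent hq one_pos).const_mul (rtail F 1 : ℂ)⁻¹).congr
    (ae_of_all _ fun θ => ?_)
  simp only [localResolvent, scaledResolvent, div_one]
  field_simp

lemma tendsto_integral_resolvent (hF : CharAsymp F α C) (hq : IsSymbol F q) (x : ℝ) :
    Tendsto (fun r : ℝ => ∫ θ : ℝ, q θ * Complex.exp (-(θ * x * Complex.I))
        * (1 - r * charFun F θ)⁻¹) (𝓝[<] 1)
      (𝓝 (∫ θ : ℝ, q θ * Complex.exp (-(θ * x * Complex.I)) * (1 - charFun F θ)⁻¹)) := by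
  have hqc := hq.cont
  have : Continuous (charFun F) := continuous_charFun
  refine tendsto_integral_filter_of_dominated_convergence
    (fun θ => 2 * ‖q θ * (1 - charFun F θ)⁻¹‖) (Eventually.of_forall fun r => ?_)
    (eventually_nonneg_and_lt_one.mono fun r hr => hq.ae_norm_mul_resolvent_le x hr.1 hr.2)
    ((hq.integrable_resolvent hF).norm.const_mul 2) ?_
  · exact ((by fun_prop : Continuous fun θ : ℝ => q θ * Complex.exp (-(θ * x * Complex.I)))
      |>.measurable.mul (by fun_prop :
        Continuous fun θ : ℝ => 1 - (r : ℂ) * charFun F θ).measurable.inv).aestronglyMeasurable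
  · filter_upwards [hq.ae_eq_zero_or_charFun_ne_one] with θ hθ
    rcases hθ with hθ | hθ
    · simp [hθ]
    have hcont : Continuous fun r : ℝ => 1 - (r : ℂ) * charFun F θ := by fun_prop
    have hlim : Tendsto (fun r : ℝ => 1 - (r : ℂ) * charFun F θ) (𝓝[<] 1)
        (𝓝 (1 - charFun F θ)) := by
      simpa using (hcont.tendsto 1).mono_left nhdsWithin_le_nhds
    exact (hlim.inv₀ (sub_ne_zero.2 hθ.symm)).const_mul _

lemma hasSum_renewalTerm (hF : CharAsymp F α C) (hq : IsSymbol F q) (x : ℝ)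
    (hs : Summable (renewalTerm F q x)) : HasSum (renewalTerm F q x)
      (∫ θ : ℝ, q θ * Complex.exp (-(θ * x * Complex.I)) * (1 - charFun F θ)⁻¹) := by
  have habel := Complex.tendsto_tsum_powerSeries_nhdsWithin_lt hs.hasSum.tendsto_sum_nat
  rw [tendsto_map'_iff] at habel
  have hresolvent := (hq.tendsto_integral_resolvent hF x).congr'
    (eventually_nonneg_and_lt_one.mono fun r hr =>
      (hq.hasSum_renewalTerm_mul_pow x hr.1 hr.2).tsum_eq.symm)
  rw [← tendsto_nhds_unique habel hresolvent]
  exact hs.hasSum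

lemma sum_mul_pow_le (hF : CharAsymp F α C) (hq : IsSymbol F q) {x : ℝ} {c : ℕ → ℝ}
    (hc : ∀ n, 0 ≤ c n) (hterm : ∀ n, renewalTerm F q x n = c n) {r : ℝ} (hr₀ : 0 ≤ r)
    (hr₁ : r < 1) (N : ℕ) :
    ∑ n ∈ Finset.range N, c n * r ^ n ≤ ∫ θ : ℝ, 2 * ‖q θ * (1 - charFun F θ)⁻¹‖ := by
  have hreal : (fun n => renewalTerm F q x n * (r : ℂ) ^ n) = fun n => ((c n * r ^ n : ℝ) : ℂ) := by
    ext n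
    rw [hterm]
    push_cast
    rfl
  have hsum := hq.hasSum_renewalTerm_mul_pow x hr₀ hr₁
  rw [hreal] at hsum
  have hre := Complex.hasSum_re hsum
  simp only [Complex.ofReal_re] at hre
  refine (sum_le_hasSum _ (fun n _ => mul_nonneg (hc n) (pow_nonneg hr₀ n)) hre).trans ?_
  refine (Complex.re_le_norm _).trans (norm_integral_le_of_norm_le
    ((hq.integrable_resolvent hF).norm.const_mul 2) ?_)
  exact hq.ae_norm_mul_resolvent_le x hr₀ hr₁

lemma summable_of_nonneg (hF : CharAsymp F α C) (hq : IsSymbol F q) {x : ℝ} {c : ℕ → ℝ}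
    (hc : ∀ n, 0 ≤ c n) (hterm : ∀ n, renewalTerm F q x n = c n) : Summable c := by
  refine summable_of_sum_range_le hc fun N => le_of_tendsto ?_
    (eventually_nonneg_and_lt_one.mono fun r hr => hq.sum_mul_pow_le hF hc hterm hr.1 hr.2 N)
  have hcont : Continuous fun r : ℝ => ∑ n ∈ Finset.range N, c n * r ^ n := by fun_prop
  simpa using (hcont.tendsto 1).mono_left nhdsWithin_le_nhds

/-! ### Fourier inversion of the renewal measure -/

lemma integrable_symbolKernel_sub (hq : IsSymbol F q) (x : ℝ) (n : ℕ) :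
    Integrable (fun y => symbolKernel q (y - x)) (convPow F n) := by
  have hcont := continuous_symbolKernel hq.integrable
  exact Integrable.of_bound (Continuous.aestronglyMeasurable (by fun_prop)) _
    (ae_of_all _ fun y => norm_symbolKernel_le q _)

lemma integral_symbolKernel_sub (hq : IsSymbol F q) (x : ℝ) (n : ℕ) :
    ∫ y, symbolKernel q (y - x) ∂(convPow F n) = renewalTerm F q x n := by
  have hqc := hq.cont
  have h_int : Integrable (Function.uncurry fun y θ : ℝ =>
      q θ * Complex.exp (θ * ((y - x : ℝ) : ℂ) * Complex.I)) ((convPow F n).prod volume) := by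
    have hq' : Integrable (fun p : ℝ × ℝ => ‖q p.2‖) ((convPow F n).prod volume) := by
      simpa using (integrable_const (1 : ℝ) (μ := convPow F n)).mul_prod hq.integrable.norm
    exact hq'.mono' (Continuous.aestronglyMeasurable (by unfold Function.uncurry; fun_prop))
      (ae_of_all _ fun p => (norm_mul_exp_mul_I _ _ _).le)
  unfold symbolKernel renewalTerm
  rw [integral_integral_swap h_int]
  refine integral_congr_ae (ae_of_all _ fun θ => ?_)
  dsimp only
  rw [← charFun_convPow, charFun_apply_real, ← integral_const_mul]
  refine integral_congr_ae (ae_of_all _ fun y => ?_)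
  dsimp only
  rw [mul_assoc (q θ), ← Complex.exp_add]
  congr 2
  push_cast
  ring

lemma integrable_renewal_of_nonneg (hF : CharAsymp F α C) (hq : IsSymbol F q) {k : ℝ → ℝ}
    (hk : ∀ y, 0 ≤ k y) (hkern : ∀ y, symbolKernel q y = k y) (x : ℝ) :
    Integrable (fun y => k (y - x)) (renewal F) := by
  refine integrable_sum_measure
    (fun n => by simpa [hkern] using (hq.integrable_symbolKernel_sub x n).re) ?_
  simp_rw [Real.norm_of_nonneg (hk _)]
  refine hq.summable_of_nonneg hF (x := x) (fun n => integral_nonneg fun y => hk _) fun n => ?_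
  rw [← hq.integral_symbolKernel_sub, ← integral_complex_ofReal]
  simp_rw [hkern]

lemma integral_renewal (hF : CharAsymp F α C) (hq : IsSymbol F q) {x : ℝ}
    (hi : Integrable (fun y => symbolKernel q (y - x)) (renewal F)) :
    ∫ y, symbolKernel q (y - x) ∂(renewal F)
      = ∫ θ : ℝ, q θ * Complex.exp (-(θ * x * Complex.I)) * (1 - charFun F θ)⁻¹ := by
  have hsum := hasSum_integral_measure hi
  simp_rw [hq.integral_symbolKernel_sub] at hsum
  exact hsum.unique (hq.hasSum_renewalTerm hF x hsum.summable)

end IsSymbol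

/-! ### The triangular function and the Fejér kernel -/

/-- The triangular function `(A - |θ|)⁺`, the compactly supported symbol from which all the test
kernels are built. -/
def tri (A θ : ℝ) : ℝ := max (A - |θ|) 0

/-- The Fejér kernel `2 (1 - cos (A y)) / y ^ 2`, the Fourier transform of `tri A`; the form with
`sinc` is smooth at `y = 0`. -/
def fejer (A y : ℝ) : ℝ := A ^ 2 * sinc (A * y / 2) ^ 2

lemma lipschitzWith_tri (A : ℝ) : LipschitzWith 1 (tri A) :=
  (((LipschitzWith.const A).sub lipschitzWith_one_norm).max_const 0).weaken (zero_add 1).le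

lemma continuous_tri (A : ℝ) : Continuous (tri A) := (lipschitzWith_tri A).continuous

lemma tri_zero {A : ℝ} (hA : 0 ≤ A) : tri A 0 = A := by simp [tri, hA]

lemma tri_neg (A θ : ℝ) : tri A (-θ) = tri A θ := by simp [tri]

lemma tri_of_le {A θ : ℝ} (h : A ≤ |θ|) : tri A θ = 0 := max_eq_right (sub_nonpos.2 h)

lemma integrable_tri (A : ℝ) : Integrable (tri A) :=
  (continuous_tri A).integrable_of_hasCompactSupport <|
    HasCompactSupport.intro (isCompact_Icc (a := -A) (b := A)) fun _ hθ =>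
      tri_of_le (not_lt.1 fun hlt => hθ (abs_le.1 hlt.le))

lemma continuous_fejer (A : ℝ) : Continuous (fejer A) := by
  have := continuous_sinc
  unfold fejer
  fun_prop

lemma fejer_nonneg (A y : ℝ) : 0 ≤ fejer A y := by unfold fejer; positivity

lemma fejer_neg (A y : ℝ) : fejer A (-y) = fejer A y := by
  rw [fejer, fejer, mul_neg, neg_div, sinc_neg]

lemma fejer_zero (A : ℝ) : fejer A 0 = A ^ 2 := by simp [fejer]

lemma fejer_le_sq (A y : ℝ) : fejer A y ≤ A ^ 2 :=
  mul_le_of_le_one_right (sq_nonneg A) ((sq_le_one_iff_abs_le_one _).2 (abs_sinc_le_one _))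

lemma mul_sinc (x : ℝ) : x * sinc x = sin x := by
  rcases eq_or_ne x 0 with rfl | hx
  · simp
  · rw [sinc_of_ne_zero hx, mul_div_cancel₀ _ hx]

lemma sq_mul_fejer (A y : ℝ) : y ^ 2 * fejer A y = 2 * (1 - cos (A * y)) := by
  calc y ^ 2 * fejer A y = 4 * (A * y / 2 * sinc (A * y / 2)) ^ 2 := by rw [fejer]; ring
    _ = 4 * sin (A * y / 2) ^ 2 := by rw [mul_sinc]
    _ = 2 * (1 - cos (2 * (A * y / 2))) := by rw [cos_two_mul, sin_sq]; ring
    _ = 2 * (1 - cos (A * y)) := by rw [mul_div_cancel₀ _ two_ne_zero]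

lemma fejer_pos {A y : ℝ} (hA : 0 < A) (hy : |y| < 2 * π / A) : 0 < fejer A y := by
  rcases eq_or_ne y 0 with rfl | hy₀
  · rw [fejer_zero]
    positivity
  have habs : |A * y| < 2 * π := by rwa [abs_mul, abs_of_pos hA, ← lt_div_iff₀' hA]
  have hcos : cos (A * y) < 1 := (cos_le_one _).lt_of_ne <| by
    rw [Ne, cos_eq_one_iff_of_lt_of_lt (abs_lt.1 habs).1 (abs_lt.1 habs).2]
    exact mul_ne_zero hA.ne' hy₀
  refine pos_of_mul_pos_right ?_ (sq_nonneg y)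
  rw [sq_mul_fejer]
  linarith

lemma integrable_fejer (A : ℝ) : Integrable (fejer A) := by
  refine (integrable_inv_one_add_sq.const_mul (A ^ 2 + 4)).mono'
    (continuous_fejer A).aestronglyMeasurable (ae_of_all _ fun y => ?_)
  rw [Real.norm_of_nonneg (fejer_nonneg A y), ← div_eq_mul_inv, le_div_iff₀ (by positivity)]
  linarith [fejer_le_sq A y, sq_mul_fejer A y, neg_one_le_cos (A * y)]

lemma integral_two_mul_sub_mul_cos (A y : ℝ) :
    ∫ θ in (0 : ℝ)..A, 2 * (A - θ) * cos (θ * y) = fejer A y := by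
  rcases eq_or_ne y 0 with rfl | hy
  · have hderiv : ∀ θ ∈ uIcc 0 A, HasDerivAt (fun θ : ℝ => 2 * A * θ - θ ^ 2)
        (2 * (A - θ) * cos (θ * 0)) θ := fun θ _ => by
      convert! ((hasDerivAt_id θ).const_mul (2 * A)).sub ((hasDerivAt_id θ).pow 2) using 1
      simp
      ring
    rw [intervalIntegral.integral_eq_sub_of_hasDerivAt hderiv
      (Continuous.intervalIntegrable (by fun_prop) _ _), fejer_zero]
    ring
  · have hderiv : ∀ θ ∈ uIcc 0 A, HasDerivAt
        (fun θ : ℝ => 2 * (A - θ) * sin (θ * y) / y - 2 * cos (θ * y) / y ^ 2)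
        (2 * (A - θ) * cos (θ * y)) θ := fun θ _ => by
      have hmul := (hasDerivAt_id θ).mul_const y
      convert! (((((hasDerivAt_id θ).const_sub A).const_mul 2).mul hmul.sin).div_const y).sub
        ((hmul.cos.const_mul 2).div_const (y ^ 2)) using 1
      simp
      field_simp
      ring
    rw [intervalIntegral.integral_eq_sub_of_hasDerivAt hderiv
      (Continuous.intervalIntegrable (by fun_prop) _ _),
      eq_div_of_mul_eq (pow_ne_zero 2 hy) ((mul_comm _ _).trans (sq_mul_fejer A y))]
    simp
    ring

lemma integrable_mul_exp_mul_I {q : ℝ → ℂ} (hq : Integrable q) (y : ℝ) :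
    Integrable fun θ : ℝ => q θ * Complex.exp (θ * y * Complex.I) :=
  hq.norm.mono' (hq.aestronglyMeasurable.mul (Continuous.aestronglyMeasurable (by fun_prop)))
    (ae_of_all _ fun _ => (norm_mul_exp_mul_I _ _ _).le)

lemma symbolKernel_of_even {f : ℝ → ℝ} (hf : Integrable f) (heven : ∀ θ, f (-θ) = f θ) (y : ℝ) :
    symbolKernel (fun θ => (f θ : ℂ)) y
      = ((∫ θ in Ioi (0 : ℝ), 2 * f θ * cos (θ * y) : ℝ) : ℂ) := by
  have h_int : Integrable fun θ : ℝ => (f θ : ℂ) * Complex.exp (θ * y * Complex.I) :=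
    integrable_mul_exp_mul_I hf.ofReal y
  have hfold := integral_comp_neg_Ioi (0 : ℝ)
    fun θ : ℝ => (f θ : ℂ) * Complex.exp (θ * y * Complex.I)
  rw [neg_zero] at hfold
  rw [symbolKernel, ← integral_add_compl (measurableSet_Ioi (a := (0 : ℝ))) h_int, compl_Ioi,
    ← hfold, ← integral_add h_int.integrableOn h_int.comp_neg.integrableOn,
    ← integral_complex_ofReal]
  congr 1 with θ
  rw [heven]
  push_cast
  rw [Complex.cos]
  ring_nf

lemma symbolKernel_tri {A : ℝ} (hA : 0 ≤ A) (y : ℝ) :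
    symbolKernel (fun θ => (tri A θ : ℂ)) y = fejer A y := by
  rw [symbolKernel_of_even (integrable_tri A) (tri_neg A), ← integral_two_mul_sub_mul_cos,
    intervalIntegral.integral_of_le hA,
    setIntegral_eq_of_subset_of_forall_sdiff_eq_zero measurableSet_Ioi Ioc_subset_Ioi_self]
  · congr 1
    refine setIntegral_congr_fun measurableSet_Ioc fun θ hθ => ?_
    simp only [tri, abs_of_pos hθ.1, max_eq_left (sub_nonneg.2 hθ.2)]
  · rintro θ ⟨hpos, hout⟩
    have hle : A ≤ |θ| := by
      rw [abs_of_pos hpos]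
      exact not_lt.1 fun hlt => hout ⟨hpos, hlt.le⟩
    rw [tri_of_le hle, mul_zero, zero_mul]

lemma symbolKernel_ofReal (g : ℝ → ℝ) (t : ℝ) :
    symbolKernel (fun θ => (g θ : ℂ)) t = densChar g t := by
  simp only [symbolKernel, densChar, mul_comm]

lemma densChar_fejer {A : ℝ} (hA : 0 ≤ A) (t : ℝ) :
    densChar (fejer A) t = ((2 * π * tri A t : ℝ) : ℂ) := by
  have htri : densChar (tri A) = fun y => (fejer A y : ℂ) :=
    funext fun y => (symbolKernel_ofReal _ y).symm.trans (symbolKernel_tri hA y)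
  have hinv := ae_integral_exp_mul_densChar (integrable_tri A)
    (htri ▸ (integrable_fejer A).ofReal)
  have hreflect : ∀ u : ℝ, ∫ v : ℝ, Complex.exp (-(v * u * Complex.I)) * densChar (tri A) v
      = densChar (fejer A) u := fun u => by
    rw [htri, ← integral_neg_eq_self, densChar]
    congr 1 with v
    rw [← fejer_neg]
    push_cast
    ring_nf
  simp_rw [hreflect] at hinv
  have htri_cont := continuous_tri A
  exact congrFun ((Continuous.ae_eq_iff_eq volume (continuous_densChar (integrable_fejer A))
    (by fun_prop)).1 hinv) t

lemma symbolKernel_tri_shift {A : ℝ} (hA : 0 ≤ A) (s y : ℝ) :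
    symbolKernel (fun θ => (tri A (θ - s) : ℂ)) y
      = Complex.exp (s * y * Complex.I) * fejer A y := by
  rw [← symbolKernel_tri hA, symbolKernel, symbolKernel, ← integral_const_mul,
    ← integral_sub_right_eq_self (fun θ : ℝ => Complex.exp (s * y * Complex.I) *
      ((tri A θ : ℂ) * Complex.exp (θ * y * Complex.I))) s]
  congr 1 with θ
  rw [mul_left_comm, ← Complex.exp_add]
  congr 2
  push_cast
  ring

/-! ### Arithmeticity and the characteristic function -/

section ConcOn

variable {F : Measure ℝ} [IsProbabilityMeasure F] {d θ : ℝ}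

lemma measurableSet_exists_int_mul (d : ℝ) : MeasurableSet {x : ℝ | ∃ k : ℤ, x = k * d} := by
  have hrange : {x : ℝ | ∃ k : ℤ, x = k * d} = range fun k : ℤ => k * d := by
    ext x
    simp [eq_comm]
  rw [hrange]
  exact (countable_range _).measurableSet

lemma concOn_iff_ae : ConcOn F d ↔ ∀ᵐ y ∂F, ∃ k : ℤ, y = k * d :=
  (mem_ae_iff_prob_eq_one (measurableSet_exists_int_mul d)).symm

lemma concOn_of_charFun_eq_one (hθ : θ ≠ 0) (h : charFun F θ = 1) : ConcOn F (2 * π / |θ|) := by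
  have hzero : ∫ y, (1 - cos (θ * y)) ∂F = 0 := by simp [← re_one_sub_charFun, h]
  have h_int : Integrable (fun y => 1 - cos (θ * y)) F :=
    (integrable_const 1).sub (Integrable.of_bound (by fun_prop) 1 (ae_of_all _ fun _ =>
      abs_cos_le_one _))
  rw [integral_eq_zero_iff_of_nonneg (fun y => sub_nonneg.2 (cos_le_one _)) h_int] at hzero
  refine concOn_iff_ae.2 (hzero.mono fun y hy => ?_)
  have hcos : cos (|θ| * y) = 1 := by
    rw [← cos_abs, abs_mul, abs_abs, ← abs_mul, cos_abs]
    exact (sub_eq_zero.1 hy).symm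
  obtain ⟨k, hk⟩ := (cos_eq_one_iff _).1 hcos
  refine ⟨k, ?_⟩
  rw [← mul_div_assoc, hk, mul_div_cancel_left₀ _ (abs_ne_zero.2 hθ)]

lemma ConcOn.charFun_eq_one (hd : d ≠ 0) (h : ConcOn F d) : charFun F (2 * π / d) = 1 := by
  have hexp : ∀ᵐ y : ℝ ∂F, Complex.exp (((2 * π / d : ℝ) : ℂ) * y * Complex.I) = 1 := by
    filter_upwards [concOn_iff_ae.1 h] with y ⟨k, hk⟩
    rw [← Complex.exp_int_mul_two_pi_mul_I k, hk]
    congr 1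
    have : (d : ℂ) ≠ 0 := Complex.ofReal_ne_zero.2 hd
    push_cast
    field_simp
  rw [charFun_apply_real, integral_congr_ae hexp]
  simp

lemma ConcOn.ae_renewal (hd : 0 < d) (h : ConcOn F d) :
    ∀ᵐ y ∂(renewal F), ∃ k : ℤ, y = k * d := by
  refine Measure.ae_sum_iff.2 fun n => concOn_iff_ae.1 ?_
  have hconc := concOn_of_charFun_eq_one (F := convPow F n) (θ := 2 * π / d) (by positivity)
    (by rw [charFun_convPow, h.charFun_eq_one hd.ne', one_pow])
  rwa [abs_of_pos (by positivity), div_div_cancel₀ (by positivity)] at hconc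

lemma charFun_ne_one_of_not_arith (h : ¬ Arith F) (hθ : 0 < |θ|) : charFun F θ ≠ 1 := fun hone =>
  h ⟨_, by positivity, concOn_of_charFun_eq_one (abs_pos.1 hθ) hone⟩

lemma charFun_ne_one_of_span {h : ℝ} (hh : 0 < h) (hs : ∀ d > 0, ConcOn F d → d ≤ h)
    (hθ : 0 < |θ|) (hlt : |θ| < 2 * π / h) : charFun F θ ≠ 1 := fun hone => by
  have hle := hs _ (by positivity) (concOn_of_charFun_eq_one (abs_pos.1 hθ) hone)
  exact (lt_div_comm₀ hθ hh).1 hlt |>.not_ge hle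

end ConcOn

/-! ### Symbols -/

section Symbol

variable {F : Measure ℝ} {α : ℝ} {C : ℂ} {A B h : ℝ}

lemma isSymbol_tri_shift {s : ℝ} (hB : 0 < B) (hAB : |s| + A < B)
    (hne : ∀ θ : ℝ, 0 < |θ| → |θ| ≤ B → charFun F θ ≠ 1) :
    IsSymbol F fun θ => (tri A (θ - s) : ℂ) where
  cont := by
    have := continuous_tri A
    fun_prop
  exists_supp := by
    refine ⟨|s| + A, B, hAB, hB, fun θ hθ => ?_, hne⟩
    rw [tri_of_le (by linarith [abs_sub_abs_le_abs_sub θ s]), Complex.ofReal_zero]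

lemma isSymbol_tri (hB : 0 < B) (hAB : A < B)
    (hne : ∀ θ : ℝ, 0 < |θ| → |θ| ≤ B → charFun F θ ≠ 1) : IsSymbol F fun θ => (tri A θ : ℂ) := by
  simpa using isSymbol_tri_shift (s := 0) hB (by simpa using hAB) hne

variable [IsProbabilityMeasure F]

lemma IsSymbol.tendsto_integral_renewal {q : ℝ → ℂ} (hF : CharAsymp F α C) (hq : IsSymbol F q)
    {L : ℝ≥0} (hL : LipschitzWith L q)
    (hi : ∀ x, Integrable (fun y => symbolKernel q (y - x)) (renewal F)) :
    Tendsto (fun x : ℝ => ((x * rtail F x : ℝ) : ℂ) * ∫ y, symbolKernel q (y - x) ∂(renewal F))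
      atTop (𝓝 (q 0 * limConst α C)) :=
  (hF.tendsto_integral_symbol_mul_resolvent hq hL).congr fun x => by
    rw [hq.integral_renewal hF (hi x)]

lemma CharAsymp.integrable_fejer_renewal (hF : CharAsymp F α C) (hA : 0 ≤ A) (hAB : A < B)
    (hne : ∀ θ : ℝ, 0 < |θ| → |θ| ≤ B → charFun F θ ≠ 1) (x : ℝ) :
    Integrable (fun y => fejer A (y - x)) (renewal F) :=
  (isSymbol_tri (hA.trans_lt hAB) hAB hne).integrable_renewal_of_nonneg hF (fejer_nonneg A)
    (symbolKernel_tri hA) x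

/-- The symbol whose kernel, restricted to the lattice `hℤ`, is supported at the origin. -/
def latSymbol (h θ : ℝ) : ℝ := h / π * (tri (3 / 2 * (π / h)) θ - tri (1 / 2 * (π / h)) θ)

/-- The kernel with symbol `latSymbol h`. -/
def latKernel (h y : ℝ) : ℝ := h / π * (fejer (3 / 2 * (π / h)) y - fejer (1 / 2 * (π / h)) y)

lemma exists_lipschitzWith_latSymbol (h : ℝ) : ∃ L, LipschitzWith L fun θ => (latSymbol h θ : ℂ) :=
  ⟨_, Complex.isometry_ofReal.lipschitz.comp ((lipschitzWith_smul (h / π)).comp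
    ((lipschitzWith_tri _).sub (lipschitzWith_tri _)))⟩

lemma latSymbol_zero (hh : 0 < h) : latSymbol h 0 = 1 := by
  rw [latSymbol, tri_zero (by positivity), tri_zero (by positivity)]
  field_simp
  norm_num

lemma symbolKernel_latSymbol (hh : 0 < h) (y : ℝ) :
    symbolKernel (fun θ => (latSymbol h θ : ℂ)) y = latKernel h y := by
  have h_int (A : ℝ) : Integrable fun θ : ℝ => (tri A θ : ℂ) * Complex.exp (θ * y * Complex.I) :=
    integrable_mul_exp_mul_I (integrable_tri A).ofReal y
  rw [latKernel, Complex.ofReal_mul, Complex.ofReal_sub, ← symbolKernel_tri (by positivity),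
    ← symbolKernel_tri (by positivity)]
  simp only [symbolKernel]
  rw [← integral_sub (h_int _) (h_int _), ← integral_const_mul]
  congr 1 with θ
  rw [latSymbol]
  push_cast
  ring

lemma latKernel_zero (hh : 0 < h) : latKernel h 0 = 2 * π / h := by
  rw [latKernel, fejer_zero, fejer_zero]
  field_simp
  norm_num

/- On `hℤ` the two cosines `cos (3π y / 2h)` and `cos (π y / 2h)` agree. -/
lemma latKernel_int_mul (hh : 0 < h) {k : ℤ} (hk : k ≠ 0) : latKernel h (k * h) = 0 := by
  have hkh : ((k : ℝ) * h) ^ 2 ≠ 0 := by positivity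
  have hcos : cos (3 / 2 * (π / h) * (k * h)) = cos (1 / 2 * (π / h) * (k * h)) := by
    rw [← cos_int_mul_two_pi_sub _ k]
    congr 1
    field_simp
    ring
  have hfejer : fejer (3 / 2 * (π / h)) (k * h) = fejer (1 / 2 * (π / h)) (k * h) :=
    mul_left_cancel₀ hkh (by rw [sq_mul_fejer, sq_mul_fejer, hcos])
  rw [latKernel, hfejer, sub_self, mul_zero]

lemma isSymbol_latSymbol (hh : 0 < h) (hs : ∀ d > 0, ConcOn F d → d ≤ h) :
    IsSymbol F fun θ => (latSymbol h θ : ℂ) where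
  cont := (exists_lipschitzWith_latSymbol h).choose_spec.continuous
  exists_supp := by
    have hpos : 0 < π / h := by positivity
    refine ⟨3 / 2 * (π / h), 7 / 4 * (π / h), by linarith, by linarith, fun θ hθ => ?_,
      fun θ hθ₀ hθ => charFun_ne_one_of_span hh hs hθ₀ ?_⟩
    · rw [latSymbol, tri_of_le hθ.le, tri_of_le (by linarith), sub_self, mul_zero,
        Complex.ofReal_zero]
    · rw [mul_div_assoc]
      linarith

lemma latKernel_sub_ae_eq (hh : 0 < h) (hc : ConcOn F h) (m : ℤ) :
    (fun y => latKernel h (y - m * h)) =ᵐ[renewal F]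
      ({(m * h : ℝ)} : Set ℝ).indicator fun _ => 2 * π / h := by
  filter_upwards [hc.ae_renewal hh] with y ⟨k, hk⟩
  rcases eq_or_ne k m with rfl | hkm
  · simp [hk, latKernel_zero hh]
  · have hne : y ≠ m * h := fun heq =>
      hkm (Int.cast_injective (mul_right_cancel₀ hh.ne' (hk.symm.trans heq)))
    rw [indicator_of_notMem (by simpa using hne), hk, ← sub_mul, ← Int.cast_sub,
      latKernel_int_mul hh (sub_ne_zero.2 hkm)]

end Symbol

/-! ### The arithmetic case -/

section Arithmetic

variable {F : Measure ℝ} [IsProbabilityMeasure F] {α h : ℝ} {C : ℂ}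

lemma tendsto_div_add_atTop (h : ℝ) : Tendsto (fun x : ℝ => x / (x + h)) atTop (𝓝 1) := by
  have hlim : Tendsto (fun x : ℝ => 1 - h / (x + h)) atTop (𝓝 1) := by
    simpa using (tendsto_const_nhds.div_atTop (tendsto_atTop_add_const_right atTop h
      tendsto_id)).const_sub (1 : ℝ)
  refine hlim.congr' ?_
  filter_upwards [eventually_gt_atTop (-h)] with x hx
  rw [one_sub_div (by linarith), add_sub_cancel_right]

lemma RegTail.tendsto_mul_div_mul {G : ℝ → ℝ} (hG : RegTail G α) (hh : 0 ≤ h) {y : ℝ → ℝ}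
    (hxy : ∀ x, x ≤ y x) (hyx : ∀ x, y x ≤ x + h) :
    Tendsto (fun x => x * G x / (y x * G (y x))) atTop (𝓝 1) := by
  have hupper : Tendsto (fun x => G x / G (x + h)) atTop (𝓝 1) := by
    simpa using (hG.tendsto_add_ratio hh).inv₀ one_ne_zero
  refine tendsto_of_tendsto_of_tendsto_of_le_of_le' (tendsto_div_add_atTop h) hupper ?_ ?_
  all_goals
    filter_upwards [eventually_gt_atTop 0] with x hx
    have hy : 0 < y x := hx.trans_le (hxy x)
    have hGx := hG.pos x
    have hGy := hG.pos (y x)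
    have hGh := hG.pos (x + h)
    rw [mul_div_mul_comm]
  · calc x / (x + h) ≤ x / y x := div_le_div_of_nonneg_left hx.le hy (hyx x)
      _ ≤ x / y x * (G x / G (y x)) :=
        le_mul_of_one_le_right (by positivity) ((one_le_div hGy).2 (hG.anti (hxy x)))
  · calc x / y x * (G x / G (y x)) ≤ G x / G (y x) :=
        mul_le_of_le_one_left (by positivity) ((div_le_one hy).2 (hxy x))
      _ ≤ G x / G (x + h) := div_le_div_of_nonneg_left hGx.le hGh (hG.anti (hyx x))

lemma CharAsymp.integrable_symbolKernel_latSymbol (hF : CharAsymp F α C) (hh : 0 < h)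
    (hs : ∀ d > 0, ConcOn F d → d ≤ h) (x : ℝ) :
    Integrable (fun y => symbolKernel (fun θ => (latSymbol h θ : ℂ)) (y - x)) (renewal F) := by
  have hpos : 0 < π / h := by positivity
  have hne : ∀ θ : ℝ, 0 < |θ| → |θ| ≤ 7 / 4 * (π / h) → charFun F θ ≠ 1 := fun θ hθ₀ hθ =>
    charFun_ne_one_of_span hh hs hθ₀ (by rw [mul_div_assoc]; linarith)
  simp_rw [symbolKernel_latSymbol hh]
  exact (((hF.integrable_fejer_renewal (by linarith) (by linarith) hne x).sub
    (hF.integrable_fejer_renewal (by linarith) (by linarith) hne x)).const_mul _).ofReal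

lemma CharAsymp.tendsto_renewal_singleton (hF : CharAsymp F α C) (hh : 0 < h) (hc : ConcOn F h)
    (hs : ∀ d > 0, ConcOn F d → d ≤ h) {c : ℝ} (hlim : limConst α C = ((2 * π * c : ℝ) : ℂ))
    {m : ℝ → ℤ} (hm : Tendsto (fun x => (m x : ℝ) * h) atTop atTop) :
    Tendsto (fun x => (m x : ℝ) * h * rtail F (m x * h) * (renewal F).real {(m x : ℝ) * h}) atTop
      (𝓝 (h * c)) := by
  obtain ⟨L, hL⟩ := exists_lipschitzWith_latSymbol h
  have hkernel := ((isSymbol_latSymbol hh hs).tendsto_integral_renewal hF hL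
    (hF.integrable_symbolKernel_latSymbol hh hs)).comp hm
  rw [latSymbol_zero hh, hlim, Complex.ofReal_one, one_mul] at hkernel
  have hre := ((Complex.continuous_re.tendsto _).comp hkernel).const_mul (h / (2 * π))
  rw [Complex.ofReal_re, show h / (2 * π) * (2 * π * c) = h * c by field_simp] at hre
  refine hre.congr fun x => ?_
  simp only [Function.comp_apply, symbolKernel_latSymbol hh]
  rw [integral_complex_ofReal, ← Complex.ofReal_mul, Complex.ofReal_re,
    integral_congr_ae (latKernel_sub_ae_eq hh hc (m x)),
    integral_indicator (measurableSet_singleton _), setIntegral_const, smul_eq_mul]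
  field_simp

lemma ConcOn.renewal_Ioc (hc : ConcOn F h) (hh : 0 < h) (x : ℝ) :
    renewal F (Ioc x (x + h)) = renewal F {((⌊x / h⌋ + 1 : ℤ) : ℝ) * h} := by
  refine measure_congr ?_
  filter_upwards [hc.ae_renewal hh] with y ⟨k, hk⟩
  have hlt : x < k * h ↔ ⌊x / h⌋ < k := by rw [← div_lt_iff₀ hh, Int.floor_lt]
  have hle : k * h ≤ x + h ↔ k - 1 ≤ ⌊x / h⌋ := by
    rw [Int.le_floor, le_div_iff₀ hh, Int.cast_sub, Int.cast_one, sub_one_mul,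
      sub_le_iff_le_add]
  refine propext (?_ : y ∈ Ioc x (x + h) ↔ y ∈ ({((⌊x / h⌋ + 1 : ℤ) : ℝ) * h} : Set ℝ))
  rw [hk, mem_singleton_iff, mul_left_inj' hh.ne', Int.cast_inj, mem_Ioc, hlt, hle]
  omega

lemma CharAsymp.tendsto_renewal_Ioc_of_span (hF : CharAsymp F α C) (hh : 0 < h)
    (hc : ConcOn F h) (hs : ∀ d > 0, ConcOn F d → d ≤ h) {c : ℝ}
    (hlim : limConst α C = ((2 * π * c : ℝ) : ℂ)) :
    Tendsto (fun x : ℝ => x * rtail F x * (renewal F).real (Ioc x (x + h))) atTop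
      (𝓝 (h * c)) := by
  have hlow (x : ℝ) : x ≤ ((⌊x / h⌋ + 1 : ℤ) : ℝ) * h := by
    rw [← div_le_iff₀ hh]
    exact_mod_cast (Int.lt_floor_add_one (x / h)).le
  have hupp (x : ℝ) : ((⌊x / h⌋ + 1 : ℤ) : ℝ) * h ≤ x + h := by
    have hfloor := (le_div_iff₀ hh).1 (Int.floor_le (x / h))
    push_cast
    linarith
  have hprod := (hF.tail.tendsto_mul_div_mul hh.le hlow hupp).mul
    (hF.tendsto_renewal_singleton hh hc hs hlim (tendsto_atTop_mono hlow tendsto_id))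
  rw [one_mul] at hprod
  refine hprod.congr' ?_
  filter_upwards [eventually_gt_atTop 0] with x hx
  rw [measureReal_def, measureReal_def, hc.renewal_Ioc hh, ← mul_assoc, div_mul_cancel₀]
  exact mul_ne_zero (hx.trans_le (hlow x)).ne' (hF.tail.pos _).ne'

end Arithmetic

/-! ### Weak convergence of finite measures -/

section WeakConvergence

variable {μ : ℕ → FiniteMeasure ℝ} {ν : FiniteMeasure ℝ}

lemma charFun_nnreal_smul (r : ℝ≥0) (μ : Measure ℝ) (t : ℝ) :
    charFun (r • μ) t = r * charFun μ t := by
  rw [charFun_apply_real, charFun_apply_real, integral_smul_nnreal_measure, NNReal.smul_def,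
    Complex.real_smul]

/- Lévy's continuity theorem, applied to the normalized measures. -/
lemma tendsto_finiteMeasure_of_tendsto_charFun
    (h : ∀ t, Tendsto (fun n => charFun (μ n : Measure ℝ) t) atTop
      (𝓝 (charFun (ν : Measure ℝ) t))) :
    Tendsto μ atTop (𝓝 ν) := by
  have hmass : Tendsto (fun n => (μ n).mass) atTop (𝓝 ν.mass) := by
    have hzero := (Complex.continuous_re.tendsto _).comp (h 0)
    simp only [charFun_zero, Complex.ofReal_re, Function.comp_def] at hzero
    exact NNReal.tendsto_coe.1 hzero
  rcases eq_or_ne ν 0 with rfl | hν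
  · exact FiniteMeasure.tendsto_zero_of_tendsto_zero_mass (by simpa using hmass)
  have hν' := ν.mass_nonzero_iff.2 hν
  refine (FiniteMeasure.tendsto_normalize_iff_tendsto hν).1
    ⟨ProbabilityMeasure.tendsto_iff_tendsto_charFun.2 fun t => ?_, hmass⟩
  have hinv : Tendsto (fun n => (((μ n).mass⁻¹ : ℝ≥0) : ℂ)) atTop (𝓝 ((ν.mass⁻¹ : ℝ≥0) : ℂ)) :=
    ((Complex.continuous_ofReal.comp NNReal.continuous_coe).tendsto _).comp (hmass.inv₀ hν')
  have hmul := hinv.mul (h t)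
  rw [← charFun_nnreal_smul, ← ν.toMeasure_normalize_eq_of_nonzero hν] at hmul
  refine hmul.congr' ?_
  filter_upwards [hmass.eventually_ne hν'] with n hn
  rw [← charFun_nnreal_smul,
    ← (μ n).toMeasure_normalize_eq_of_nonzero ((μ n).mass_nonzero_iff.1 hn)]

end WeakConvergence

section Density

variable {Ω : Type*} [MeasurableSpace Ω]

lemma tendsto_finiteMeasure_apply [TopologicalSpace Ω] [OpensMeasurableSpace Ω]
    [HasOuterApproxClosed Ω] {ι : Type*} {L : Filter ι} {μ : ι → FiniteMeasure Ω}
    {ν : FiniteMeasure Ω} (h : Tendsto μ L (𝓝 ν)) {E : Set Ω}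
    (hE : (ν : Measure Ω) (frontier E) = 0) : Tendsto (fun i => μ i E) L (𝓝 (ν E)) := by
  rcases eq_or_ne ν 0 with rfl | hν
  · have hmass := h.mass
    rw [FiniteMeasure.zero_mass] at hmass
    exact tendsto_of_tendsto_of_tendsto_of_le_of_le tendsto_const_nhds (by simpa using hmass)
      (fun _ => zero_le) fun i => (μ i).apply_le_mass E
  have : Nonempty Ω := by
    by_contra hΩ
    rw [not_nonempty_iff] at hΩ
    exact hν (FiniteMeasure.toMeasure_injective (Measure.eq_zero_of_isEmpty _))
  obtain ⟨hnormalize, hmass⟩ := (FiniteMeasure.tendsto_normalize_iff_tendsto hν).2 h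
  simp_rw [FiniteMeasure.self_eq_mass_mul_normalize]
  refine hmass.mul (ProbabilityMeasure.tendsto_measure_of_null_frontier_of_tendsto hnormalize ?_)
  rw [ν.normalize_eq_of_nonzero hν, (ν.null_iff_toMeasure_null _).2 hE, mul_zero]

/-- The finite measure with the nonnegative integrable density `w` with respect to `μ`; negative
values of `w` are replaced by `0`. -/
def densityMeasure (μ : Measure Ω) (w : Ω → ℝ) (hw : Integrable w μ) : FiniteMeasure Ω :=
  ⟨μ.withDensity fun y => ENNReal.ofReal (w y), isFiniteMeasure_withDensity_ofReal hw.2⟩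

lemma integral_densityMeasure {E : Type*} [NormedAddCommGroup E] [NormedSpace ℝ E] {μ : Measure Ω}
    {w : Ω → ℝ} (hw : Integrable w μ) (hm : Measurable w) (hw₀ : ∀ y, 0 ≤ w y) (f : Ω → E) :
    ∫ y, f y ∂(densityMeasure μ w hw : Measure Ω) = ∫ y, w y • f y ∂μ := by
  refine (integral_withDensity_eq_integral_smul hm.real_toNNReal f).trans ?_
  simp only [NNReal.smul_def, Real.coe_toNNReal _ (hw₀ _)]

lemma densityMeasure_apply_of_eq_one {μ : Measure Ω} {w : Ω → ℝ} (hw : Integrable w μ) {E : Set Ω}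
    (hE : MeasurableSet E) (hone : ∀ y ∈ E, w y = 1) :
    ((densityMeasure μ w hw E : ℝ≥0) : ℝ) = μ.real E := by
  have happly : (densityMeasure μ w hw : Measure Ω) E = μ E := by
    refine (withDensity_apply _ hE).trans ?_
    rw [setLIntegral_congr_fun hE (g := fun _ => 1) fun y hy => by simp [hone y hy],
      setLIntegral_one]
  exact congrArg ENNReal.toReal happly

variable [TopologicalSpace Ω] [OpensMeasurableSpace Ω]

lemma integrable_mul_boundedContinuous {μ : Measure Ω} {w : Ω → ℝ} (hw : Integrable w μ)
    (k : BoundedContinuousFunction Ω ℝ) : Integrable (fun y => w y * k y) μ :=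
  hw.mul_bdd k.continuous.aestronglyMeasurable (ae_of_all _ k.norm_coe_le_norm)

lemma tendsto_densityMeasure_mul {ι : Type*} {L : Filter ι} {μ : ι → Measure Ω} {ν : Measure Ω}
    {w : Ω → ℝ} (hm : Measurable w) (hw₀ : ∀ y, 0 ≤ w y) (hμ : ∀ i, Integrable w (μ i))
    (hν : Integrable w ν)
    (h : Tendsto (fun i => densityMeasure (μ i) w (hμ i)) L (𝓝 (densityMeasure ν w hν)))
    (k : BoundedContinuousFunction Ω ℝ) (hk₀ : ∀ y, 0 ≤ k y) :
    Tendsto (fun i => densityMeasure (μ i) _ (integrable_mul_boundedContinuous (hμ i) k)) L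
      (𝓝 (densityMeasure ν _ (integrable_mul_boundedContinuous hν k))) := by
  refine FiniteMeasure.tendsto_iff_forall_integral_tendsto.2 fun f => ?_
  have hlim := FiniteMeasure.tendsto_iff_forall_integral_tendsto.1 h (k * f)
  have htransfer {ρ : Measure Ω} (hρ : Integrable w ρ) :
      ∫ y, (k * f) y ∂(densityMeasure ρ w hρ : Measure Ω) = ∫ y, f y
        ∂(densityMeasure ρ _ (integrable_mul_boundedContinuous hρ k) : Measure Ω) := by
    have hwk : Measurable fun y => w y * k y := hm.mul k.continuous.measurable
    rw [integral_densityMeasure _ hm hw₀,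
      integral_densityMeasure _ hwk fun y => mul_nonneg (hw₀ y) (hk₀ y)]
    simp only [smul_eq_mul, mul_assoc, BoundedContinuousFunction.coe_mul, Pi.mul_apply]
  simpa only [htransfer] using hlim

end Density

lemma exists_boundedContinuous_mul_eq_one {X : Type*} [TopologicalSpace X] {w : X → ℝ}
    (hw : Continuous w) {K : Set X} (hK : IsCompact K) (hpos : ∀ y ∈ K, 0 < w y) :
    ∃ k : BoundedContinuousFunction X ℝ, (∀ y, 0 ≤ k y) ∧ ∀ y ∈ K, w y * k y = 1 := by
  obtain ⟨δ, hδ, hmin⟩ := hK.exists_forall_le' hw.continuousOn hpos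
  have hmax : ∀ y, 0 < max (w y) δ := fun y => lt_max_of_lt_right hδ
  refine ⟨.ofNormedAddCommGroup (fun y => (max (w y) δ)⁻¹)
    ((hw.max continuous_const).inv₀ fun y => (hmax y).ne') δ⁻¹ fun y => ?_,
    fun y => inv_nonneg.2 (hmax y).le, fun y hy => ?_⟩
  · rw [norm_inv, Real.norm_of_nonneg (hmax y).le]
    exact inv_anti₀ hδ (le_max_right _ _)
  · change w y * (max (w y) δ)⁻¹ = 1
    rw [max_eq_left (hmin y hy), mul_inv_cancel₀ (hpos y hy).ne']

lemma tendsto_measureReal_of_tendsto_weighted {μ : ℕ → Measure ℝ} {ν : Measure ℝ} {w : ℝ → ℝ}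
    (hw : Continuous w) (hw₀ : ∀ y, 0 ≤ w y) (hμ : ∀ n, Integrable w (μ n)) (hν : Integrable w ν)
    (hlim : ∀ t : ℝ, Tendsto (fun n => ∫ y : ℝ, Complex.exp (t * y * Complex.I) * w y ∂(μ n)) atTop
      (𝓝 (∫ y : ℝ, Complex.exp (t * y * Complex.I) * w y ∂ν)))
    {E K : Set ℝ} (hE : MeasurableSet E) (hfrontier : ν (frontier E) = 0) (hK : IsCompact K)
    (hEK : E ⊆ K) (hpos : ∀ y ∈ K, 0 < w y) :
    Tendsto (fun n => (μ n).real E) atTop (𝓝 (ν.real E)) := by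
  have hchar {ρ : Measure ℝ} (hρ : Integrable w ρ) (t : ℝ) :
      charFun (densityMeasure ρ w hρ : Measure ℝ) t
        = ∫ y : ℝ, Complex.exp (t * y * Complex.I) * w y ∂ρ := by
    rw [charFun_apply_real, integral_densityMeasure hρ hw.measurable hw₀]
    simp only [Complex.real_smul, mul_comm]
  have hweak : Tendsto (fun n => densityMeasure (μ n) w (hμ n)) atTop
      (𝓝 (densityMeasure ν w hν)) :=
    tendsto_finiteMeasure_of_tendsto_charFun (by simpa only [hchar] using hlim)
  obtain ⟨k, hk₀, hk⟩ := exists_boundedContinuous_mul_eq_one hw hK hpos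
  have happly := tendsto_finiteMeasure_apply (E := E)
    (tendsto_densityMeasure_mul hw.measurable hw₀ hμ hν hweak k hk₀)
    (withDensity_absolutelyContinuous _ _ hfrontier)
  simpa only [densityMeasure_apply_of_eq_one _ hE fun y hy => hk y (hEK hy)] using
    NNReal.tendsto_coe.2 happly

/-! ### The non-arithmetic case -/

section ShiftedRenewal

variable {F : Measure ℝ} {x : ℝ}

/-- The renewal measure seen from `x`, rescaled by `x F̄(x)`. -/
def shiftedRenewal (F : Measure ℝ) (x : ℝ) : Measure ℝ :=
  (x * rtail F x).toNNReal • (renewal F).map fun y => y - x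

lemma coe_toNNReal_mul_rtail (hx : 0 ≤ x) : ((x * rtail F x).toNNReal : ℝ) = x * rtail F x :=
  Real.coe_toNNReal _ (mul_nonneg hx ENNReal.toReal_nonneg)

lemma integral_shiftedRenewal {E : Type*} [NormedAddCommGroup E] [NormedSpace ℝ E] (f : ℝ → E)
    (hx : 0 ≤ x) :
    ∫ y, f y ∂(shiftedRenewal F x) = (x * rtail F x) • ∫ y, f (y - x) ∂(renewal F) := by
  have hembed : MeasurableEmbedding fun y : ℝ => y - x :=
    (MeasurableEquiv.subRight x).measurableEmbedding
  rw [shiftedRenewal, integral_smul_nnreal_measure, hembed.integral_map, NNReal.smul_def,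
    coe_toNNReal_mul_rtail hx]

lemma integrable_shiftedRenewal {f : ℝ → ℝ} (hf : Integrable (fun y => f (y - x)) (renewal F)) :
    Integrable f (shiftedRenewal F x) :=
  ((MeasurableEquiv.subRight x).measurableEmbedding.integrable_map_iff.2 hf).smul_measure_nnreal

lemma shiftedRenewal_real_Ioc (hx : 0 ≤ x) (h : ℝ) :
    (shiftedRenewal F x).real (Ioc 0 h) = x * rtail F x * (renewal F).real (Ioc x (x + h)) := by
  rw [shiftedRenewal, measureReal_nnreal_smul_apply, map_measureReal_apply (by fun_prop)
    measurableSet_Ioc, preimage_sub_const_Ioc, zero_add, add_comm h, coe_toNNReal_mul_rtail hx]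

end ShiftedRenewal

namespace CharAsymp

variable {F : Measure ℝ} [IsProbabilityMeasure F] {α : ℝ} {C : ℂ} {A : ℝ}

lemma integrable_fejer_renewal_of_not_arith (hF : CharAsymp F α C) (ha : ¬ Arith F) (hA : 0 ≤ A)
    (x : ℝ) : Integrable (fun y => fejer A (y - x)) (renewal F) :=
  hF.integrable_fejer_renewal hA (lt_add_one A)
    (fun _ hθ _ => charFun_ne_one_of_not_arith ha hθ) x

lemma integrable_symbolKernel_tri_shift (hF : CharAsymp F α C) (ha : ¬ Arith F) (hA : 0 ≤ A)
    (t x : ℝ) :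
    Integrable (fun y => symbolKernel (fun θ => (tri A (θ - t) : ℂ)) (y - x)) (renewal F) := by
  have hcont := continuous_fejer A
  simp_rw [symbolKernel_tri_shift hA]
  refine (hF.integrable_fejer_renewal_of_not_arith ha hA x).norm.mono'
    (Continuous.aestronglyMeasurable (by fun_prop)) (ae_of_all _ fun y => ?_)
  rw [mul_comm, norm_mul_exp_mul_I, Complex.norm_real]

lemma tendsto_integral_exp_mul_fejer_renewal (hF : CharAsymp F α C) (ha : ¬ Arith F)
    (hA : 0 ≤ A) (t : ℝ) :
    Tendsto (fun x : ℝ => ((x * rtail F x : ℝ) : ℂ) *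
      ∫ y : ℝ, Complex.exp (t * (y - x : ℝ) * Complex.I) * fejer A (y - x) ∂(renewal F)) atTop
      (𝓝 (tri A t * limConst α C)) := by
  have hsymbol : IsSymbol F fun θ => (tri A (θ - t) : ℂ) :=
    isSymbol_tri_shift (B := |t| + A + 1) (by positivity) (by linarith)
      fun θ hθ _ => charFun_ne_one_of_not_arith ha hθ
  have hlipschitz : LipschitzWith _ fun θ => (tri A (θ - t) : ℂ) :=
    Complex.isometry_ofReal.lipschitz.comp ((lipschitzWith_tri A).comp
      (LipschitzWith.id.sub (LipschitzWith.const t)))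
  have hlim := hsymbol.tendsto_integral_renewal hF hlipschitz
    (hF.integrable_symbolKernel_tri_shift ha hA t)
  rw [zero_sub, tri_neg] at hlim
  simpa only [symbolKernel_tri_shift hA] using hlim

lemma nonneg_of_limConst_eq (hF : CharAsymp F α C) (ha : ¬ Arith F) {c : ℝ}
    (hlim : limConst α C = ((2 * π * c : ℝ) : ℂ)) : 0 ≤ c := by
  have hre := (Complex.continuous_re.tendsto _).comp
    (hF.tendsto_integral_exp_mul_fejer_renewal ha zero_le_one 0)
  rw [hlim, tri_zero zero_le_one, Complex.ofReal_one, one_mul, Complex.ofReal_re] at hre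
  refine nonneg_of_mul_nonneg_right (ge_of_tendsto hre ?_) two_pi_pos
  filter_upwards [eventually_ge_atTop 0] with x hx
  simp only [Function.comp_apply, Complex.ofReal_zero, zero_mul, Complex.exp_zero, one_mul]
  rw [integral_complex_ofReal, ← Complex.ofReal_mul, Complex.ofReal_re]
  exact mul_nonneg (mul_nonneg hx ENNReal.toReal_nonneg)
    (integral_nonneg fun y => fejer_nonneg _ _)

lemma tendsto_integral_exp_mul_fejer_shiftedRenewal (hF : CharAsymp F α C) (ha : ¬ Arith F)
    (hA : 0 ≤ A) {c : ℝ≥0} (hlim : limConst α C = ((2 * π * c : ℝ) : ℂ)) (t : ℝ) :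
    Tendsto (fun x => ∫ y : ℝ, Complex.exp (t * y * Complex.I) * fejer A y ∂(shiftedRenewal F x))
      atTop (𝓝 (∫ y : ℝ, Complex.exp (t * y * Complex.I) * fejer A y
        ∂(c • (volume : Measure ℝ)))) := by
  have hvalue : ∫ y : ℝ, Complex.exp (t * y * Complex.I) * fejer A y ∂(c • (volume : Measure ℝ))
      = tri A t * limConst α C := by
    rw [integral_smul_nnreal_measure, ← densChar, densChar_fejer hA, hlim, NNReal.smul_def,
      Complex.real_smul]
    push_cast
    ring
  rw [hvalue]
  refine (hF.tendsto_integral_exp_mul_fejer_renewal ha hA t).congr' ?_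
  filter_upwards [eventually_ge_atTop 0] with x hx
  rw [integral_shiftedRenewal _ hx, Complex.real_smul]

lemma tendsto_renewal_Ioc_of_not_arith (hF : CharAsymp F α C) (ha : ¬ Arith F) {h : ℝ}
    (hh : 0 < h) {c : ℝ} (hlim : limConst α C = ((2 * π * c : ℝ) : ℂ)) :
    Tendsto (fun x : ℝ => x * rtail F x * (renewal F).real (Ioc x (x + h))) atTop
      (𝓝 (h * c)) := by
  lift c to ℝ≥0 using hF.nonneg_of_limConst_eq ha hlim
  have hA : 0 < π / h := by positivity
  refine tendsto_of_seq_tendsto fun u hu => ?_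
  have hmeasure := tendsto_measureReal_of_tendsto_weighted (E := Ioc 0 h) (K := Icc 0 h)
    (continuous_fejer (π / h)) (fejer_nonneg _)
    (fun n => integrable_shiftedRenewal
      (hF.integrable_fejer_renewal_of_not_arith ha hA.le (u n)))
    (integrable_fejer _).smul_measure_nnreal
    (fun t => (hF.tendsto_integral_exp_mul_fejer_shiftedRenewal ha hA.le hlim t).comp hu)
    measurableSet_Ioc (by simp [frontier_Ioc hh, (toFinite {0, h}).measure_zero])
    isCompact_Icc Ioc_subset_Icc_self
    fun y hy => fejer_pos hA <| by
      rw [abs_of_nonneg hy.1, show 2 * π / (π / h) = 2 * h by field_simp]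
      linarith [hy.2]
  rw [measureReal_nnreal_smul_apply, Real.volume_real_Ioc_of_le hh.le, sub_zero,
    mul_comm] at hmeasure
  refine hmeasure.congr' ?_
  filter_upwards [hu.eventually_ge_atTop 0] with n hn
  exact shiftedRenewal_real_Ioc hn h

end CharAsymp

/-! ### The strong renewal theorem -/

lemma exists_charAsymp {F : Measure ℝ} [IsProbabilityMeasure F] {α : ℝ} {ℓ : ℝ → ℝ}
    (hα : α ∈ Ioo (1 / 2 : ℝ) 1) (hℓ : RegVary ℓ α) (hRT : RightTail F ℓ) (hTR : TailRatio F) :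
    ∃ C, CharAsymp F α C := by
  have hα₀ : 0 < α := by linarith [hα.1]
  have hG := hRT.regTail hℓ
  obtain ⟨C, hC⟩ := exists_tendsto_one_sub_charFun hα₀ hα.2 hG hTR
  exact ⟨C, hα.1, hα.2, hG, re_pos_of_tendsto_one_sub_charFun hα₀ hG hC, hC,
    exists_norm_charFun_sub_charFun_add_le hα₀ hα.2 hG hTR⟩

lemma CharAsymp.tendsto_renewal_Ioc {F : Measure ℝ} [IsProbabilityMeasure F] {α h : ℝ} {C : ℂ}
    (hF : CharAsymp F α C) (hspan : SpanOK F h) {c : ℝ}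
    (hlim : limConst α C = ((2 * π * c : ℝ) : ℂ)) :
    Tendsto (fun x : ℝ => x * rtail F x * (renewal F).real (Ioc x (x + h))) atTop
      (𝓝 (h * c)) := by
  obtain ⟨hh, ha | ⟨hc, hs⟩⟩ := hspan
  · exact hF.tendsto_renewal_Ioc_of_not_arith ha hh hlim
  · exact hF.tendsto_renewal_Ioc_of_span hh hc hs hlim

end SRT

/-- Theorem 1.2 of the paper: the SRT holds whenever
`α ∈ (1/2,1)` and the two tail conditions hold. -/
theorem srt_alpha_gt_half
    (F : Measure ℝ) [IsProbabilityMeasure F] (α h : ℝ) (ℓ : ℝ → ℝ)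
    (hα : α ∈ Set.Ioo (1/2 : ℝ) 1) (hℓ : RegVary ℓ α)
    (hRT : RightTail F ℓ) (hTR : TailRatio F) (hspan : SpanOK F h)
    (g : ℝ → ℝ) (hg : StableLimit F ℓ g) :
    SRTholds F h α g := by
  obtain ⟨C, hF⟩ := exists_charAsymp hα hℓ hRT hTR
  have hlim := hF.tendsto_renewal_Ioc hspan (hF.limConst_eq hRT hg)
  rwa [← mul_assoc, mul_comm h] at hlim
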